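/- (McMullen) Let Δ be a complete simplicial fan in ℝ^d (d ≥ 1) and let ℓ ∈ A(Δ)_1 be a strictly convex conewise linear function, i.e. ℓ is a convex function on ℝ^d that restricts to a distinct linear function on each d-dimensional cone of Δ. Then for every integer k with 0 ≤ k < d/2, multiplication by ℓ^{d−2k} induces an isomorphism of real vector spaces from Ā(Δ)_k onto Ā(Δ)_{d−k}. -/

import Mathlib

open Classical Polynomial

section ConeDefs

variable {V : Type*} [AddCommGroup V] [Module ℝ V]

/-- The polyhedral cone generated by a finite set of vectors: all nonnegative
linear combinations. -/
def coneHull (S : Finset V) : Set V :=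
  {x | ∃ c : V → ℝ, (∀ w, 0 ≤ c w) ∧ x = ∑ w ∈ S, c w • w}

/-- A polyhedral cone: the set of nonnegative combinations of finitely many
vectors. -/
def IsCone (σ : Set V) : Prop := ∃ S : Finset V, σ = coneHull S

/-- A pointed polyhedral cone: a polyhedral cone containing no line. -/
def IsPointedCone (σ : Set V) : Prop :=
  IsCone σ ∧ ∀ x ∈ σ, -x ∈ σ → x = 0

/-- Faces of a cone: the cone itself and the intersections with supporting
hyperplanes. -/
def IsConeFace (σ τ : Set V) : Prop :=
  τ = σ ∨ ∃ l : V →ₗ[ℝ] ℝ, (∀ y ∈ σ, l y ≤ 0) ∧ τ = {x | x ∈ σ ∧ l x = 0}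

end ConeDefs
section FanDefs

variable {V : Type*} [AddCommGroup V] [Module ℝ V]

/-- A fan: a finite collection of pointed polyhedral cones that is closed under
taking faces and in which the intersection of any two cones is a face of each. -/
def IsFan (Δ : Finset (Set V)) : Prop :=
  (∀ σ ∈ Δ, IsPointedCone σ) ∧
  (∀ σ ∈ Δ, ∀ τ : Set V, IsConeFace σ τ → τ ∈ Δ) ∧
  (∀ σ ∈ Δ, ∀ τ ∈ Δ, IsConeFace σ (σ ∩ τ) ∧ IsConeFace τ (σ ∩ τ))

/-- A complete fan: the union of its cones is the whole space. -/
def IsCompleteFan (Δ : Finset (Set V)) : Prop :=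
  IsFan Δ ∧ (⋃ σ ∈ Δ, σ) = Set.univ

/-- A simplicial fan: every cone is generated by linearly independent vectors. -/
def IsSimplicialFan (Δ : Finset (Set V)) : Prop :=
  IsFan Δ ∧ ∀ σ ∈ Δ, ∃ S : Finset V,
    LinearIndependent ℝ (fun x : (S : Set V) => (x : V)) ∧ σ = coneHull S

end FanDefs
section ConewiseDefs

/-- `A(Δ)_k`: the space of conewise polynomial functions on `Δ` that are
homogeneous of degree `k`, as a subspace of all functions `ℝ^d → ℝ`. -/
def conewisePoly (d : ℕ) (Δ : Finset (Set (Fin d → ℝ))) (k : ℕ) :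
    Submodule ℝ ((Fin d → ℝ) → ℝ) where
  carrier := {f | ∀ σ ∈ Δ, ∃ p : MvPolynomial (Fin d) ℝ,
    p.IsHomogeneous k ∧ ∀ x ∈ σ, f x = MvPolynomial.eval x p}
  add_mem' := by
    intro f g hf hg σ hσ
    obtain ⟨p, hp, hfp⟩ := hf σ hσ
    obtain ⟨q, hq, hgq⟩ := hg σ hσ
    refine ⟨p + q, hp.add hq, fun x hx => ?_⟩
    simp [hfp x hx, hgq x hx]
  zero_mem' := by
    intro σ hσ
    exact ⟨0, MvPolynomial.isHomogeneous_zero _ _ _, fun x hx => by simp⟩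
  smul_mem' := by
    intro c f hf σ hσ
    obtain ⟨p, hp, hfp⟩ := hf σ hσ
    refine ⟨MvPolynomial.C c * p, ?_, fun x hx => ?_⟩
    · simpa using (MvPolynomial.isHomogeneous_C (Fin d) c).mul hp
    · simp [hfp x hx]

/-- `(m·A(Δ))_k`: the degree-`k` part of `m·A(Δ)`, where `m ⊂ A` is the ideal of
the ring of global polynomial functions generated by the linear functions.  It
is spanned by the products of a global linear function with a conewise
polynomial function that is homogeneous of degree `k - 1`. -/
def mConewisePoly (d : ℕ) (Δ : Finset (Set (Fin d → ℝ))) :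
    ℕ → Submodule ℝ ((Fin d → ℝ) → ℝ)
  | 0 => ⊥
  | k + 1 => Submodule.span ℝ
      {h | ∃ (l : (Fin d → ℝ) →ₗ[ℝ] ℝ) (f : (Fin d → ℝ) → ℝ),
        f ∈ conewisePoly d Δ k ∧ h = fun x => l x * f x}

end ConewiseDefs

/-!
Evaluate conewise polynomials at a generic vector `v`: on the maximal cone `s`, a function is
replaced by the value at `v` of its polynomial there. Degree becomes a filtration `F₀ ≤ F₁ ≤ ⋯` of
the functions on the set of maximal cones, and since `A(Δ)` is free over the polynomial ring, the
graded pieces of this filtration are the spaces `Ā(Δ)_k`. Brion's localization formula supplies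
weights `w` with `∑ w f = 0` on `F_j` for `j < d`, and `ℓ` becomes a height function `h` on the
maximal cones, a Morse function whose index at `s` counts the negative coordinates of `v` in `s`.

The theorem then concerns the radicals of the forms `∑_{h s > c} w (h - c)^{d - 2j} f g` on `F_j`,
and, for the induction, of the analogous forms twisted by the product of the coordinates of a
face `τ`. Hard Lefschetz for `τ` follows from the Hodge–Riemann relations for its cofacets, because
`h - c` is a combination, of constant sign, of the coordinates of further rays. Conversely, by hard
Lefschetz for `τ` the signature of the form can change only when the cut level `c` passes a height,
where it changes by a rank-one term. The signatures so obtained are those required by the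
Hodge–Riemann relations for `τ`.
-/

section Signature

open Module LinearMap.BilinForm

variable {E : Type*} [AddCommGroup E] [Module ℝ E]

/-- The bilinear form `B` is positive definite on the subspace `W`. -/
def IsPosDefOn (B : LinearMap.BilinForm ℝ E) (W : Submodule ℝ E) : Prop :=
  ∀ f ∈ W, f ≠ 0 → 0 < B f f

/-- The radical of the restriction of a symmetric form `B` to the subspace `F`, as a subspace of
the ambient space. -/
def radicalOn (B : LinearMap.BilinForm ℝ E) (F : Submodule ℝ E) : Submodule ℝ E :=
  F ⊓ B.orthogonal F

/-- The positive index of inertia of the restriction of `B` to the subspace `F`. The negative index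
is `posIndexOn (-B) F`. -/
noncomputable def posIndexOn (B : LinearMap.BilinForm ℝ E) (F : Submodule ℝ E) : ℕ :=
  sigPos (B.restrict F).toQuadraticMap

variable {B : LinearMap.BilinForm ℝ E} {F W : Submodule ℝ E}

theorem mem_radicalOn {f : E} : f ∈ radicalOn B F ↔ f ∈ F ∧ ∀ g ∈ F, B g f = 0 := Iff.rfl

theorem radicalOn_neg (B : LinearMap.BilinForm ℝ E) (F : Submodule ℝ E) :
    radicalOn (-B) F = radicalOn B F := by
  ext f
  simp [mem_radicalOn]

theorem finrank_map_of_forall_eq_zero {E' : Type*} [AddCommGroup E'] [Module ℝ E']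
    {W : Submodule ℝ E'} (L : E' →ₗ[ℝ] E) (hL : ∀ f ∈ W, L f = 0 → f = 0) :
    finrank ℝ (W.map L) = finrank ℝ W := by
  rw [← LinearMap.range_domRestrict]
  refine LinearMap.finrank_range_of_inj ((injective_iff_map_eq_zero _).2 fun f hf => ?_)
  exact Subtype.ext (hL f f.2 hf)

theorem finrank_inf_ker_add_one [FiniteDimensional ℝ E] {N : Submodule ℝ E} {φ : E →ₗ[ℝ] ℝ} {f : E}
    (hf : f ∈ N) (hφ : φ f ≠ 0) :
    finrank ℝ (N ⊓ LinearMap.ker φ : Submodule ℝ E) + 1 = finrank ℝ N := by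
  have hne : φ.domRestrict N ≠ 0 := fun h => hφ (LinearMap.congr_fun h ⟨f, hf⟩)
  rw [← Module.Dual.finrank_ker_add_one_of_ne_zero hne, LinearMap.ker_domRestrict,
    ← (Submodule.comapSubtypeEquivOfLe (inf_le_left : N ⊓ LinearMap.ker φ ≤ N)).finrank_eq,
    Submodule.comap_inf, Submodule.comap_subtype_self, top_inf_eq]

theorem exists_isPosDefOn_finrank_eq [FiniteDimensional ℝ E] (B : LinearMap.BilinForm ℝ E)
    (F : Submodule ℝ E) : ∃ W ≤ F, finrank ℝ W = posIndexOn B F ∧ IsPosDefOn B W := by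
  obtain ⟨W, hrank, hpos⟩ := exists_finrank_eq_sigPos_and_posDef (B.restrict F).toQuadraticMap
  refine ⟨W.map F.subtype, Submodule.map_subtype_le _ _, ?_, ?_⟩
  · rw [← (W.equivMapOfInjective F.subtype F.injective_subtype).finrank_eq, hrank, posIndexOn]
  · rintro _ ⟨f, hf, rfl⟩ hne
    exact hpos ⟨f, hf⟩ fun h => hne (congrArg (fun g => F.subtype g.1) h)

theorem IsPosDefOn.finrank_le_posIndexOn [FiniteDimensional ℝ E] (h : IsPosDefOn B W)
    (hW : W ≤ F) : finrank ℝ W ≤ posIndexOn B F := by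
  rw [← (Submodule.comapSubtypeEquivOfLe hW).finrank_eq]
  refine le_sigPos_of_posDef _ fun f hne => h f.1 f.2 fun h0 => hne ?_
  exact Subtype.ext (Subtype.ext h0)

theorem posIndexOn_zero [FiniteDimensional ℝ E] (F : Submodule ℝ E) :
    posIndexOn (0 : LinearMap.BilinForm ℝ E) F = 0 := by
  obtain ⟨W, -, hrank, hpos⟩ := exists_isPosDefOn_finrank_eq (0 : LinearMap.BilinForm ℝ E) F
  have hbot : W = ⊥ := (Submodule.eq_bot_iff W).2 fun f hf =>
    by_contra fun hne => (hpos f hf hne).false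
  rw [← hrank, hbot, finrank_bot]

/-- **Sylvester's law of inertia**, relative to a subspace. -/
theorem posIndexOn_add_posIndexOn_neg_add_finrank_radicalOn [FiniteDimensional ℝ E]
    (hB : B.IsSymm) (F : Submodule ℝ E) :
    posIndexOn B F + posIndexOn (-B) F + finrank ℝ (radicalOn B F) = finrank ℝ F := by
  have hradical : (B.restrict F).toQuadraticMap.radical = (radicalOn B F).comap F.subtype := by
    rw [QuadraticMap.radical_eq_ker_associated,
      QuadraticMap.associated_left_inverse ℝ fun f g : F => hB.eq f.1 g.1]
    ext f
    simp [LinearMap.ext_iff, mem_radicalOn, hB.eq f.1]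
  have hneg : posIndexOn (-B) F = sigNeg (B.restrict F).toQuadraticMap := by
    rw [← sigPos_neg, ← LinearMap.BilinMap.toQuadraticMap_neg]
    rfl
  have hle : radicalOn B F ≤ F := inf_le_left
  rw [hneg, ← (Submodule.comapSubtypeEquivOfLe hle).finrank_eq, ← hradical]
  exact QuadraticForm.sigPos_add_sigNeg_add_radical

theorem IsPosDefOn.sup_span_singleton (hB : B.IsSymm) (h : IsPosDefOn B W) {u : E}
    (horth : ∀ w ∈ W, B u w = 0) (hu : 0 < B u u) : IsPosDefOn B (W ⊔ Submodule.span ℝ {u}) := by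
  intro f hf hne
  obtain ⟨w, hw, v, hv, rfl⟩ := Submodule.mem_sup.1 hf
  obtain ⟨a, rfl⟩ := Submodule.mem_span_singleton.1 hv
  have hexpand : B (w + a • u) (w + a • u) = B w w + a ^ 2 * B u u := by
    simp only [map_add, map_smul, LinearMap.add_apply, LinearMap.smul_apply, smul_eq_mul,
      horth w hw, hB.eq w u]
    ring
  rw [hexpand]
  rcases eq_or_ne w 0 with rfl | hw0
  · have ha : a ≠ 0 := by
      rintro rfl
      simp at hne
    simpa using mul_pos (pow_pos (abs_pos.2 ha) 2 |>.trans_eq (sq_abs a)) hu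
  · have := h w hw hw0
    positivity

theorem IsPosDefOn.finrank_add_one_le_posIndexOn [FiniteDimensional ℝ E] (hB : B.IsSymm)
    (h : IsPosDefOn B W) (hW : W ≤ F) {u : E} (huF : u ∈ F) (horth : ∀ w ∈ W, B u w = 0)
    (hu : 0 < B u u) : finrank ℝ W + 1 ≤ posIndexOn B F := by
  have hu0 : u ≠ 0 := by
    rintro rfl
    simp at hu
  have hdisj : Disjoint W (Submodule.span ℝ {u}) :=
    (Submodule.disjoint_span_singleton' hu0).2 fun huW => hu.ne' (horth u huW)
  have hrank := Submodule.finrank_sup_add_finrank_inf_eq W (Submodule.span ℝ {u})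
  rw [hdisj.eq_bot, finrank_bot, finrank_span_singleton hu0, add_zero] at hrank
  rw [← hrank]
  exact (h.sup_span_singleton hB horth hu).finrank_le_posIndexOn
    (sup_le hW ((Submodule.span_singleton_le_iff_mem u F).2 huF))

theorem exists_isPosDefOn_map_finrank_eq {E' : Type*} [AddCommGroup E'] [Module ℝ E']
    [FiniteDimensional ℝ E'] {B' : LinearMap.BilinForm ℝ E'} {F' : Submodule ℝ E'} (L : E' →ₗ[ℝ] E)
    (hL : ∀ f ∈ F', B' f f = B (L f) (L f)) :
    ∃ W ≤ F', finrank ℝ (W.map L) = posIndexOn B' F' ∧ IsPosDefOn B (W.map L) := by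
  obtain ⟨W, hWF, hrank, hpos⟩ := exists_isPosDefOn_finrank_eq B' F'
  refine ⟨W, hWF, ?_, ?_⟩
  · rw [← hrank]
    refine finrank_map_of_forall_eq_zero L fun f hf hLf => by_contra fun hne => ?_
    have := hpos f hf hne
    simp [hL f (hWF hf), hLf] at this
  · rintro _ ⟨f, hf, rfl⟩ hne
    rw [← hL f (hWF hf)]
    exact hpos f hf fun h0 => hne (by rw [h0, map_zero])

/-- Projecting along a radical vector `f₀` does not change the form, so a maximal positive definite
subspace can be moved into any hyperplane not containing `f₀`. -/
theorem exists_isPosDefOn_le_ker [FiniteDimensional ℝ E] (hB : B.IsSymm) {φ : E →ₗ[ℝ] ℝ} {f₀ : E}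
    (hf₀ : f₀ ∈ radicalOn B F) (hφ : φ f₀ ≠ 0) :
    ∃ W ≤ F ⊓ LinearMap.ker φ, finrank ℝ W = posIndexOn B F ∧ IsPosDefOn B W := by
  obtain ⟨hf₀F, horth⟩ := mem_radicalOn.1 hf₀
  let T : E →ₗ[ℝ] E := LinearMap.id - ((φ f₀)⁻¹ • φ).smulRight f₀
  have hT (f : E) : T f = f - ((φ f₀)⁻¹ * φ f) • f₀ := by simp [T]
  have hisom (f : E) (hf : f ∈ F) : B f f = B (T f) (T f) := by
    simp [hT, horth f hf, horth f₀ hf₀F, hB.eq f₀ f]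
  obtain ⟨W, hWF, hrank, hpos⟩ := exists_isPosDefOn_map_finrank_eq T hisom
  refine ⟨W.map T, ?_, hrank, hpos⟩
  rintro _ ⟨f, hf, rfl⟩
  refine ⟨hT f ▸ F.sub_mem (hWF hf) (F.smul_mem _ hf₀F), ?_⟩
  change φ (T f) = 0
  simp only [hT, map_sub, map_smul, smul_eq_mul]
  field_simp
  ring

/-- The Hodge index argument: if `L` embeds a negative definite subspace of maximal dimension, then
the orthogonal complement of the image of `L` carries no negative vectors. -/
theorem nonneg_and_mem_radicalOn_of_orthogonal_image {E' : Type*} [AddCommGroup E'] [Module ℝ E']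
    [FiniteDimensional ℝ E] [FiniteDimensional ℝ E'] (hB : B.IsSymm)
    {B' : LinearMap.BilinForm ℝ E'} {F' : Submodule ℝ E'} (L : E' →ₗ[ℝ] E)
    (hLF : ∀ f ∈ F', L f ∈ F) (hL : ∀ f ∈ F', B' f f = B (L f) (L f))
    (hindex : posIndexOn (-B) F ≤ posIndexOn (-B') F') {f : E} (hf : f ∈ F)
    (horth : ∀ g ∈ F', B f (L g) = 0) :
    0 ≤ B f f ∧ (B f f = 0 → f ∈ radicalOn B F) := by
  obtain ⟨W₀, hW₀, hrank, hneg⟩ := exists_isPosDefOn_map_finrank_eq (B := -B) (B' := -B')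
    (F' := F') L fun f hf => by simp [hL f hf]
  set W := W₀.map L
  have hWF : W ≤ F := Submodule.map_le_iff_le_comap.2 fun g hg => hLF g (hW₀ hg)
  have hfW : f ∈ B.orthogonal W := by
    rintro _ ⟨g, hg, rfl⟩
    exact (hB.eq _ _).trans (horth g (hW₀ hg))
  have hnonneg : ∀ u ∈ F ⊓ B.orthogonal W, 0 ≤ B u u := by
    rintro u ⟨huF, huW⟩
    by_contra! hu
    have := hneg.finrank_add_one_le_posIndexOn hB.neg hWF huF
      (fun w hw => by simpa [hB.eq u w] using huW w hw) (by simpa using hu)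
    omega
  refine ⟨hnonneg f ⟨hf, hfW⟩, fun h0 => ⟨hf, fun g hg => ?_⟩⟩
  have hdisj : Disjoint W (B.orthogonal W) := Submodule.disjoint_def.2 fun w hw hw' =>
    by_contra fun hne => by simpa [hw' w hw] using hneg w hw hne
  obtain ⟨w, hw, u, hu, rfl⟩ : ∃ w ∈ W, ∃ u ∈ B.orthogonal W, w + u = g :=
    Submodule.mem_sup.1 <|
      ((isCompl_orthogonal_iff_disjoint hB.isRefl).2 hdisj).sup_eq_top ▸ Submodule.mem_top
  have huF : u ∈ F := by simpa using F.sub_mem hg (hWF hw)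
  have hcs := LinearMap.BilinForm.apply_sq_le_of_symm (B.restrict (F ⊓ B.orthogonal W))
    (fun x => hnonneg x x.2) (isSymm_iff.1 (hB.restrict _)) ⟨u, huF, hu⟩ ⟨f, hf, hfW⟩
  have huf : B u f = 0 := by simpa [h0] using hcs
  change B (w + u) f = 0
  rw [map_add, LinearMap.add_apply, hfW w hw, huf, add_zero]

end Signature

section SignatureFamily

open Module Topology

variable {E : Type*} [NormedAddCommGroup E] [NormedSpace ℝ E] [FiniteDimensional ℝ E]
  {X : Type*} [TopologicalSpace X] {B : X → LinearMap.BilinForm ℝ E} {F W : Submodule ℝ E}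

theorem IsPosDefOn.eventually (hB : Continuous fun z : X × E => B z.1 z.2 z.2) {x : X}
    (h : IsPosDefOn (B x) W) : ∀ᶠ y in 𝓝 x, IsPosDefOn (B y) W := by
  have hcompact : IsCompact ((W : Set E) ∩ Metric.sphere 0 1) :=
    (isCompact_sphere (0 : E) 1).inter_left W.closed_of_finiteDimensional
  have hsphere : ∀ᶠ y in 𝓝 x, ∀ f ∈ (W : Set E) ∩ Metric.sphere 0 1, 0 < B y f f := by
    refine hcompact.eventually_forall_of_forall_eventually fun f hf => ?_
    refine hB.continuousAt.eventually (lt_mem_nhds (h f hf.1 ?_))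
    rintro rfl
    simpa using hf.2
  filter_upwards [hsphere] with y hy f hf hne
  have hnorm : 0 < ‖f‖ := norm_pos_iff.2 hne
  have := hy (‖f‖⁻¹ • f) ⟨W.smul_mem _ hf, by simp [norm_smul, hnorm.ne']⟩
  simpa [hnorm] using this

theorem eventually_posIndexOn_le (hB : Continuous fun z : X × E => B z.1 z.2 z.2) (x : X)
    (F : Submodule ℝ E) : ∀ᶠ y in 𝓝 x, posIndexOn (B x) F ≤ posIndexOn (B y) F := by
  obtain ⟨W, hWF, hrank, hpos⟩ := exists_isPosDefOn_finrank_eq (B x) F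
  filter_upwards [hpos.eventually hB] with y hy
  exact hrank ▸ hy.finrank_le_posIndexOn hWF

theorem posIndexOn_eq_of_isPreconnected (hB : Continuous fun z : X × E => B z.1 z.2 z.2)
    (hsymm : ∀ x, (B x).IsSymm) {I : Set X} (hI : IsPreconnected I) {N : Submodule ℝ E}
    (hrad : ∀ x ∈ I, radicalOn (B x) F = N) {x y : X} (hx : x ∈ I) (hy : y ∈ I) :
    posIndexOn (B x) F = posIndexOn (B y) F := by
  refine hI.constant (f := fun x => posIndexOn (B x) F) (fun a ha => ?_) hx hy
  rw [ContinuousWithinAt, nhds_discrete, Filter.tendsto_pure]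
  filter_upwards [nhdsWithin_le_nhds (eventually_posIndexOn_le hB a F),
    nhdsWithin_le_nhds (eventually_posIndexOn_le (B := fun x => -B x) hB.neg a F),
    self_mem_nhdsWithin] with b hpos hneg hb
  have hsum (c : X) (hc : c ∈ I) :=
    hrad c hc ▸ posIndexOn_add_posIndexOn_neg_add_finrank_radicalOn (hsymm c) F
  have := hsum a ha
  have := hsum b hb
  omega

variable {φ : E →ₗ[ℝ] ℝ} {f₀ : E} {x : X}

theorem eventually_posIndexOn_add_ite_le (hB : Continuous fun z : X × E => B z.1 z.2 z.2)
    (hsymm : ∀ x, (B x).IsSymm) (hf₀ : f₀ ∈ radicalOn (B x) F) (hφ : φ f₀ ≠ 0) :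
    ∀ᶠ y in 𝓝 x, f₀ ∈ radicalOn (B y) F → ∀ k : ℝ,
      posIndexOn (B x) F + (if 0 < k then 1 else 0) ≤
        posIndexOn (B y + k • LinearMap.BilinForm.linMulLin φ φ) F := by
  obtain ⟨W, hW, hrank, hpos⟩ := exists_isPosDefOn_le_ker (hsymm x) hf₀ hφ
  have hWF : W ≤ F := hW.trans inf_le_left
  have hφW : ∀ w ∈ W, φ w = 0 := fun w hw => (hW hw).2
  filter_upwards [hpos.eventually hB] with y hy hf₀y k
  obtain ⟨hf₀F, horth⟩ := mem_radicalOn.1 hf₀y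
  have hpos' : IsPosDefOn (B y + k • LinearMap.BilinForm.linMulLin φ φ) W := fun f hf hne => by
    simpa [hφW f hf] using hy f hf hne
  have hsymm' : (B y + k • LinearMap.BilinForm.linMulLin φ φ).IsSymm :=
    (hsymm y).add (LinearMap.BilinForm.IsSymm.smul k ⟨fun f g => mul_comm _ _⟩)
  rw [← hrank]
  split_ifs with hk
  · refine hpos'.finrank_add_one_le_posIndexOn hsymm' hWF hf₀F (fun w hw => ?_) ?_
    · simp [hφW w hw, (hsymm y).eq f₀ w, horth w (hWF hw)]
    · simpa [horth f₀ hf₀F] using mul_pos hk (mul_self_pos.2 hφ)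
  · exact hpos'.finrank_le_posIndexOn hWF

/-- Near a form `B x` whose radical contains `f₀`, a rank-one perturbation of size `k` that removes
`f₀` from the radical and leaves the rest of it changes the signature by the sign of `k` only. -/
theorem eventually_posIndexOn_add_linMulLin (hB : Continuous fun z : X × E => B z.1 z.2 z.2)
    (hsymm : ∀ x, (B x).IsSymm) (hf₀ : f₀ ∈ radicalOn (B x) F) (hφ : φ f₀ ≠ 0) :
    ∀ᶠ y in 𝓝 x, f₀ ∈ radicalOn (B y) F → ∀ k : ℝ, k ≠ 0 → ∀ B' : LinearMap.BilinForm ℝ E,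
      B' = B y + k • LinearMap.BilinForm.linMulLin φ φ →
      radicalOn B' F = radicalOn (B x) F ⊓ LinearMap.ker φ →
      posIndexOn B' F = posIndexOn (B x) F + (if 0 < k then 1 else 0) ∧
      posIndexOn (-B') F = posIndexOn (-B x) F + (if k < 0 then 1 else 0) := by
  filter_upwards [eventually_posIndexOn_add_ite_le hB hsymm hf₀ hφ,
    eventually_posIndexOn_add_ite_le (B := fun x => -B x) hB.neg
      (fun x => (hsymm x).neg) (radicalOn_neg (B x) F ▸ hf₀) hφ]
    with y hpos hneg hf₀y k hk B' hB' hrad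
  have hsymm' : B'.IsSymm :=
    hB' ▸ (hsymm y).add (LinearMap.BilinForm.IsSymm.smul k ⟨fun f g => mul_comm _ _⟩)
  have hpos := hpos hf₀y k
  have hneg := hneg (radicalOn_neg (B y) F ▸ hf₀y) (-k)
  have hB'neg : -B y + (-k) • LinearMap.BilinForm.linMulLin φ φ = -B' := by
    ext f g
    simp [hB', add_comm]
  simp only [hB'neg, neg_pos] at hneg
  rw [← hB'] at hpos
  have hsum := posIndexOn_add_posIndexOn_neg_add_finrank_radicalOn (hsymm x) F
  have hsum' := posIndexOn_add_posIndexOn_neg_add_finrank_radicalOn hsymm' F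
  rw [hrad] at hsum'
  have hdrop := finrank_inf_ker_add_one hf₀ hφ
  rcases hk.lt_or_gt with h | h
  · simp only [h, h.not_gt, if_true, if_false] at *
    omega
  · simp only [h, h.not_gt, if_true, if_false] at *
    omega

end SignatureFamily

section WeightedForm

variable {V : Type*} [Fintype V]

/-- The diagonal bilinear form `∑ s, μ s * f s * g s`, linear in the weight `μ`. -/
noncomputable def weightedForm : (V → ℝ) →ₗ[ℝ] LinearMap.BilinForm ℝ (V → ℝ) :=
  ∑ s, (LinearMap.proj s).smulRight
    (LinearMap.BilinForm.linMulLin (LinearMap.proj s) (LinearMap.proj s))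

theorem weightedForm_apply (μ f g : V → ℝ) : weightedForm μ f g = ∑ s, μ s * f s * g s := by
  simp [weightedForm, mul_assoc]

theorem weightedForm_isSymm (μ : V → ℝ) : (weightedForm μ).IsSymm :=
  ⟨fun f g => by simp only [weightedForm_apply, mul_right_comm]⟩

theorem weightedForm_mul (μ h f g : V → ℝ) :
    weightedForm (μ * h) f g = weightedForm μ f (h * g) := by
  simp only [weightedForm_apply, Pi.mul_apply]
  exact Finset.sum_congr rfl fun s _ => by ring

theorem weightedForm_congr {μ μ' f f' g g' : V → ℝ}
    (h : ∀ s, μ s * f s * g s = μ' s * f' s * g' s) :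
    weightedForm μ f g = weightedForm μ' f' g' := by
  simp only [weightedForm_apply, h]

theorem weightedForm_single (s : V) (k : ℝ) :
    weightedForm (Pi.single s k) =
      k • LinearMap.BilinForm.linMulLin (LinearMap.proj s) (LinearMap.proj s) := by
  refine LinearMap.ext₂ fun f g => ?_
  simp [weightedForm_apply, Pi.single_apply, mul_assoc]

end WeightedForm

/-- The functions on `V` of degree at most `j` in the coordinates `x`, provided that the constants
are themselves linear combinations of the coordinates. -/
noncomputable def coordFiltration {V R : Type*} (x : R → V → ℝ) (j : ℕ) : Submodule ℝ (V → ℝ) :=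
  Submodule.span ℝ (Set.range x) ^ j

/-- What evaluation at a generic vector `v` retains of a complete simplicial fan with maximal cones
`V` and rays `R`, and of a strictly convex conewise linear function `ℓ` on it. The cone `s` has the
rays `rays s`, with respect to which `v` has the coordinates `coord r s`; `height s` is the value at
`v` of the linear function `ℓ_s` that agrees with `ℓ` on `s`, and `slack r s` is the value of
`ℓ - ℓ_s` at the generator of `r`. -/
structure LocalizedFan (V R : Type*) [Fintype V] [Fintype R] where
  dim : ℕ
  rays : V → Finset R
  card_rays : ∀ s, (rays s).card = dim
  coord : R → V → ℝ
  coord_ne_zero_iff : ∀ {r s}, coord r s ≠ 0 ↔ r ∈ rays s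
  weight : V → ℝ
  weight_mul_prod_pos : ∀ s, 0 < weight s * ∏ r ∈ rays s, coord r s
  height : V → ℝ
  height_injective : Function.Injective height
  slack : R → V → ℝ
  slack_nonneg : ∀ r s, 0 ≤ slack r s
  slack_eq_zero_iff : ∀ {r s}, slack r s = 0 ↔ r ∈ rays s
  height_sub : ∀ s s', height s - height s' = ∑ r, slack r s' * coord r s
  one_mem_span : (1 : V → ℝ) ∈ Submodule.span ℝ (Set.range coord)
  exists_coord_eq : ∀ τ : Finset R, τ.card < dim → ∀ r ∈ τ, ∃ a : R → ℝ, (∀ r' ∈ τ, a r' = 0) ∧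
    ∀ s, τ ⊆ rays s → coord r s = ∑ r', a r' * coord r' s
  exists_notMem_rays : ∀ (τ : Finset R) s r, τ ⊆ rays s → r ∈ rays s → r ∉ τ →
    ∃ s', τ ⊆ rays s' ∧ r ∉ rays s'
  sum_weight_mul : ∀ {j}, j < dim → ∀ f ∈ coordFiltration coord j, ∑ s, weight s * f s = 0

namespace LocalizedFan

variable {V R : Type*} [Fintype V] [Fintype R]

section Filtration

variable (D : LocalizedFan V R)

/-- The degree filtration of the functions on the set of maximal cones. -/
noncomputable abbrev filtration (j : ℕ) : Submodule ℝ (V → ℝ) := coordFiltration D.coord j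

/-- The monomial of the face `τ`; it vanishes outside the star of `τ`. -/
noncomputable def coordProd (τ : Finset R) : V → ℝ := ∏ r ∈ τ, D.coord r

/-- The height measured from the level `c`. -/
def relHeight (c : ℝ) : V → ℝ := fun s => D.height s - c

variable {D}

theorem mul_mem_filtration {i j : ℕ} {f g : V → ℝ} (hf : f ∈ D.filtration i)
    (hg : g ∈ D.filtration j) : f * g ∈ D.filtration (i + j) := by
  rw [filtration, coordFiltration, pow_add]
  exact Submodule.mul_mem_mul hf hg

theorem filtration_one : D.filtration 1 = Submodule.span ℝ (Set.range D.coord) := pow_one _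

theorem coord_mem_filtration (r : R) : D.coord r ∈ D.filtration 1 :=
  filtration_one (D := D) ▸ Submodule.subset_span ⟨r, rfl⟩

theorem one_mem_filtration_zero : (1 : V → ℝ) ∈ D.filtration 0 := Submodule.one_le.1 (pow_zero _).ge

theorem one_mem_filtration_one : (1 : V → ℝ) ∈ D.filtration 1 :=
  filtration_one (D := D) ▸ D.one_mem_span

theorem filtration_mono : Monotone D.filtration :=
  monotone_nat_of_le_succ fun _ f hf => by
    simpa using mul_mem_filtration hf (one_mem_filtration_one (D := D))

theorem coordProd_mem_filtration (τ : Finset R) : D.coordProd τ ∈ D.filtration τ.card := by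
  induction τ using Finset.induction_on with
  | empty => exact one_mem_filtration_zero
  | insert r τ hr ih =>
    rw [coordProd, Finset.prod_insert hr, Finset.card_insert_of_notMem hr, add_comm]
    exact mul_mem_filtration (coord_mem_filtration r) ih

theorem relHeight_mem_filtration (c : ℝ) : D.relHeight c ∈ D.filtration 1 := by
  rcases isEmpty_or_nonempty V with hV | ⟨⟨s₀⟩⟩
  · rw [Subsingleton.elim (D.relHeight c) 0]
    exact zero_mem _
  · have hexpand : D.relHeight c =
        ∑ r, D.slack r s₀ • D.coord r + (D.height s₀ - c) • (1 : V → ℝ) := by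
      ext s
      simp [relHeight, ← D.height_sub]
    rw [hexpand]
    exact add_mem (sum_mem fun r _ => Submodule.smul_mem _ _ (coord_mem_filtration r))
      (Submodule.smul_mem _ _ one_mem_filtration_one)

theorem relHeight_pow_mem_filtration (c : ℝ) (m : ℕ) : D.relHeight c ^ m ∈ D.filtration m :=
  Submodule.pow_mem_pow _ (filtration_one (D := D) ▸ relHeight_mem_filtration c) m

theorem relHeight_pow_sub_pow_mem_filtration (c c' : ℝ) (m : ℕ) :
    D.relHeight c ^ (m + 1) - D.relHeight c' ^ (m + 1) ∈ D.filtration m := by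
  have hconst : D.relHeight c - D.relHeight c' = (c' - c) • (1 : V → ℝ) := by
    ext s
    simp [relHeight]
  rw [← geom_sum₂_mul, hconst, mul_smul_comm, mul_one]
  refine Submodule.smul_mem _ _ (sum_mem fun i hi => ?_)
  have hdeg : i + (m + 1 - 1 - i) = m := by
    have := Finset.mem_range.1 hi
    omega
  have hmem := mul_mem_filtration (relHeight_pow_mem_filtration (D := D) c i)
    (relHeight_pow_mem_filtration c' (m + 1 - 1 - i))
  rwa [hdeg] at hmem

theorem filtration_succ_le {j : ℕ} {P : Submodule ℝ (V → ℝ)}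
    (h : ∀ r, ∀ g ∈ D.filtration j, D.coord r * g ∈ P) : D.filtration (j + 1) ≤ P := by
  rw [filtration, coordFiltration, pow_succ', Submodule.mul_le]
  intro f hf g hg
  have hspan : Submodule.span ℝ (Set.range D.coord) ≤ P.comap (LinearMap.mulRight ℝ g) :=
    Submodule.span_le.2 (Set.range_subset_iff.2 fun r => h r g hg)
  exact hspan hf

theorem coordProd_ne_zero_iff {τ : Finset R} {s : V} : D.coordProd τ s ≠ 0 ↔ τ ⊆ D.rays s := by
  simp only [coordProd, Finset.prod_apply, Finset.prod_ne_zero_iff, D.coord_ne_zero_iff]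
  rfl

theorem coordProd_eq_zero {τ : Finset R} {s : V} (h : ¬ τ ⊆ D.rays s) : D.coordProd τ s = 0 :=
  not_not.1 (mt coordProd_ne_zero_iff.1 h)

end Filtration

section StarForm

variable (D : LocalizedFan V R)

/-- The weights of the maximal cones in `S`, twisted by the monomial of the face `τ`. -/
noncomputable def starWeight (τ : Finset R) (S : Finset V) : V → ℝ :=
  fun s => if s ∈ S then D.weight s * D.coordProd τ s else 0

/-- The form `∑_{s ∈ S} w x_τ f g`. -/
noncomputable abbrev starForm (τ : Finset R) (S : Finset V) : LinearMap.BilinForm ℝ (V → ℝ) :=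
  weightedForm (D.starWeight τ S)

/-- The form `∑_{s ∈ S} w x_τ (h - c)^{d - |τ| - 2j} f g`, to be considered on `D.filtration j` for
`2 * j + |τ| ≤ d`. -/
noncomputable def cutForm (τ : Finset R) (S : Finset V) (j : ℕ) (c : ℝ) :
    LinearMap.BilinForm ℝ (V → ℝ) :=
  weightedForm (D.starWeight τ S * D.relHeight c ^ (D.dim - τ.card - 2 * j))

/-- The kernel of the pairing `D.starForm τ S` on functions of complementary degrees `j` and
`d - |τ| - j`. -/
noncomputable def pairingKernel (τ : Finset R) (S : Finset V) (j : ℕ) : Submodule ℝ (V → ℝ) :=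
  D.filtration j ⊓ (D.starForm τ S).orthogonal (D.filtration (D.dim - τ.card - j))

variable {D} {τ : Finset R} {S : Finset V} {j : ℕ} {c : ℝ} {f g h : V → ℝ}

theorem mem_pairingKernel : f ∈ D.pairingKernel τ S j ↔
    f ∈ D.filtration j ∧ ∀ g ∈ D.filtration (D.dim - τ.card - j), D.starForm τ S g f = 0 :=
  Iff.rfl

theorem starWeight_eq_zero {s : V} (h : ¬ τ ⊆ D.rays s) : D.starWeight τ S s = 0 := by
  simp [starWeight, coordProd_eq_zero h]

theorem starWeight_insert {r : R} (hr : r ∉ τ) :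
    D.starWeight (insert r τ) S = D.starWeight τ S * D.coord r := by
  ext s
  by_cases h : s ∈ S <;> simp [starWeight, h, coordProd, Finset.prod_insert hr]
  ring

theorem starForm_insert {r : R} (hr : r ∉ τ) :
    D.starForm (insert r τ) S f g = D.starForm τ S f (D.coord r * g) := by
  rw [starForm, starWeight_insert hr, weightedForm_mul]

theorem cutForm_apply : D.cutForm τ S j c f g =
    D.starForm τ S f (D.relHeight c ^ (D.dim - τ.card - 2 * j) * g) :=
  weightedForm_mul _ _ _ _

theorem cutForm_isSymm : (D.cutForm τ S j c).IsSymm := weightedForm_isSymm _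

theorem continuous_cutForm (τ : Finset R) (S : Finset V) (j : ℕ) :
    Continuous fun z : ℝ × (V → ℝ) => D.cutForm τ S j z.1 z.2 z.2 := by
  simp only [cutForm, weightedForm_apply, relHeight, Pi.mul_apply, Pi.pow_apply]
  fun_prop

theorem starForm_congr {f' g' : V → ℝ} (hcongr : ∀ s, τ ⊆ D.rays s → f s * g s = f' s * g' s) :
    D.starForm τ S f g = D.starForm τ S f' g' := by
  refine weightedForm_congr fun s => ?_
  by_cases hs : τ ⊆ D.rays s
  · rw [mul_assoc, hcongr s hs, mul_assoc]
  · simp only [starWeight_eq_zero hs, zero_mul]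

theorem starForm_eq_zero (hzero : ∀ s ∈ S, τ ⊆ D.rays s → f s * g s = 0) :
    D.starForm τ S f g = 0 := by
  rw [weightedForm_apply]
  refine Finset.sum_eq_zero fun s _ => ?_
  by_cases hs : τ ⊆ D.rays s
  · by_cases hS : s ∈ S
    · rw [mul_assoc, hzero s hS hs, mul_zero]
    · simp [starWeight, hS]
  · simp only [starWeight_eq_zero hs, zero_mul]

theorem starForm_eq_zero_of_mul_mem (hS : ∀ s, τ ⊆ D.rays s → f s * g s ≠ 0 → s ∈ S) {i : ℕ}
    (hfg : f * g ∈ D.filtration i) (hi : i + τ.card < D.dim) : D.starForm τ S f g = 0 := by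
  rw [← D.sum_weight_mul hi _ (mul_mem_filtration hfg (coordProd_mem_filtration τ)),
    weightedForm_apply]
  refine Finset.sum_congr rfl fun s _ => ?_
  by_cases hs : s ∈ S
  · simp only [starWeight, hs, if_true, Pi.mul_apply]
    ring
  · by_cases hτ : τ ⊆ D.rays s
    · have h0 : f s * g s = 0 := not_not.1 (mt (hS s hτ) hs)
      simp [starWeight, hs, h0]
    · simp [starWeight, hs, coordProd_eq_zero hτ]

theorem pairingKernel_le_radicalOn (hj : 2 * j + τ.card ≤ D.dim) (c : ℝ) :
    D.pairingKernel τ S j ≤ radicalOn (D.cutForm τ S j c) (D.filtration j) := by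
  rintro f ⟨hf, horth⟩
  refine ⟨hf, fun g hg => ?_⟩
  change D.cutForm τ S j c g f = 0
  rw [cutForm_isSymm.eq, cutForm_apply, (weightedForm_isSymm _).eq]
  refine horth _ ?_
  rw [show D.dim - τ.card - j = D.dim - τ.card - 2 * j + j by omega]
  exact mul_mem_filtration (relHeight_pow_mem_filtration c _) hg

end StarForm

end LocalizedFan

namespace LocalizedFan

variable {V R : Type*} [Fintype V] [Fintype R]

section Signs

variable (D : LocalizedFan V R)

/-- The rays of `s` outside the face `τ` along which the generic vector has a negative
coordinate. -/
noncomputable def negRays (τ : Finset R) (s : V) : Finset R :=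
  (D.rays s \ τ).filter fun r => D.coord r s < 0

/-- The rays of `s` outside the face `τ` along which the generic vector has a positive
coordinate. -/
noncomputable def posRays (τ : Finset R) (s : V) : Finset R :=
  (D.rays s \ τ).filter fun r => 0 < D.coord r s

variable {D} {τ : Finset R} {s s' : V} {r : R}

theorem mem_negRays : r ∈ D.negRays τ s ↔ r ∉ τ ∧ D.coord r s < 0 := by
  rw [negRays, Finset.mem_filter, Finset.mem_sdiff, ← D.coord_ne_zero_iff]
  exact ⟨fun h => ⟨h.1.2, h.2⟩, fun h => ⟨⟨h.2.ne, h.1⟩, h.2⟩⟩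

theorem mem_posRays : r ∈ D.posRays τ s ↔ r ∉ τ ∧ 0 < D.coord r s := by
  rw [posRays, Finset.mem_filter, Finset.mem_sdiff, ← D.coord_ne_zero_iff]
  exact ⟨fun h => ⟨h.1.2, h.2⟩, fun h => ⟨⟨h.2.ne', h.1⟩, h.2⟩⟩

theorem negRays_subset_rays : D.negRays τ s ⊆ D.rays s :=
  (Finset.filter_subset _ _).trans Finset.sdiff_subset

theorem posRays_subset_rays : D.posRays τ s ⊆ D.rays s :=
  (Finset.filter_subset _ _).trans Finset.sdiff_subset

theorem posRays_eq_filter_not : D.posRays τ s = (D.rays s \ τ).filter fun r => ¬ D.coord r s < 0 :=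
  Finset.filter_congr fun _ hr => not_lt.trans (ne_comm.1
    (D.coord_ne_zero_iff.2 (Finset.mem_sdiff.1 hr).1)).le_iff_lt |>.symm

theorem card_negRays_add_card_posRays (hτ : τ ⊆ D.rays s) :
    (D.negRays τ s).card + (D.posRays τ s).card + τ.card = D.dim := by
  rw [posRays_eq_filter_not, negRays, Finset.card_filter_add_card_filter_not,
    Finset.card_sdiff_add_card_eq_card hτ, D.card_rays]

theorem card_negRays_le_card_negRays_insert_add_one (τ : Finset R) (s : V) (r : R) :
    (D.negRays τ s).card ≤ (D.negRays (insert r τ) s).card + 1 := by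
  have herase : D.negRays (insert r τ) s = (D.negRays τ s).erase r := by
    ext r'
    simp only [Finset.mem_erase, mem_negRays, Finset.mem_insert, not_or, and_assoc]
  rw [herase]
  exact tsub_le_iff_right.1 Finset.pred_card_le_card_erase

theorem card_posRays_le_card_posRays_insert_add_one (τ : Finset R) (s : V) (r : R) :
    (D.posRays τ s).card ≤ (D.posRays (insert r τ) s).card + 1 := by
  have herase : D.posRays (insert r τ) s = (D.posRays τ s).erase r := by
    ext r'
    simp only [Finset.mem_erase, mem_posRays, Finset.mem_insert, not_or, and_assoc]
  rw [herase]
  exact tsub_le_iff_right.1 Finset.pred_card_le_card_erase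

theorem neg_one_pow_mul_weight_mul_coordProd_pos (hτ : τ ⊆ D.rays s) :
    0 < (-1 : ℝ) ^ (D.negRays τ s).card * (D.weight s * D.coordProd τ s) := by
  have hfactor : ∏ r ∈ D.rays s, D.coord r s = (∏ r ∈ D.negRays τ s, D.coord r s) *
      (∏ r ∈ D.posRays τ s, D.coord r s) * D.coordProd τ s := by
    rw [posRays_eq_filter_not, negRays, Finset.prod_filter_mul_prod_filter_not, coordProd,
      Finset.prod_apply, Finset.prod_sdiff hτ]
  have hneg : 0 < (-1 : ℝ) ^ (D.negRays τ s).card * ∏ r ∈ D.negRays τ s, D.coord r s := by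
    rw [← Finset.prod_const, ← Finset.prod_mul_distrib]
    exact Finset.prod_pos fun r hr => by linarith [(mem_negRays.1 hr).2]
  have hpos : 0 < ∏ r ∈ D.posRays τ s, D.coord r s :=
    Finset.prod_pos fun r hr => (mem_posRays.1 hr).2
  have hsq : (-1 : ℝ) ^ (D.negRays τ s).card * (-1) ^ (D.negRays τ s).card = 1 := by
    rw [← mul_pow, neg_one_mul, neg_neg, one_pow]
  refine (pos_iff_pos_of_mul_pos ?_).2 (mul_pos hneg hpos)
  calc 0 < D.weight s * ∏ r ∈ D.rays s, D.coord r s := D.weight_mul_prod_pos s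
    _ = (-1 : ℝ) ^ (D.negRays τ s).card * (-1) ^ (D.negRays τ s).card *
        (D.weight s * ∏ r ∈ D.rays s, D.coord r s) := by rw [hsq, one_mul]
    _ = _ := by rw [hfactor]; ring

theorem weight_mul_coordProd_ne_zero (hτ : τ ⊆ D.rays s) : D.weight s * D.coordProd τ s ≠ 0 :=
  right_ne_zero_of_mul (neg_one_pow_mul_weight_mul_coordProd_pos hτ).ne'

theorem height_lt_of_coord_nonneg (h : ∀ r ∉ D.rays s', 0 ≤ D.coord r s) (hne : s' ≠ s) :
    D.height s' < D.height s := by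
  refine lt_of_le_of_ne (sub_nonneg.1 ?_) (D.height_injective.ne hne)
  rw [D.height_sub]
  refine Finset.sum_nonneg fun r _ => ?_
  by_cases hr : r ∈ D.rays s'
  · rw [D.slack_eq_zero_iff.2 hr, zero_mul]
  · exact mul_nonneg (D.slack_nonneg r s') (h r hr)

theorem lt_height_of_coord_nonpos (h : ∀ r ∉ D.rays s', D.coord r s ≤ 0) (hne : s' ≠ s) :
    D.height s < D.height s' := by
  refine lt_of_le_of_ne (sub_nonpos.1 ?_) (D.height_injective.ne hne.symm)
  rw [D.height_sub]
  refine Finset.sum_nonpos fun r _ => ?_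
  by_cases hr : r ∈ D.rays s'
  · rw [D.slack_eq_zero_iff.2 hr, zero_mul]
  · exact mul_nonpos_of_nonneg_of_nonpos (D.slack_nonneg r s') (h r hr)

theorem height_lt_of_negRays_subset (hτ : τ ⊆ D.rays s') (hneg : D.negRays τ s ⊆ D.rays s')
    (hne : s' ≠ s) : D.height s' < D.height s :=
  height_lt_of_coord_nonneg
    (fun _ hr => not_lt.1 fun hlt => hr (hneg (mem_negRays.2 ⟨mt (@hτ _) hr, hlt⟩))) hne

theorem lt_height_of_posRays_subset (hτ : τ ⊆ D.rays s') (hpos : D.posRays τ s ⊆ D.rays s')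
    (hne : s' ≠ s) : D.height s < D.height s' :=
  lt_height_of_coord_nonpos
    (fun _ hr => not_lt.1 fun hlt => hr (hpos (mem_posRays.2 ⟨mt (@hτ _) hr, hlt⟩))) hne

theorem exists_adjacent (hτ : τ ⊆ D.rays s) (hr : r ∈ D.rays s) (hrτ : r ∉ τ) :
    ∃ s', τ ⊆ D.rays s' ∧ (D.rays s).erase r ⊆ D.rays s' ∧ s' ≠ s := by
  obtain ⟨s', herase, hrs'⟩ := D.exists_notMem_rays ((D.rays s).erase r) s r
    (Finset.erase_subset _ _) hr (Finset.notMem_erase _ _)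
  refine ⟨s', fun t ht => herase (Finset.mem_erase.2 ⟨fun e => hrτ (e ▸ ht), hτ ht⟩), herase, ?_⟩
  rintro rfl
  exact hrs' hr

theorem exists_height_lt (hτ : τ ⊆ D.rays s) (hpos : 0 < (D.posRays τ s).card) :
    ∃ s', τ ⊆ D.rays s' ∧ D.height s' < D.height s := by
  obtain ⟨r, hr⟩ := Finset.card_pos.1 hpos
  obtain ⟨s', hτ', herase, hne⟩ := exists_adjacent hτ (posRays_subset_rays hr) (mem_posRays.1 hr).1
  refine ⟨s', hτ', height_lt_of_negRays_subset hτ' (fun t ht => herase ?_) hne⟩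
  refine Finset.mem_erase.2 ⟨?_, negRays_subset_rays ht⟩
  rintro rfl
  exact lt_asymm (mem_negRays.1 ht).2 (mem_posRays.1 hr).2

theorem exists_lt_height (hτ : τ ⊆ D.rays s) (hneg : 0 < (D.negRays τ s).card) :
    ∃ s', τ ⊆ D.rays s' ∧ D.height s < D.height s' := by
  obtain ⟨r, hr⟩ := Finset.card_pos.1 hneg
  obtain ⟨s', hτ', herase, hne⟩ := exists_adjacent hτ (negRays_subset_rays hr) (mem_negRays.1 hr).1
  refine ⟨s', hτ', lt_height_of_posRays_subset hτ' (fun t ht => herase ?_) hne⟩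
  refine Finset.mem_erase.2 ⟨?_, posRays_subset_rays ht⟩
  rintro rfl
  exact lt_asymm (mem_negRays.1 hr).2 (mem_posRays.1 ht).2

theorem coordProd_posRays_eq_zero (hτ : τ ⊆ D.rays s') (h : D.height s' < D.height s) :
    D.coordProd (D.posRays τ s) s' = 0 :=
  coordProd_eq_zero fun hpos =>
    lt_asymm h (lt_height_of_posRays_subset hτ hpos fun e => (e ▸ h).ne rfl)

theorem coordProd_negRays_eq_zero (hτ : τ ⊆ D.rays s') (h : D.height s < D.height s') :
    D.coordProd (D.negRays τ s) s' = 0 :=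
  coordProd_eq_zero fun hneg =>
    lt_asymm h (height_lt_of_negRays_subset hτ hneg fun e => (e ▸ h).ne rfl)

end Signs

section VertexStep

/-- Within the star of the face `τ`, the set `S` consists of the maximal cones strictly above `s₀`,
and `S'` consists of these and `s₀`. -/
structure IsVertexStep (D : LocalizedFan V R) (τ : Finset R) (S S' : Finset V) (s₀ : V) :
    Prop where
  subset_rays : τ ⊆ D.rays s₀
  mem_left_iff : ∀ {s}, τ ⊆ D.rays s → (s ∈ S ↔ D.height s₀ < D.height s)
  mem_right_iff : ∀ {s}, τ ⊆ D.rays s → (s ∈ S' ↔ D.height s₀ ≤ D.height s)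

namespace IsVertexStep

variable {D : LocalizedFan V R} {τ : Finset R} {S S' : Finset V} {s₀ : V} {j : ℕ} {f g : V → ℝ}

theorem starWeight_eq (h : D.IsVertexStep τ S S' s₀) : D.starWeight τ S' =
    D.starWeight τ S + Pi.single s₀ (D.weight s₀ * D.coordProd τ s₀) := by
  ext s
  rcases eq_or_ne s s₀ with rfl | hne
  · have hS' : s ∈ S' := (h.mem_right_iff h.subset_rays).2 le_rfl
    have hS : s ∉ S := fun hs => lt_irrefl _ ((h.mem_left_iff h.subset_rays).1 hs)
    simp [starWeight, hS, hS']
  · rw [Pi.add_apply, Pi.single_eq_of_ne hne, add_zero]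
    by_cases hτ : τ ⊆ D.rays s
    · have hmem : s ∈ S' ↔ s ∈ S := by
        rw [h.mem_left_iff hτ, h.mem_right_iff hτ, (D.height_injective.ne hne.symm).le_iff_lt]
      simp only [starWeight, hmem]
    · rw [starWeight_eq_zero hτ, starWeight_eq_zero hτ]

theorem starForm_eq (h : D.IsVertexStep τ S S' s₀) (f g : V → ℝ) : D.starForm τ S' f g =
    D.starForm τ S f g + D.weight s₀ * D.coordProd τ s₀ * (f s₀ * g s₀) := by
  rw [starForm, h.starWeight_eq, map_add, weightedForm_single]
  simp

theorem cutForm_eq (h : D.IsVertexStep τ S S' s₀) (j : ℕ) (c : ℝ) : D.cutForm τ S' j c =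
    D.cutForm τ S j c + (D.weight s₀ * D.coordProd τ s₀ *
      (D.height s₀ - c) ^ (D.dim - τ.card - 2 * j)) •
        LinearMap.BilinForm.linMulLin (LinearMap.proj s₀) (LinearMap.proj s₀) := by
  rw [cutForm, h.starWeight_eq, add_mul, map_add, ← weightedForm_single, ← Pi.single_mul_left]
  rfl

theorem cutForm_height_eq (h : D.IsVertexStep τ S S' s₀) (hj : 2 * j + τ.card < D.dim) :
    D.cutForm τ S' j (D.height s₀) = D.cutForm τ S j (D.height s₀) := by
  rw [h.cutForm_eq, sub_self, zero_pow (by omega), mul_zero, zero_smul, add_zero]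

theorem starForm_coordProd_negRays (h : D.IsVertexStep τ S S' s₀) (f : V → ℝ) :
    D.starForm τ S f (D.coordProd (D.negRays τ s₀)) = 0 :=
  starForm_eq_zero fun s hs hτ => by
    rw [coordProd_negRays_eq_zero hτ ((h.mem_left_iff hτ).1 hs), mul_zero]

theorem starForm_coordProd_posRays (h : D.IsVertexStep τ S S' s₀) {i : ℕ}
    (hf : f ∈ D.filtration i) (hi : i < (D.negRays τ s₀).card) :
    D.starForm τ S' f (D.coordProd (D.posRays τ s₀)) = 0 := by
  refine starForm_eq_zero_of_mul_mem
    (fun s hτ hne => (h.mem_right_iff hτ).2 (not_lt.1 fun hlt => ?_))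
    (mul_mem_filtration hf (coordProd_mem_filtration _)) ?_
  · exact hne (by rw [coordProd_posRays_eq_zero hτ hlt, mul_zero])
  · have := card_negRays_add_card_posRays h.subset_rays
    omega

theorem coordProd_negRays_mem_radicalOn (h : D.IsVertexStep τ S S' s₀)
    (hj : (D.negRays τ s₀).card ≤ j) (c : ℝ) :
    D.coordProd (D.negRays τ s₀) ∈ radicalOn (D.cutForm τ S j c) (D.filtration j) := by
  refine ⟨filtration_mono hj (coordProd_mem_filtration _), fun g _ => ?_⟩
  change D.cutForm τ S j c g _ = 0
  rw [cutForm_isSymm.eq, cutForm_apply, (weightedForm_isSymm _).eq, h.starForm_coordProd_negRays]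

theorem coordProd_posRays_mem_pairingKernel (h : D.IsVertexStep τ S S' s₀)
    (hj : (D.posRays τ s₀).card < j) (hdim : j + τ.card ≤ D.dim) :
    D.coordProd (D.posRays τ s₀) ∈ D.pairingKernel τ S' j := by
  refine mem_pairingKernel.2 ⟨filtration_mono hj.le (coordProd_mem_filtration _), fun g hg => ?_⟩
  have := card_negRays_add_card_posRays h.subset_rays
  exact h.starForm_coordProd_posRays hg (by omega)

theorem apply_eq_zero_of_mem_pairingKernel_left (h : D.IsVertexStep τ S S' s₀)
    (hj : j < (D.negRays τ s₀).card) (hf : f ∈ D.pairingKernel τ S j) : f s₀ = 0 := by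
  have hcard := card_negRays_add_card_posRays h.subset_rays
  have hS : D.starForm τ S (D.coordProd (D.posRays τ s₀)) f = 0 :=
    (mem_pairingKernel.1 hf).2 _ (filtration_mono (by omega) (coordProd_mem_filtration _))
  have hsplit := h.starForm_eq f (D.coordProd (D.posRays τ s₀))
  rw [h.starForm_coordProd_posRays hf.1 hj, (weightedForm_isSymm _).eq, hS, zero_add] at hsplit
  have hne : D.coordProd (D.posRays τ s₀) s₀ ≠ 0 := coordProd_ne_zero_iff.2 posRays_subset_rays
  simpa [weight_mul_coordProd_ne_zero h.subset_rays, hne] using hsplit.symm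

theorem apply_eq_zero_of_mem_pairingKernel_right (h : D.IsVertexStep τ S S' s₀)
    (hj : j ≤ (D.posRays τ s₀).card) (hf : f ∈ D.pairingKernel τ S' j) : f s₀ = 0 := by
  have hcard := card_negRays_add_card_posRays h.subset_rays
  have hS' : D.starForm τ S' (D.coordProd (D.negRays τ s₀)) f = 0 :=
    (mem_pairingKernel.1 hf).2 _ (filtration_mono (by omega) (coordProd_mem_filtration _))
  have hsplit := h.starForm_eq f (D.coordProd (D.negRays τ s₀))
  rw [h.starForm_coordProd_negRays, (weightedForm_isSymm _).eq, hS', zero_add] at hsplit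
  have hne : D.coordProd (D.negRays τ s₀) s₀ ≠ 0 := coordProd_ne_zero_iff.2 negRays_subset_rays
  simpa [weight_mul_coordProd_ne_zero h.subset_rays, hne] using hsplit.symm

theorem mem_pairingKernel_right_iff (h : D.IsVertexStep τ S S' s₀) (hf : f s₀ = 0) :
    f ∈ D.pairingKernel τ S' j ↔ f ∈ D.pairingKernel τ S j := by
  simp only [mem_pairingKernel, h.starForm_eq, hf, mul_zero, add_zero]

theorem pairingKernel_right (h : D.IsVertexStep τ S S' s₀) (hj : j ≤ (D.posRays τ s₀).card) :
    D.pairingKernel τ S' j = D.pairingKernel τ S j ⊓ LinearMap.ker (LinearMap.proj s₀) := by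
  ext f
  constructor
  · intro hf
    have hf₀ := h.apply_eq_zero_of_mem_pairingKernel_right hj hf
    exact ⟨(h.mem_pairingKernel_right_iff hf₀).1 hf, hf₀⟩
  · rintro ⟨hf, hf₀⟩
    exact (h.mem_pairingKernel_right_iff hf₀).2 hf

theorem pairingKernel_left (h : D.IsVertexStep τ S S' s₀) (hj : j < (D.negRays τ s₀).card) :
    D.pairingKernel τ S j = D.pairingKernel τ S' j ⊓ LinearMap.ker (LinearMap.proj s₀) := by
  ext f
  constructor
  · intro hf
    have hf₀ := h.apply_eq_zero_of_mem_pairingKernel_left hj hf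
    exact ⟨(h.mem_pairingKernel_right_iff hf₀).2 hf, hf₀⟩
  · rintro ⟨hf, hf₀⟩
    exact (h.mem_pairingKernel_right_iff hf₀).1 hf

theorem pairingKernel_eq (h : D.IsVertexStep τ S S' s₀) (hpos : j ≤ (D.posRays τ s₀).card)
    (hneg : j < (D.negRays τ s₀).card) : D.pairingKernel τ S' j = D.pairingKernel τ S j :=
  le_antisymm (h.pairingKernel_right hpos ▸ inf_le_left) (h.pairingKernel_left hneg ▸ inf_le_left)

end IsVertexStep

end VertexStep

end LocalizedFan

theorem exists_pos_sum_mul_eq_zero {ι : Type*} {T : Finset ι} {u : ι → ℝ} {a b : ι} (ha : a ∈ T)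
    (hb : b ∈ T) (hneg : u a < 0) (hpos : 0 < u b) :
    ∃ t : ι → ℝ, (∀ i, 0 < t i) ∧ ∑ i ∈ T, t i * u i = 0 := by
  have hsum_pos : 0 < ∑ i ∈ T, max (u i) 0 :=
    Finset.sum_pos' (fun i _ => le_max_right _ _) ⟨b, hb, lt_max_of_lt_left hpos⟩
  have hsum_neg : 0 < ∑ i ∈ T, max (-u i) 0 :=
    Finset.sum_pos' (fun i _ => le_max_right _ _) ⟨a, ha, lt_max_of_lt_left (neg_pos.2 hneg)⟩
  refine ⟨fun i => if 0 ≤ u i then ∑ k ∈ T, max (-u k) 0 else ∑ k ∈ T, max (u k) 0, fun i => ?_, ?_⟩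
  · dsimp only
    split_ifs
    exacts [hsum_neg, hsum_pos]
  · have hterm : ∀ i, (if 0 ≤ u i then ∑ k ∈ T, max (-u k) 0 else ∑ k ∈ T, max (u k) 0) * u i =
        (∑ k ∈ T, max (-u k) 0) * max (u i) 0 - (∑ k ∈ T, max (u k) 0) * max (-u i) 0 := by
      intro i
      split_ifs with h
      · rw [max_eq_left h, max_eq_right (neg_nonpos.2 h), mul_zero, sub_zero]
      · rw [max_eq_right (not_le.1 h).le, max_eq_left (neg_nonneg.2 (not_le.1 h).le)]
        ring
    simp only [hterm, Finset.sum_sub_distrib, ← Finset.mul_sum]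
    ring

namespace LocalizedFan

variable {V R : Type*} [Fintype V] [Fintype R] (D : LocalizedFan V R)

section HodgeRiemann

/-- The Hodge–Riemann relations in degree `j` for the star of `τ` cut at level `c`: on primitive
elements the form `(-1)^j * D.cutForm τ S j c` is positive semidefinite, with the kernel of the
pairing as its null vectors. -/
def HodgeRiemann (τ : Finset R) (S : Finset V) (c : ℝ) (j : ℕ) : Prop :=
  ∀ f ∈ D.filtration j,
    (∀ i, i + 1 = j → ∀ g ∈ D.filtration i, D.cutForm τ S j c f (D.relHeight c * g) = 0) →
    0 ≤ (-1 : ℝ) ^ j * D.cutForm τ S j c f f ∧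
    (D.cutForm τ S j c f f = 0 → f ∈ D.pairingKernel τ S j)

/-- The hard Lefschetz property in degree `j` for the star of `τ` cut at level `c`: multiplication
by `(h - c)^{d - |τ| - 2j}` is injective modulo the kernels of the pairing. -/
def HardLefschetz (τ : Finset R) (S : Finset V) (c : ℝ) (j : ℕ) : Prop :=
  radicalOn (D.cutForm τ S j c) (D.filtration j) ≤ D.pairingKernel τ S j

variable {D} {τ : Finset R} {S S' : Finset V} {c : ℝ} {j : ℕ} {f g : V → ℝ}

theorem cutForm_insert {r : R} (hr : r ∉ τ) : D.cutForm (insert r τ) S j c f g =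
    D.starForm τ S f (D.coord r * (D.relHeight c ^ (D.dim - τ.card - 2 * j - 1) * g)) := by
  rw [cutForm_apply, starForm_insert hr, Finset.card_insert_of_notMem hr,
    show D.dim - (τ.card + 1) - 2 * j = D.dim - τ.card - 2 * j - 1 by omega]

theorem cutForm_insert_relHeight_mul {r : R} (hr : r ∉ τ) (hj : 2 * j + τ.card < D.dim) :
    D.cutForm (insert r τ) S j c f (D.relHeight c * g) = D.cutForm τ S j c f (D.coord r * g) := by
  rw [cutForm_insert hr, cutForm_apply]
  obtain ⟨m, hm⟩ := Nat.exists_eq_add_of_lt (show 0 < D.dim - τ.card - 2 * j by omega)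
  rw [hm]
  congr 1
  simp only [zero_add, add_tsub_cancel_right, pow_succ]
  ring

theorem cutForm_eq_sum_cutForm_insert (hj : 2 * j + τ.card < D.dim) {h : R → ℝ}
    (hh : ∀ s, τ ⊆ D.rays s → D.height s - c = ∑ r ∈ τᶜ, h r * D.coord r s) (f g : V → ℝ) :
    D.cutForm τ S j c f g = ∑ r ∈ τᶜ, h r * D.cutForm (insert r τ) S j c f g := by
  obtain ⟨m, hm⟩ := Nat.exists_eq_add_of_lt (show 0 < D.dim - τ.card - 2 * j by omega)
  have hinsert : ∀ r ∈ τᶜ, h r * D.cutForm (insert r τ) S j c f g =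
      D.starForm τ S f (h r • (D.coord r * (D.relHeight c ^ m * g))) := fun r hr => by
    rw [cutForm_insert (Finset.mem_compl.1 hr), hm, map_smul, smul_eq_mul, zero_add,
      add_tsub_cancel_right]
  rw [Finset.sum_congr rfl hinsert, ← map_sum, cutForm_apply, hm, zero_add]
  refine starForm_congr fun s hτ => ?_
  simp only [Pi.mul_apply, Pi.pow_apply, Finset.sum_apply, Pi.smul_apply, smul_eq_mul,
    ← mul_assoc, ← Finset.sum_mul, ← hh s hτ, relHeight, pow_succ']

theorem mem_pairingKernel_of_forall_insert (hj : j + τ.card < D.dim)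
    (hf : f ∈ D.filtration j) (h : ∀ r ∉ τ, f ∈ D.pairingKernel (insert r τ) S j) :
    f ∈ D.pairingKernel τ S j := by
  obtain ⟨n, hn⟩ := Nat.exists_eq_add_of_lt (show 0 < D.dim - τ.card - j by omega)
  have hnotMem : ∀ r ∉ τ, ∀ g ∈ D.filtration n, D.starForm τ S f (D.coord r * g) = 0 := by
    intro r hr g hg
    rw [← starForm_insert hr, (weightedForm_isSymm _).eq]
    refine (mem_pairingKernel.1 (h r hr)).2 g ?_
    rwa [Finset.card_insert_of_notMem hr, show D.dim - (τ.card + 1) - j = n by omega]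
  suffices hle : D.filtration (n + 1) ≤ LinearMap.ker (D.starForm τ S f) by
    refine mem_pairingKernel.2 ⟨hf, fun g hg => ?_⟩
    rw [(weightedForm_isSymm _).eq]
    exact hle (by rwa [hn, zero_add] at hg)
  refine filtration_succ_le fun r g hg => LinearMap.mem_ker.2 ?_
  by_cases hr : r ∈ τ
  · obtain ⟨a, haτ, ha⟩ := D.exists_coord_eq τ (by omega) r hr
    have hexpand : D.starForm τ S f (D.coord r * g) =
        D.starForm τ S f (∑ r', a r' • (D.coord r' * g)) :=
      starForm_congr fun s hs => by
        simp [ha s hs, Finset.sum_mul, mul_assoc]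
    rw [hexpand, map_sum]
    refine Finset.sum_eq_zero fun r' _ => ?_
    by_cases hr' : r' ∈ τ
    · rw [haτ r' hr', zero_smul, map_zero]
    · rw [map_smul, hnotMem r' hr' g hg, smul_zero]
  · exact hnotMem r hr g hg

/-- As `h - c` is a positive combination of the coordinates transverse to `τ`, an element of the
radical satisfies a vanishing sum of terms of equal sign over the faces `insert r τ`. -/
theorem hardLefschetz_of_hodgeRiemann_insert (hj : 2 * j + τ.card < D.dim) {h : R → ℝ}
    (hpos : ∀ r ∉ τ, 0 < h r)
    (hh : ∀ s, τ ⊆ D.rays s → D.height s - c = ∑ r ∈ τᶜ, h r * D.coord r s)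
    (hHR : ∀ r ∉ τ, D.HodgeRiemann (insert r τ) S c j) : D.HardLefschetz τ S c j := by
  intro f hf
  obtain ⟨hfj, hrad⟩ := mem_radicalOn.1 hf
  have hrad' : ∀ g ∈ D.filtration j, D.cutForm τ S j c f g = 0 := fun g hg => by
    rw [cutForm_isSymm.eq, hrad g hg]
  have hsign : ∀ r ∉ τ, 0 ≤ (-1 : ℝ) ^ j * D.cutForm (insert r τ) S j c f f ∧
      (D.cutForm (insert r τ) S j c f f = 0 → f ∈ D.pairingKernel (insert r τ) S j) := by
    refine fun r hr => hHR r hr f hfj fun i hi g hg => ?_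
    rw [cutForm_insert_relHeight_mul hr hj]
    refine hrad' _ ?_
    rw [← hi, add_comm]
    exact mul_mem_filtration (coord_mem_filtration r) hg
  have hsum : ∑ r ∈ τᶜ, h r * ((-1 : ℝ) ^ j * D.cutForm (insert r τ) S j c f f) = 0 := by
    simp only [mul_left_comm (h _), ← Finset.mul_sum]
    rw [← cutForm_eq_sum_cutForm_insert hj hh, hrad' f hfj, mul_zero]
  have hterm := (Finset.sum_eq_zero_iff_of_nonneg fun r hr =>
    mul_nonneg (hpos r (Finset.mem_compl.1 hr)).le (hsign r (Finset.mem_compl.1 hr)).1).1 hsum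
  refine mem_pairingKernel_of_forall_insert (by omega) hfj fun r hr => (hsign r hr).2 ?_
  simpa [(hpos r hr).ne'] using hterm r (Finset.mem_compl.2 hr)

theorem height_sub_eq_sum_compl {s s' : V} (hτ : τ ⊆ D.rays s') :
    D.height s - D.height s' = ∑ r ∈ τᶜ, D.slack r s' * D.coord r s := by
  rw [D.height_sub, ← Finset.sum_add_sum_compl τ, Finset.sum_eq_zero (s := τ), zero_add]
  exact fun r hr => by rw [D.slack_eq_zero_iff.2 (hτ hr), zero_mul]

theorem exists_height_sub_eq_sum_pos_mul {a b : V} (ha : τ ⊆ D.rays a) (hb : τ ⊆ D.rays b)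
    (hac : D.height a < c) (hcb : c < D.height b) :
    ∃ h : R → ℝ, (∀ r ∉ τ, 0 < h r) ∧
      ∀ s, D.height s - c = ∑ r ∈ τᶜ, h r * D.coord r s := by
  set T := Finset.univ.filter fun s => τ ⊆ D.rays s with hT
  have hmem : ∀ {s}, s ∈ T ↔ τ ⊆ D.rays s := by simp [hT]
  obtain ⟨t, ht, htc⟩ := exists_pos_sum_mul_eq_zero (u := fun s => D.height s - c)
    (hmem.2 ha) (hmem.2 hb) (sub_neg.2 hac) (sub_pos.2 hcb)
  have hsum : 0 < ∑ s ∈ T, t s := Finset.sum_pos (fun s _ => ht s) ⟨a, hmem.2 ha⟩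
  refine ⟨fun r => (∑ s ∈ T, t s * D.slack r s) / ∑ s ∈ T, t s, fun r hr => ?_, fun s => ?_⟩
  · obtain ⟨s, hs, hrs⟩ : ∃ s, τ ⊆ D.rays s ∧ r ∉ D.rays s := by
      by_cases hra : r ∈ D.rays a
      exacts [D.exists_notMem_rays τ a r ha hra hr, ⟨a, ha, hra⟩]
    have hslack : 0 < D.slack r s := (D.slack_nonneg r s).lt_of_ne' (mt D.slack_eq_zero_iff.1 hrs)
    exact div_pos (Finset.sum_pos' (fun s _ => mul_nonneg (ht s).le (D.slack_nonneg r s))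
      ⟨s, hmem.2 hs, mul_pos (ht s) hslack⟩) hsum
  · have hdiff : (D.height s - c) * ∑ s' ∈ T, t s' =
        ∑ s' ∈ T, ∑ r ∈ τᶜ, t s' * D.slack r s' * D.coord r s := by
      rw [← sub_zero ((D.height s - c) * _), ← htc, Finset.mul_sum, ← Finset.sum_sub_distrib]
      refine Finset.sum_congr rfl fun s' hs' => ?_
      simp only [mul_assoc, ← Finset.mul_sum, ← height_sub_eq_sum_compl (hmem.1 hs')]
      ring
    rw [← mul_left_inj' hsum.ne', hdiff, Finset.sum_comm, Finset.sum_mul]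
    refine Finset.sum_congr rfl fun r _ => ?_
    rw [← Finset.sum_mul, div_mul_eq_mul_div, div_mul_cancel₀ _ hsum.ne']

theorem hardLefschetz_of_forall_notMem (h : ∀ s, τ ⊆ D.rays s → s ∉ S) :
    D.HardLefschetz τ S c j := fun _ hf =>
  mem_pairingKernel.2 ⟨(mem_radicalOn.1 hf).1, fun _ _ =>
    starForm_eq_zero fun s hs hτ => absurd hs (h s hτ)⟩

theorem hardLefschetz_of_two_mul_add_card_eq (h : 2 * j + τ.card = D.dim) :
    D.HardLefschetz τ S c j := by
  refine fun f hf => mem_pairingKernel.2 ⟨(mem_radicalOn.1 hf).1, fun g hg => ?_⟩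
  have hrad := (mem_radicalOn.1 hf).2 g (by rwa [show D.dim - τ.card - j = j by omega] at hg)
  rwa [cutForm_apply, show D.dim - τ.card - 2 * j = 0 by omega, pow_zero, one_mul] at hrad

theorem cutForm_eq_of_forall_mem (hS : ∀ s, τ ⊆ D.rays s → s ∈ S) (hj : 2 * j + τ.card < D.dim)
    (c c' : ℝ) (hf : f ∈ D.filtration j) (hg : g ∈ D.filtration j) :
    D.cutForm τ S j c f g = D.cutForm τ S j c' f g := by
  obtain ⟨m, hm⟩ := Nat.exists_eq_add_of_lt (show 0 < D.dim - τ.card - 2 * j by omega)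
  rw [cutForm_apply, cutForm_apply, hm, zero_add, ← sub_eq_zero, ← map_sub, ← sub_mul]
  exact starForm_eq_zero_of_mul_mem (fun s hs _ => hS s hs)
    (mul_mem_filtration hf (mul_mem_filtration (relHeight_pow_sub_pow_mem_filtration c c' m) hg))
    (by omega)

theorem exists_height_lt_height {s : V} (hs : τ ⊆ D.rays s) (hτ : τ.card < D.dim) :
    ∃ a b, τ ⊆ D.rays a ∧ τ ⊆ D.rays b ∧ D.height a < D.height b := by
  have hcard := card_negRays_add_card_posRays hs
  rcases Nat.eq_zero_or_pos (D.posRays τ s).card with h | h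
  · obtain ⟨s', hs', hlt⟩ := exists_lt_height hs (by omega)
    exact ⟨s, s', hs, hs', hlt⟩
  · obtain ⟨s', hs', hlt⟩ := exists_height_lt hs h
    exact ⟨s', s, hs', hs, hlt⟩

theorem hardLefschetz_of_forall_mem (hj : 2 * j + τ.card < D.dim)
    (hS : ∀ s, τ ⊆ D.rays s → s ∈ S) (hHR : ∀ c, ∀ r ∉ τ, D.HodgeRiemann (insert r τ) S c j) :
    D.HardLefschetz τ S c j := by
  by_cases hstar : ∃ s, τ ⊆ D.rays s
  · obtain ⟨s, hs⟩ := hstar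
    obtain ⟨a, b, ha, hb, hab⟩ := exists_height_lt_height hs (by omega)
    obtain ⟨c', hac, hcb⟩ := exists_between hab
    obtain ⟨h, hpos, hh⟩ := exists_height_sub_eq_sum_pos_mul ha hb hac hcb
    refine fun f hf => hardLefschetz_of_hodgeRiemann_insert hj hpos (fun s _ => hh s) (hHR c')
      (mem_radicalOn.2 ⟨(mem_radicalOn.1 hf).1, fun g hg => ?_⟩)
    rw [cutForm_eq_of_forall_mem hS hj c' c hg (mem_radicalOn.1 hf).1, (mem_radicalOn.1 hf).2 g hg]
  · exact hardLefschetz_of_forall_notMem fun s hs => absurd ⟨s, hs⟩ hstar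

theorem IsVertexStep.hardLefschetz_iff {s₀ : V} (h : D.IsVertexStep τ S S' s₀)
    (hj : 2 * j + τ.card < D.dim) (hpos : j ≤ (D.posRays τ s₀).card)
    (hneg : j < (D.negRays τ s₀).card) :
    D.HardLefschetz τ S' (D.height s₀) j ↔ D.HardLefschetz τ S (D.height s₀) j := by
  rw [HardLefschetz, HardLefschetz, h.cutForm_height_eq hj, h.pairingKernel_eq hpos hneg]

end HodgeRiemann

end LocalizedFan

namespace LocalizedFan

variable {V R : Type*} [Fintype V] [Fintype R] (D : LocalizedFan V R)

section Cuts

open Topology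

/-- Within the star of `τ`, the level `c` separates the maximal cones in `S` (above) from the others
(below). A maximal cone at height exactly `c` may lie in `S` if it satisfies `N`, and outside `S`
if it satisfies `P`. -/
structure IsCut (τ : Finset R) (S : Finset V) (c : ℝ) (N P : V → Prop) : Prop where
  of_mem : ∀ {s}, τ ⊆ D.rays s → s ∈ S → c < D.height s ∨ D.height s = c ∧ N s
  of_notMem : ∀ {s}, τ ⊆ D.rays s → s ∉ S → D.height s < c ∨ D.height s = c ∧ P s

/-- Within the star of `τ`, the set `S` consists of the maximal cones above the level `c`, and no
maximal cone lies at height `c`. -/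
structure IsStrictCut (τ : Finset R) (S : Finset V) (c : ℝ) : Prop where
  lt_height : ∀ {s}, τ ⊆ D.rays s → s ∈ S → c < D.height s
  height_lt : ∀ {s}, τ ⊆ D.rays s → s ∉ S → D.height s < c

variable {D} {τ τ' : Finset R} {S S' : Finset V} {c c' a : ℝ} {N P N' P' : V → Prop} {s s₀ : V}

theorem IsStrictCut.isCut (h : D.IsStrictCut τ S c) : D.IsCut τ S c N P :=
  ⟨fun hτ hs => Or.inl (h.lt_height hτ hs), fun hτ hs => Or.inl (h.height_lt hτ hs)⟩

theorem exists_lt_forall_height_lt (D : LocalizedFan V R) (c : ℝ) :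
    ∃ c' < c, ∀ s, D.height s < c → D.height s < c' := by
  have h : ∀ᶠ c' in 𝓝[<] c, ∀ s, D.height s < c → D.height s < c' :=
    Filter.eventually_all.2 fun s => Filter.eventually_imp_distrib_left.2 fun hs =>
      nhdsWithin_le_nhds (lt_mem_nhds hs)
  obtain ⟨c', hc', hlt⟩ := (h.and self_mem_nhdsWithin).exists
  exact ⟨c', hlt, hc'⟩

theorem exists_gt_forall_lt_height (D : LocalizedFan V R) (c : ℝ) :
    ∃ c' > c, ∀ s, c < D.height s → c' < D.height s := by
  have h : ∀ᶠ c' in 𝓝[>] c, ∀ s, c < D.height s → c' < D.height s :=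
    Filter.eventually_all.2 fun s => Filter.eventually_imp_distrib_left.2 fun hs =>
      nhdsWithin_le_nhds (gt_mem_nhds hs)
  obtain ⟨c', hc', hlt⟩ := (h.and self_mem_nhdsWithin).exists
  exact ⟨c', hlt, hc'⟩

theorem exists_isStrictCut_of_forall_mem (hS : ∀ s, τ ⊆ D.rays s → s ∈ S) :
    ∃ c, D.IsStrictCut τ S c := by
  have h : ∀ᶠ c in Filter.atBot, ∀ s, c < D.height s :=
    Filter.eventually_all.2 fun s => Filter.eventually_lt_atBot _
  obtain ⟨c, hc⟩ := h.exists
  exact ⟨c, fun _ _ => hc _, fun hτ hs => absurd (hS _ hτ) hs⟩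

namespace IsCut

theorem mono (h : D.IsCut τ S c N P) (hττ' : τ ⊆ τ') (hN : ∀ s, τ' ⊆ D.rays s → N s → N' s)
    (hP : ∀ s, τ' ⊆ D.rays s → P s → P' s) : D.IsCut τ' S c N' P' where
  of_mem hτ hs := (h.of_mem (hττ'.trans hτ) hs).imp_right (And.imp_right (hN _ hτ))
  of_notMem hτ hs := (h.of_notMem (hττ'.trans hτ) hs).imp_right (And.imp_right (hP _ hτ))

theorem isStrictCut (h : D.IsCut τ S c N P) (hc : ∀ s, τ ⊆ D.rays s → D.height s ≠ c) :
    D.IsStrictCut τ S c where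
  lt_height hτ hs := (h.of_mem hτ hs).resolve_right fun h => hc _ hτ h.1
  height_lt hτ hs := (h.of_notMem hτ hs).resolve_right fun h => hc _ hτ h.1

theorem of_mem_uIcc (h : D.IsCut τ S c N P) (h' : D.IsStrictCut τ S c') (ha : a ∈ Set.uIcc c c') :
    D.IsCut τ S a N P where
  of_mem {s} hτ hs := by
    have hc' := h'.lt_height hτ hs
    rcases h.of_mem hτ hs with hc | ⟨hc, hN⟩
    · exact Or.inl (ha.2.trans_lt (max_lt hc hc'))
    · exact (ha.2.trans (max_le hc.ge hc'.le)).lt_or_eq.imp_right fun e => ⟨e.symm, hN⟩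
  of_notMem {s} hτ hs := by
    have hc' := h'.height_lt hτ hs
    rcases h.of_notMem hτ hs with hc | ⟨hc, hP⟩
    · exact Or.inl ((lt_min hc hc').trans_le ha.1)
    · exact ((le_min hc.le hc'.le).trans ha.1).lt_or_eq.imp_right fun e => ⟨e, hP⟩

theorem exists_isStrictCut (h : D.IsCut τ S c N P) : ∃ c', D.IsStrictCut τ S c' := by
  by_cases hex : ∃ s₀ ∈ S, D.height s₀ = c
  · obtain ⟨s₀, hs₀, rfl⟩ := hex
    obtain ⟨c', hlt, hc'⟩ := D.exists_lt_forall_height_lt (D.height s₀)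
    refine ⟨c', fun hτ hs => ?_, fun hτ hs => hc' _ ?_⟩
    · exact (h.of_mem hτ hs).elim hlt.trans fun e => e.1.symm ▸ hlt
    · exact (h.of_notMem hτ hs).resolve_right fun e => hs (D.height_injective e.1 ▸ hs₀)
  · obtain ⟨c', hlt, hc'⟩ := D.exists_gt_forall_lt_height c
    refine ⟨c', fun hτ hs => hc' _ ?_, fun hτ hs => ?_⟩
    · exact (h.of_mem hτ hs).resolve_right fun e => hex ⟨_, hs, e.1⟩
    · exact (h.of_notMem hτ hs).elim (fun e => e.trans hlt) fun e => e.1.symm ▸ hlt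

theorem mem_iff_of_ne (h : D.IsCut τ S (D.height s₀) N P) (hτ : τ ⊆ D.rays s) (hne : s ≠ s₀) :
    s ∈ S ↔ D.height s₀ < D.height s := by
  have hne' := D.height_injective.ne hne
  refine ⟨fun hs => (h.of_mem hτ hs).resolve_right fun e => hne' e.1, fun hlt => ?_⟩
  by_contra hs
  exact (h.of_notMem hτ hs).elim (fun e => lt_asymm e hlt) fun e => hne' e.1

theorem isVertexStep_erase (h : D.IsCut τ S (D.height s₀) N P) (hτ₀ : τ ⊆ D.rays s₀)
    (hs₀ : s₀ ∈ S) : D.IsVertexStep τ (S.erase s₀) S s₀ where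
  subset_rays := hτ₀
  mem_left_iff {s} hτ := by
    rcases eq_or_ne s s₀ with rfl | hne
    · simp
    · rw [Finset.mem_erase, and_iff_right hne, h.mem_iff_of_ne hτ hne]
  mem_right_iff {s} hτ := by
    rcases eq_or_ne s s₀ with rfl | hne
    · simpa using hs₀
    · rw [h.mem_iff_of_ne hτ hne, (D.height_injective.ne hne.symm).le_iff_lt]

theorem isVertexStep_insert (h : D.IsCut τ S (D.height s₀) N P) (hτ₀ : τ ⊆ D.rays s₀)
    (hs₀ : s₀ ∉ S) : D.IsVertexStep τ S (insert s₀ S) s₀ where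
  subset_rays := hτ₀
  mem_left_iff {s} hτ := by
    rcases eq_or_ne s s₀ with rfl | hne
    · simpa using hs₀
    · exact h.mem_iff_of_ne hτ hne
  mem_right_iff {s} hτ := by
    rcases eq_or_ne s s₀ with rfl | hne
    · simp
    · rw [Finset.mem_insert, or_iff_right hne, h.mem_iff_of_ne hτ hne,
        (D.height_injective.ne hne.symm).le_iff_lt]

end IsCut

namespace IsVertexStep

theorem isCut_right (h : D.IsVertexStep τ S S' s₀) (hN : N s₀) :
    D.IsCut τ S' (D.height s₀) N P where
  of_mem {s} hτ hs := ((h.mem_right_iff hτ).1 hs).lt_or_eq.imp_right fun e => by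
    obtain rfl := D.height_injective e
    exact ⟨rfl, hN⟩
  of_notMem hτ hs := Or.inl (not_le.1 (mt (h.mem_right_iff hτ).2 hs))

theorem isCut_left (h : D.IsVertexStep τ S S' s₀) (hP : P s₀) :
    D.IsCut τ S (D.height s₀) N P where
  of_mem hτ hs := Or.inl ((h.mem_left_iff hτ).1 hs)
  of_notMem {s} hτ hs := (not_lt.1 (mt (h.mem_left_iff hτ).2 hs)).lt_or_eq.imp_right fun e => by
    obtain rfl := D.height_injective e
    exact ⟨rfl, hP⟩

theorem lt_height (h : D.IsVertexStep τ S S' s₀) (hc : D.IsStrictCut τ S' c) : c < D.height s₀ :=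
  hc.lt_height h.subset_rays ((h.mem_right_iff h.subset_rays).2 le_rfl)

theorem height_lt (h : D.IsVertexStep τ S S' s₀) (hc : D.IsStrictCut τ S c) : D.height s₀ < c :=
  hc.height_lt h.subset_rays fun hs => lt_irrefl _ ((h.mem_left_iff h.subset_rays).1 hs)

theorem isStrictCut_right (h : D.IsVertexStep τ S S' s₀) (hc : D.IsStrictCut τ S' c) (hca : c ≤ a)
    (ha : a < D.height s₀) : D.IsStrictCut τ S' a :=
  ⟨fun hτ hs => ha.trans_le ((h.mem_right_iff hτ).1 hs),
    fun hτ hs => (hc.height_lt hτ hs).trans_le hca⟩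

theorem isStrictCut_left (h : D.IsVertexStep τ S S' s₀) (hc : D.IsStrictCut τ S c) (hac : a ≤ c)
    (ha : D.height s₀ < a) : D.IsStrictCut τ S a :=
  ⟨fun hτ hs => hac.trans_lt (hc.lt_height hτ hs),
    fun hτ hs => (not_lt.1 (mt (h.mem_left_iff hτ).2 hs)).trans_lt ha⟩

end IsVertexStep

end Cuts

section Admissible

/-- The cuts at which the hard Lefschetz property holds in degree `j`: the full star at any level,
and level cuts at which a maximal cone at height `c` lies in the upper part `S` only if it has
more than `j` descending directions, and outside `S` only if it has at least `j` ascending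
ones. -/
def IsAdmissible (τ : Finset R) (S : Finset V) (c : ℝ) (j : ℕ) : Prop :=
  (∀ s, τ ⊆ D.rays s → s ∈ S) ∨
    D.IsCut τ S c (fun s => j < (D.negRays τ s).card) (fun s => j ≤ (D.posRays τ s).card)

/-- The cuts at which the Hodge–Riemann relations hold in degree `j`: hard Lefschetz is available in
degree `j` and in all smaller degrees. -/
structure IsHodgeAdmissible (τ : Finset R) (S : Finset V) (c : ℝ) (j : ℕ) : Prop where
  two_mul_add_card_le : 2 * j + τ.card ≤ D.dim
  isAdmissible : 2 * j + τ.card < D.dim → D.IsAdmissible τ S c j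
  isAdmissible_of_lt : ∀ {i}, i < j → D.IsAdmissible τ S c i

/-- The cuts for which all the cuts of the faces `insert r τ` satisfy `IsHodgeAdmissible`. -/
def IsDirectCut (τ : Finset R) (S : Finset V) (c : ℝ) (j : ℕ) : Prop :=
  D.IsCut τ S c
    (fun s => j + 1 < (D.negRays τ s).card ∨
      2 * j + 1 + τ.card = D.dim ∧ j < (D.negRays τ s).card)
    (fun s => j < (D.posRays τ s).card ∨
      2 * j + 1 + τ.card = D.dim ∧ j ≤ (D.posRays τ s).card ∧ 1 ≤ (D.posRays τ s).card)

variable {D} {τ : Finset R} {S : Finset V} {c : ℝ} {j : ℕ}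

theorem isHodgeAdmissible_insert_of_forall_mem (hj : 2 * j + τ.card < D.dim)
    (hS : ∀ s, τ ⊆ D.rays s → s ∈ S) {r : R} (hr : r ∉ τ) :
    D.IsHodgeAdmissible (insert r τ) S c j := by
  have hS' : ∀ s, insert r τ ⊆ D.rays s → s ∈ S := fun s hs =>
    hS s ((Finset.subset_insert r τ).trans hs)
  exact ⟨by rw [Finset.card_insert_of_notMem hr]; omega, fun _ => Or.inl hS', fun _ => Or.inl hS'⟩

theorem IsDirectCut.isHodgeAdmissible_insert (h : D.IsDirectCut τ S c j)
    (hj : 2 * j + τ.card < D.dim) {r : R} (hr : r ∉ τ) :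
    D.IsHodgeAdmissible (insert r τ) S c j := by
  have hcard := Finset.card_insert_of_notMem hr
  have hneg := fun s => card_negRays_le_card_negRays_insert_add_one (D := D) τ s r
  have hpos := fun s => card_posRays_le_card_posRays_insert_add_one (D := D) τ s r
  refine ⟨by omega, fun hlt => Or.inr ?_, fun {i} hi => Or.inr ?_⟩ <;>
    refine IsCut.mono h (Finset.subset_insert r τ) (fun s _ hs => ?_) fun s _ hs => ?_ <;>
    have := hneg s <;> have := hpos s <;> omega

theorem hardLefschetz_of_isDirectCut (hj : 2 * j + τ.card < D.dim) (h : D.IsDirectCut τ S c j)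
    (hHR : ∀ S c, ∀ r ∉ τ, D.IsHodgeAdmissible (insert r τ) S c j →
      D.HodgeRiemann (insert r τ) S c j) : D.HardLefschetz τ S c j := by
  by_cases hfull : ∀ s, τ ⊆ D.rays s → s ∈ S
  · exact hardLefschetz_of_forall_mem hj hfull fun c r hr =>
      hHR S c r hr (isHodgeAdmissible_insert_of_forall_mem hj hfull hr)
  by_cases hempty : ∀ s, τ ⊆ D.rays s → s ∉ S
  · exact hardLefschetz_of_forall_notMem hempty
  push Not at hfull hempty
  obtain ⟨a, ha, hac⟩ : ∃ a, τ ⊆ D.rays a ∧ D.height a < c := by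
    obtain ⟨a, ha, haS⟩ := hfull
    rcases h.of_notMem ha haS with hlt | ⟨rfl, hpos⟩
    exacts [⟨a, ha, hlt⟩, exists_height_lt ha (by omega)]
  obtain ⟨b, hb, hcb⟩ : ∃ b, τ ⊆ D.rays b ∧ c < D.height b := by
    obtain ⟨b, hb, hbS⟩ := hempty
    rcases h.of_mem hb hbS with hlt | ⟨rfl, hneg⟩
    exacts [⟨b, hb, hlt⟩, exists_lt_height hb (by omega)]
  obtain ⟨u, hu, hsum⟩ := exists_height_sub_eq_sum_pos_mul ha hb hac hcb
  exact hardLefschetz_of_hodgeRiemann_insert hj hu (fun s _ => hsum s) fun r hr =>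
    hHR S c r hr (h.isHodgeAdmissible_insert hj hr)

/-- If the cut is not direct, a maximal cone at height `c` obstructs; it does not contribute to the
form at its own height, so it may be moved to the other side of the cut. -/
theorem hardLefschetz_of_isAdmissible (hj : 2 * j + τ.card < D.dim) (h : D.IsAdmissible τ S c j)
    (hHR : ∀ S c, ∀ r ∉ τ, D.IsHodgeAdmissible (insert r τ) S c j →
      D.HodgeRiemann (insert r τ) S c j) : D.HardLefschetz τ S c j := by
  rcases h with hfull | h
  · exact hardLefschetz_of_forall_mem hj hfull fun c r hr =>
      hHR S c r hr (isHodgeAdmissible_insert_of_forall_mem hj hfull hr)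
  by_cases hlevel : ∀ s, τ ⊆ D.rays s → D.height s ≠ c
  · exact hardLefschetz_of_isDirectCut hj (h.isStrictCut hlevel).isCut hHR
  push Not at hlevel
  obtain ⟨s₀, hs₀, rfl⟩ := hlevel
  have hcard := card_negRays_add_card_posRays hs₀
  by_cases hS : s₀ ∈ S
  · have hstep := h.isVertexStep_erase hs₀ hS
    have hneg : j < (D.negRays τ s₀).card :=
      ((h.of_mem hs₀ hS).resolve_left (lt_irrefl _)).2
    by_cases hdirect : j + 1 < (D.negRays τ s₀).card ∨ 2 * j + 1 + τ.card = D.dim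
    · exact hardLefschetz_of_isDirectCut hj (hstep.isCut_right (by omega)) hHR
    · exact (hstep.hardLefschetz_iff hj (by omega) hneg).2
        (hardLefschetz_of_isDirectCut hj (hstep.isCut_left (by omega)) hHR)
  · have hstep := h.isVertexStep_insert hs₀ hS
    have hpos : j ≤ (D.posRays τ s₀).card :=
      ((h.of_notMem hs₀ hS).resolve_left (lt_irrefl _)).2
    by_cases hdirect : j < (D.posRays τ s₀).card ∨
        2 * j + 1 + τ.card = D.dim ∧ 1 ≤ (D.posRays τ s₀).card
    · exact hardLefschetz_of_isDirectCut hj (hstep.isCut_left (by omega)) hHR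
    · exact (hstep.hardLefschetz_iff hj hpos (by omega)).1
        (hardLefschetz_of_isDirectCut hj (hstep.isCut_right (by omega)) hHR)

end Admissible

end LocalizedFan

theorem pos_iff_even_and_neg_iff_odd_of_neg_one_pow_mul_pos {p : ℕ} {x : ℝ}
    (h : 0 < (-1 : ℝ) ^ p * x) : (0 < x ↔ Even p) ∧ (x < 0 ↔ Odd p) := by
  rcases Nat.even_or_odd p with hp | hp
  · rw [hp.neg_one_pow, one_mul] at h
    simp [h, h.not_gt, hp]
  · rw [hp.neg_one_pow, neg_one_mul, neg_pos] at h
    simp [h, h.not_gt, hp]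

namespace LocalizedFan

variable {V R : Type*} [Fintype V] [Fintype R] (D : LocalizedFan V R)

section IndexTransition

/-- The positive index of the cut form of degree `j` at level `c`. -/
noncomputable def posIndex (τ : Finset R) (S : Finset V) (j : ℕ) (c : ℝ) : ℕ :=
  posIndexOn (D.cutForm τ S j c) (D.filtration j)

/-- The negative index of the cut form of degree `j` at level `c`. -/
noncomputable def negIndex (τ : Finset R) (S : Finset V) (j : ℕ) (c : ℝ) : ℕ :=
  posIndexOn (-D.cutForm τ S j c) (D.filtration j)

/-- The hard Lefschetz property for all admissible cuts of the star of the face `τ`. -/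
def StarHardLefschetz (τ : Finset R) : Prop :=
  ∀ S c j, 2 * j + τ.card < D.dim → D.IsAdmissible τ S c j → D.HardLefschetz τ S c j

variable {D} {τ : Finset R} {S S' : Finset V} {c c' a : ℝ} {j : ℕ} {s₀ : V}

theorem IsAdmissible.exists_isStrictCut (h : D.IsAdmissible τ S c j) :
    ∃ c', D.IsStrictCut τ S c' :=
  h.elim exists_isStrictCut_of_forall_mem IsCut.exists_isStrictCut

theorem IsAdmissible.of_mem_uIcc (h : D.IsAdmissible τ S c j) (h' : D.IsStrictCut τ S c')
    (ha : a ∈ Set.uIcc c c') : D.IsAdmissible τ S a j :=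
  h.imp_right fun h => h.of_mem_uIcc h' ha

theorem IsStrictCut.isAdmissible (h : D.IsStrictCut τ S c) : D.IsAdmissible τ S c j :=
  Or.inr h.isCut

theorem IsVertexStep.isAdmissible_right (h : D.IsVertexStep τ S S' s₀)
    (hj : j < (D.negRays τ s₀).card) : D.IsAdmissible τ S' (D.height s₀) j :=
  Or.inr (h.isCut_right hj)

theorem IsVertexStep.isAdmissible_left (h : D.IsVertexStep τ S S' s₀)
    (hj : j ≤ (D.posRays τ s₀).card) : D.IsAdmissible τ S (D.height s₀) j :=
  Or.inr (h.isCut_left hj)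

theorem IsVertexStep.neg_one_pow_mul_neg_pos (h : D.IsVertexStep τ S S' s₀)
    (hj : 2 * j + τ.card ≤ D.dim) (ha : D.height s₀ < a) :
    0 < (-1 : ℝ) ^ ((D.posRays τ s₀).card + 1) * -(D.weight s₀ * D.coordProd τ s₀ *
      (D.height s₀ - a) ^ (D.dim - τ.card - 2 * j)) := by
  have hcard := card_negRays_add_card_posRays h.subset_rays
  obtain ⟨m, hm⟩ : ∃ m, D.dim - τ.card - 2 * j = m := ⟨_, rfl⟩
  have hparity : (-1 : ℝ) ^ ((D.posRays τ s₀).card + m) = (-1) ^ (D.negRays τ s₀).card := by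
    have : (D.posRays τ s₀).card + m + 2 * j =
        (D.negRays τ s₀).card + 2 * (D.posRays τ s₀).card := by omega
    exact neg_one_pow_congr (by grind)
  calc 0 < (-1 : ℝ) ^ (D.negRays τ s₀).card * (D.weight s₀ * D.coordProd τ s₀) *
        (a - D.height s₀) ^ m := mul_pos
          (neg_one_pow_mul_weight_mul_coordProd_pos h.subset_rays) (pow_pos (sub_pos.2 ha) m)
    _ = _ := by rw [← hparity, hm, ← neg_sub a, neg_pow (a - D.height s₀)]; ring

namespace StarHardLefschetz

variable (H : D.StarHardLefschetz τ)
include H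

theorem radicalOn_cutForm (hj : 2 * j + τ.card ≤ D.dim)
    (hadm : 2 * j + τ.card < D.dim → D.IsAdmissible τ S c j) :
    radicalOn (D.cutForm τ S j c) (D.filtration j) = D.pairingKernel τ S j := by
  refine le_antisymm ?_ (pairingKernel_le_radicalOn hj c)
  rcases hj.lt_or_eq with hlt | heq
  exacts [H S c j hlt (hadm hlt), hardLefschetz_of_two_mul_add_card_eq heq]

theorem index_eq (hj : 2 * j + τ.card ≤ D.dim)
    (hadm : 2 * j + τ.card < D.dim → D.IsAdmissible τ S c j) (hc' : D.IsStrictCut τ S c') :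
    D.posIndex τ S j c = D.posIndex τ S j c' ∧ D.negIndex τ S j c = D.negIndex τ S j c' := by
  have hrad : ∀ a ∈ Set.uIcc c c',
      radicalOn (D.cutForm τ S j a) (D.filtration j) = D.pairingKernel τ S j :=
    fun a ha => H.radicalOn_cutForm hj fun hlt => (hadm hlt).of_mem_uIcc hc' ha
  constructor
  · exact posIndexOn_eq_of_isPreconnected (continuous_cutForm τ S j) (fun _ => cutForm_isSymm)
      isPreconnected_uIcc hrad Set.left_mem_uIcc Set.right_mem_uIcc
  · exact posIndexOn_eq_of_isPreconnected (B := fun a => -D.cutForm τ S j a)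
      (continuous_cutForm τ S j).neg (fun _ => cutForm_isSymm.neg) isPreconnected_uIcc
      (fun a ha => (radicalOn_neg _ _).trans (hrad a ha)) Set.left_mem_uIcc Set.right_mem_uIcc

/-- The product of the descending coordinates at `s₀` is in the radical of the form below `s₀`, and
the rank one term of `s₀` makes it non-isotropic. -/
theorem index_of_card_negRays_le (h : D.IsVertexStep τ S S' s₀) (hc : D.IsStrictCut τ S' c)
    (hc' : D.IsStrictCut τ S c') (hj : 2 * j + τ.card ≤ D.dim)
    (hneg : (D.negRays τ s₀).card ≤ j) :
    D.posIndex τ S' j c = D.posIndex τ S j c' +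
        (if Even (D.negRays τ s₀).card then 1 else 0) ∧
      D.negIndex τ S' j c = D.negIndex τ S j c' +
        (if Odd (D.negRays τ s₀).card then 1 else 0) := by
  have hcard := card_negRays_add_card_posRays h.subset_rays
  have hpos : j ≤ (D.posRays τ s₀).card := by omega
  have hrad := H.radicalOn_cutForm hj fun _ => h.isAdmissible_left hpos
  have hjump := eventually_posIndexOn_add_linMulLin (φ := LinearMap.proj s₀)
    (continuous_cutForm τ S j) (fun _ => cutForm_isSymm)
    (h.coordProd_negRays_mem_radicalOn hneg (D.height s₀))
    (coordProd_ne_zero_iff.2 negRays_subset_rays)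
  obtain ⟨a, hjump, hca, ha⟩ := ((hjump.filter_mono nhdsWithin_le_nhds).and
    (Ioo_mem_nhdsLT (h.lt_height hc))).exists
  have ha' : D.IsStrictCut τ S' a := h.isStrictCut_right hc hca.le ha
  have hsign : 0 < (-1 : ℝ) ^ (D.negRays τ s₀).card * (D.weight s₀ * D.coordProd τ s₀ *
      (D.height s₀ - a) ^ (D.dim - τ.card - 2 * j)) := by
    rw [← mul_assoc]
    exact mul_pos (neg_one_pow_mul_weight_mul_coordProd_pos h.subset_rays)
      (pow_pos (sub_pos.2 ha) _)
  have hindex := hjump (h.coordProd_negRays_mem_radicalOn hneg a) _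
    (right_ne_zero_of_mul hsign.ne') _ (h.cutForm_eq j a) (by
      rw [H.radicalOn_cutForm hj fun _ => ha'.isAdmissible, hrad, h.pairingKernel_right hpos])
  obtain ⟨heven, hodd⟩ := pos_iff_even_and_neg_iff_odd_of_neg_one_pow_mul_pos hsign
  have hright := H.index_eq hj (fun _ => hc.isAdmissible) ha'
  have hleft := H.index_eq hj (fun _ => h.isAdmissible_left hpos) hc'
  simp only [heven, hodd] at hindex
  rw [hright.1, hright.2, ← hleft.1, ← hleft.2]
  exact hindex

theorem index_of_card_posRays_lt (h : D.IsVertexStep τ S S' s₀) (hc : D.IsStrictCut τ S' c)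
    (hc' : D.IsStrictCut τ S c') (hj : 2 * j + τ.card ≤ D.dim)
    (hpos : (D.posRays τ s₀).card < j) :
    D.posIndex τ S j c' = D.posIndex τ S' j c +
        (if Odd (D.posRays τ s₀).card then 1 else 0) ∧
      D.negIndex τ S j c' = D.negIndex τ S' j c +
        (if Even (D.posRays τ s₀).card then 1 else 0) := by
  have hcard := card_negRays_add_card_posRays h.subset_rays
  have hneg : j < (D.negRays τ s₀).card := by omega
  have hrad := H.radicalOn_cutForm hj fun _ => h.isAdmissible_right hneg
  have hmem : ∀ a, D.coordProd (D.posRays τ s₀) ∈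
      radicalOn (D.cutForm τ S' j a) (D.filtration j) := fun a =>
    pairingKernel_le_radicalOn hj a (h.coordProd_posRays_mem_pairingKernel hpos (by omega))
  have hjump := eventually_posIndexOn_add_linMulLin (φ := LinearMap.proj s₀)
    (continuous_cutForm τ S' j) (fun _ => cutForm_isSymm) (hmem (D.height s₀))
    (coordProd_ne_zero_iff.2 posRays_subset_rays)
  obtain ⟨a, hjump, ha, hac'⟩ := ((hjump.filter_mono nhdsWithin_le_nhds).and
    (Ioo_mem_nhdsGT (h.height_lt hc'))).exists
  have ha' : D.IsStrictCut τ S a := h.isStrictCut_left hc' hac'.le ha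
  have hsign := h.neg_one_pow_mul_neg_pos hj ha
  have hindex := hjump (hmem a) _ (right_ne_zero_of_mul hsign.ne') (D.cutForm τ S j a)
    (by rw [h.cutForm_eq j a]; module) (by
      rw [H.radicalOn_cutForm hj fun _ => ha'.isAdmissible, hrad, h.pairingKernel_left hneg])
  obtain ⟨heven, hodd⟩ := pos_iff_even_and_neg_iff_odd_of_neg_one_pow_mul_pos hsign
  have hright := H.index_eq hj (fun _ => h.isAdmissible_right hneg) hc
  have hleft := H.index_eq hj (fun _ => hc'.isAdmissible) ha'
  simp only [heven, hodd, Nat.even_add_one, Nat.odd_add_one, Nat.not_even_iff_odd,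
    Nat.not_odd_iff_even] at hindex
  rw [hleft.1, hleft.2, ← hright.1, ← hright.2]
  exact hindex

theorem index_of_lt_card_negRays (h : D.IsVertexStep τ S S' s₀) (hc : D.IsStrictCut τ S' c)
    (hc' : D.IsStrictCut τ S c') (hneg : j < (D.negRays τ s₀).card)
    (hpos : j ≤ (D.posRays τ s₀).card) :
    D.posIndex τ S' j c = D.posIndex τ S j c' ∧ D.negIndex τ S' j c = D.negIndex τ S j c' := by
  have hcard := card_negRays_add_card_posRays h.subset_rays
  have hright := H.index_eq (by omega) (fun _ => h.isAdmissible_right hneg) hc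
  have hleft := H.index_eq (by omega) (fun _ => h.isAdmissible_left hpos) hc'
  rw [← hright.1, ← hright.2, ← hleft.1, ← hleft.2, posIndex, negIndex,
    h.cutForm_height_eq (by omega)]
  exact ⟨rfl, rfl⟩

theorem index_add_ite (h : D.IsVertexStep τ S S' s₀) (hc : D.IsStrictCut τ S' c)
    (hc' : D.IsStrictCut τ S c') (hj : 2 * j + τ.card ≤ D.dim) :
    D.posIndex τ S' j c +
        (if (D.posRays τ s₀).card < j ∧ Odd (D.posRays τ s₀).card then 1 else 0) =
      D.posIndex τ S j c' +
        (if (D.negRays τ s₀).card ≤ j ∧ Even (D.negRays τ s₀).card then 1 else 0) ∧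
    D.negIndex τ S' j c +
        (if (D.posRays τ s₀).card < j ∧ Even (D.posRays τ s₀).card then 1 else 0) =
      D.negIndex τ S j c' +
        (if (D.negRays τ s₀).card ≤ j ∧ Odd (D.negRays τ s₀).card then 1 else 0) := by
  have hcard := card_negRays_add_card_posRays h.subset_rays
  rcases le_or_gt (D.negRays τ s₀).card j with hneg | hneg
  · have hpos : ¬ (D.posRays τ s₀).card < j := by omega
    simpa [hneg, hpos] using H.index_of_card_negRays_le h hc hc' hj hneg
  rcases lt_or_ge (D.posRays τ s₀).card j with hpos | hpos
  · obtain ⟨hp, hn⟩ := H.index_of_card_posRays_lt h hc hc' hj hpos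
    simp [hneg.not_ge, hpos, hp, hn]
  · simpa [hneg.not_ge, hpos.not_gt] using H.index_of_lt_card_negRays h hc hc' hneg hpos

end StarHardLefschetz

end IndexTransition

end LocalizedFan

namespace LocalizedFan

variable {V R : Type*} [Fintype V] [Fintype R] (D : LocalizedFan V R)

section HodgeRiemannIndices

/-- The index relations equivalent, given hard Lefschetz, to the Hodge–Riemann relations: the part
of the form of degree `j + 1` orthogonal to the image of degree `j` has sign `(-1)^(j + 1)`. -/
structure HasHodgeRiemannIndices (τ : Finset R) (S : Finset V) (c : ℝ) : Prop where
  posIndex_succ : ∀ {j}, 2 * (j + 1) + τ.card ≤ D.dim → Even j →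
    D.posIndex τ S (j + 1) c = D.posIndex τ S j c
  negIndex_succ : ∀ {j}, 2 * (j + 1) + τ.card ≤ D.dim → Odd j →
    D.negIndex τ S (j + 1) c = D.negIndex τ S j c
  negIndex_zero : D.negIndex τ S 0 c = 0

variable {D} {τ : Finset R} {S S' : Finset V} {c c' : ℝ} {j : ℕ} {s₀ : V} {f g : V → ℝ}

theorem hasHodgeRiemannIndices_of_forall_notMem (h : ∀ s, τ ⊆ D.rays s → s ∉ S) :
    D.HasHodgeRiemannIndices τ S c := by
  have hzero : ∀ j, D.cutForm τ S j c = 0 := fun j => LinearMap.ext₂ fun f g => by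
    rw [cutForm_apply]
    exact starForm_eq_zero fun s hs hτ => absurd hs (h s hτ)
  have hneg : ∀ j, -D.cutForm τ S j c = 0 := fun j =>
    LinearMap.ext₂ fun f g => by simp [hzero]
  constructor <;> simp only [posIndex, negIndex, hneg] <;> simp [hzero, posIndexOn_zero]

theorem IsStrictCut.isCut_height_of_forall_le (h : D.IsStrictCut τ S c) (hτ₀ : τ ⊆ D.rays s₀)
    (hs₀ : s₀ ∈ S) (hmin : ∀ s ∈ S, τ ⊆ D.rays s → D.height s₀ ≤ D.height s) :
    D.IsCut τ S (D.height s₀) (fun _ => True) (fun _ => False) where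
  of_mem hτ hs := (hmin _ hs hτ).lt_or_eq.imp_right fun e => ⟨e.symm, trivial⟩
  of_notMem hτ hs := Or.inl ((h.height_lt hτ hs).trans (h.lt_height hτ₀ hs₀))

namespace StarHardLefschetz

variable (H : D.StarHardLefschetz τ)
include H

theorem hasHodgeRiemannIndices_of_isVertexStep (h : D.IsVertexStep τ S S' s₀)
    (hc : D.IsStrictCut τ S' c) (hc' : D.IsStrictCut τ S c')
    (hS : D.HasHodgeRiemannIndices τ S c') : D.HasHodgeRiemannIndices τ S' c := by
  have hcard := card_negRays_add_card_posRays h.subset_rays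
  have htransition := fun j hj => H.index_add_ite h hc hc' (j := j) hj
  generalize (D.posRays τ s₀).card = q at *
  generalize (D.negRays τ s₀).card = p at *
  refine ⟨fun {j} hj heven => ?_, fun {j} hj hodd => ?_, ?_⟩
  · have hq : (q < j + 1 ∧ Odd q) ↔ (q < j ∧ Odd q) := by grind
    have hp : (p ≤ j + 1 ∧ Even p) ↔ (p ≤ j ∧ Even p) := by grind
    have hsucc := (htransition (j + 1) hj).1
    have hself := (htransition j (by omega)).1
    simp only [hq, hp, hS.posIndex_succ hj heven] at hsucc
    omega
  · have hq : (q < j + 1 ∧ Even q) ↔ (q < j ∧ Even q) := by grind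
    have hp : (p ≤ j + 1 ∧ Odd p) ↔ (p ≤ j ∧ Odd p) := by grind
    have hsucc := (htransition (j + 1) hj).2
    have hself := (htransition j (by omega)).2
    simp only [hq, hp, hS.negIndex_succ hj hodd] at hsucc
    omega
  · have hp : ¬ (p ≤ 0 ∧ Odd p) := by grind
    simpa only [hp, hS.negIndex_zero, Nat.not_lt_zero, false_and, if_false, add_zero] using
      (htransition 0 (by omega)).2

/-- Sweep the level upwards, removing the lowest maximal cone of `S` at each step. -/
theorem hasHodgeRiemannIndices_of_isStrictCut :
    D.IsStrictCut τ S c → D.HasHodgeRiemannIndices τ S c := by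
  induction S using Finset.strongInduction generalizing c with
  | H S ih =>
    intro hc
    by_cases hempty : ∀ s, τ ⊆ D.rays s → s ∉ S
    · exact hasHodgeRiemannIndices_of_forall_notMem hempty
    push Not at hempty
    obtain ⟨s, hτs, hs⟩ := hempty
    obtain ⟨s₀, hs₀, hmin⟩ := Finset.exists_min_image (S.filter fun s => τ ⊆ D.rays s) D.height
      ⟨s, Finset.mem_filter.2 ⟨hs, hτs⟩⟩
    obtain ⟨hs₀S, hτ₀⟩ := Finset.mem_filter.1 hs₀
    have hcut := hc.isCut_height_of_forall_le hτ₀ hs₀S fun s hs hτ =>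
      hmin s (Finset.mem_filter.2 ⟨hs, hτ⟩)
    have hstep := hcut.isVertexStep_erase hτ₀ hs₀S
    obtain ⟨c', hlt, hc'⟩ := D.exists_gt_forall_lt_height (D.height s₀)
    have hstrict : D.IsStrictCut τ (S.erase s₀) c' :=
      ⟨fun hτ hs => hc' _ ((hstep.mem_left_iff hτ).1 hs),
        fun hτ hs => (not_lt.1 (mt (hstep.mem_left_iff hτ).2 hs)).trans_lt hlt⟩
    exact H.hasHodgeRiemannIndices_of_isVertexStep hstep hc hstrict
      (ih _ (Finset.erase_ssubset hs₀S) hstrict)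

theorem negIndex_zero (hτ : τ.card ≤ D.dim) (hadm : D.IsAdmissible τ S c 0) :
    D.negIndex τ S 0 c = 0 := by
  obtain ⟨c', hc'⟩ := hadm.exists_isStrictCut
  rw [(H.index_eq (by omega) (fun _ => hadm) hc').2]
  exact (H.hasHodgeRiemannIndices_of_isStrictCut hc').negIndex_zero

theorem index_succ_eq (h : D.IsHodgeAdmissible τ S c (j + 1)) :
    (Even j → D.posIndex τ S (j + 1) c = D.posIndex τ S j c) ∧
      (Odd j → D.negIndex τ S (j + 1) c = D.negIndex τ S j c) := by
  have hj := h.two_mul_add_card_le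
  have hadm := h.isAdmissible_of_lt j.lt_succ_self
  obtain ⟨c', hc'⟩ := hadm.exists_isStrictCut
  have hindices := H.hasHodgeRiemannIndices_of_isStrictCut hc'
  obtain ⟨hpos, hneg⟩ := H.index_eq (by omega) (fun _ => hadm) hc'
  obtain ⟨hpos_succ, hneg_succ⟩ := H.index_eq hj h.isAdmissible hc'
  rw [hpos, hneg, hpos_succ, hneg_succ]
  exact ⟨hindices.posIndex_succ hj, hindices.negIndex_succ hj⟩

end StarHardLefschetz

theorem cutForm_succ_relHeight_mul (hj : 2 * (j + 1) + τ.card ≤ D.dim) :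
    D.cutForm τ S (j + 1) c (D.relHeight c * f) (D.relHeight c * g) = D.cutForm τ S j c f g := by
  rw [cutForm_apply, cutForm_apply,
    show D.dim - τ.card - 2 * j = D.dim - τ.card - 2 * (j + 1) + 2 by omega]
  refine starForm_congr fun s _ => ?_
  simp only [Pi.mul_apply, Pi.pow_apply]
  ring

namespace StarHardLefschetz

theorem hodgeRiemann_zero (H : D.StarHardLefschetz τ) (hτ : τ.card < D.dim)
    (hadm : D.IsAdmissible τ S c 0) : D.HodgeRiemann τ S c 0 := by
  intro f hf _
  rw [pow_zero, one_mul, ← H.radicalOn_cutForm (by omega) fun _ => hadm]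
  refine nonneg_and_mem_radicalOn_of_orthogonal_image (E' := V → ℝ) (B' := 0) (F' := ⊥)
    cutForm_isSymm 0 (by simp) (by simp) ?_ hf (by simp)
  exact (H.negIndex_zero hτ.le hadm).trans_le (Nat.zero_le _)

theorem hodgeRiemann_succ (H : D.StarHardLefschetz τ) (h : D.IsHodgeAdmissible τ S c (j + 1)) :
    D.HodgeRiemann τ S c (j + 1) := by
  intro f hf hprim
  have hj := h.two_mul_add_card_le
  have horth : ∀ g ∈ D.filtration j, D.cutForm τ S (j + 1) c f (D.relHeight c * g) = 0 :=
    hprim j rfl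
  have hmem : ∀ g ∈ D.filtration j, LinearMap.mulLeft ℝ (D.relHeight c) g ∈ D.filtration (j + 1) :=
    fun g hg => add_comm j 1 ▸ mul_mem_filtration (relHeight_mem_filtration c) hg
  rw [← H.radicalOn_cutForm hj h.isAdmissible]
  rcases Nat.even_or_odd j with heven | hodd
  · have hneg := nonneg_and_mem_radicalOn_of_orthogonal_image
      (B := -D.cutForm τ S (j + 1) c) (B' := -D.cutForm τ S j c) cutForm_isSymm.neg
      (LinearMap.mulLeft ℝ (D.relHeight c)) hmem
      (fun g _ => by simp [cutForm_succ_relHeight_mul hj])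
      (by
        rw [neg_neg (D.cutForm τ S (j + 1) c), neg_neg (D.cutForm τ S j c)]
        exact ((H.index_succ_eq h).1 heven).le) hf
      (fun g hg => by simp [horth g hg])
    simpa [radicalOn_neg, heven.add_one.neg_one_pow] using hneg
  · have hpos := nonneg_and_mem_radicalOn_of_orthogonal_image (B' := D.cutForm τ S j c)
      cutForm_isSymm (LinearMap.mulLeft ℝ (D.relHeight c)) hmem
      (fun g _ => by simp [cutForm_succ_relHeight_mul hj])
      ((H.index_succ_eq h).2 hodd).le hf horth
    simpa [hodd.add_one.neg_one_pow] using hpos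

end StarHardLefschetz

theorem starWeight_nonneg_of_card_eq (hτ : τ.card = D.dim) (s : V) : 0 ≤ D.starWeight τ S s := by
  by_cases hs : τ ⊆ D.rays s
  · have hrays : τ = D.rays s := Finset.eq_of_subset_of_card_le hs (by rw [D.card_rays, hτ])
    rw [starWeight, coordProd, Finset.prod_apply, hrays]
    split_ifs
    exacts [(D.weight_mul_prod_pos s).le, le_rfl]
  · rw [starWeight_eq_zero hs]

theorem hodgeRiemann_of_card_eq (hτ : τ.card = D.dim) : D.HodgeRiemann τ S c 0 := by
  intro f hf _
  have hcut : D.cutForm τ S 0 c f f = ∑ s, D.starWeight τ S s * f s * f s := by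
    rw [cutForm_apply, hτ, Nat.sub_self, Nat.zero_sub, pow_zero, one_mul, weightedForm_apply]
  have hterm : ∀ s ∈ Finset.univ, 0 ≤ D.starWeight τ S s * f s * f s := fun s _ => by
    rw [mul_assoc]
    exact mul_nonneg (starWeight_nonneg_of_card_eq hτ s) (mul_self_nonneg _)
  rw [hcut, pow_zero, one_mul]
  refine ⟨Finset.sum_nonneg hterm, fun hzero => mem_pairingKernel.2 ⟨hf, fun g _ => ?_⟩⟩
  rw [Finset.sum_eq_zero_iff_of_nonneg hterm] at hzero
  rw [weightedForm_apply]
  refine Finset.sum_eq_zero fun s hs => ?_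
  rcases mul_eq_zero.1 (hzero s hs) with h | h
  · rw [mul_right_comm, h, zero_mul]
  · rw [h, mul_zero]

theorem hodgeRiemann_of_isHodgeAdmissible (h : D.IsHodgeAdmissible τ S c j) :
    D.HodgeRiemann τ S c j := by
  obtain ⟨n, hn⟩ : ∃ n, τ.card + n = D.dim :=
    ⟨D.dim - τ.card, by have := h.two_mul_add_card_le; omega⟩
  induction n generalizing τ S c j with
  | zero =>
    obtain rfl : j = 0 := by
      have := h.two_mul_add_card_le
      omega
    exact hodgeRiemann_of_card_eq hn
  | succ n ih =>
    have H : D.StarHardLefschetz τ := fun S c j hj hadm =>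
      hardLefschetz_of_isAdmissible hj hadm fun S c r hr hadm' =>
        ih hadm' (by rw [Finset.card_insert_of_notMem hr]; omega)
    cases j with
    | zero => exact H.hodgeRiemann_zero (by omega) (h.isAdmissible (by omega))
    | succ j => exact H.hodgeRiemann_succ h

theorem weightedForm_eq_zero_of_height_pow_mul (hj : 2 * j < D.dim) (hf : f ∈ D.filtration j)
    (h : ∀ g ∈ D.filtration j,
      weightedForm D.weight f (D.height ^ (D.dim - 2 * j) * g) = 0) :
    ∀ g ∈ D.filtration (D.dim - j), weightedForm D.weight f g = 0 := by
  have hLef : D.HardLefschetz ∅ Finset.univ 0 j :=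
    hardLefschetz_of_isAdmissible (by simpa using hj) (Or.inl fun s _ => Finset.mem_univ s)
      fun S c r _ => hodgeRiemann_of_isHodgeAdmissible
  have hweight : D.starWeight ∅ Finset.univ = D.weight := by
    ext s
    simp [starWeight, coordProd]
  have hheight : D.relHeight 0 = D.height := by
    ext s
    simp [relHeight]
  have hker := hLef (mem_radicalOn.2 ⟨hf, fun g hg => by
    rw [cutForm_isSymm.eq, cutForm_apply, starForm, hweight, hheight]
    exact h g hg⟩)
  intro g hg
  rw [(weightedForm_isSymm _).eq, ← hweight]
  exact (mem_pairingKernel.1 hker).2 g hg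

end HodgeRiemannIndices

end LocalizedFan


section Generic

variable {E : Type*} [TopologicalSpace E] [AddCommGroup E] [Module ℝ E] [ContinuousAdd E]
  [ContinuousSMul ℝ E]

theorem eventually_add_smul_mem {O : Set E} (hO : IsOpen O) {p : E} (hp : p ∈ O) (u : E) :
    ∀ᶠ t in nhds (0 : ℝ), p + t • u ∈ O := by
  have hcont : Continuous fun t : ℝ => p + t • u := by fun_prop
  exact hcont.continuousAt.eventually (by simpa using hO.mem_nhds hp)

theorem exists_mem_forall_dual_ne_zero {ι : Type*} [Finite ι] (φ : ι → Module.Dual ℝ E)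
    (hφ : ∀ i, φ i ≠ 0) {O : Set E} (hO : IsOpen O) (hne : O.Nonempty) :
    ∃ p ∈ O, ∀ i, φ i p ≠ 0 := by
  obtain ⟨u, hu⟩ := Module.Dual.exists_forall_ne_zero_of_forall_exists φ fun i => by
    by_contra! h
    exact hφ i (LinearMap.ext h)
  obtain ⟨p, hp⟩ := hne
  have mem_O : ∀ᶠ t in nhdsWithin (0 : ℝ) {0}ᶜ, p + t • u ∈ O :=
    (eventually_add_smul_mem hO hp u).filter_mono nhdsWithin_le_nhds
  have ne_zero : ∀ i, ∀ᶠ t in nhdsWithin (0 : ℝ) {0}ᶜ, φ i (p + t • u) ≠ 0 := by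
    intro i
    by_cases hpi : φ i p = 0
    · filter_upwards [self_mem_nhdsWithin] with t ht
      simpa [hpi, hu i] using ht
    · have hcont : Continuous fun t : ℝ => φ i (p + t • u) := by
        simp only [map_add, map_smul, smul_eq_mul]
        fun_prop
      exact (hcont.continuousAt.eventually_ne (by simpa using hpi)).filter_mono nhdsWithin_le_nhds
  obtain ⟨t, htO, htφ⟩ := (mem_O.and (Filter.eventually_all.2 ne_zero)).exists
  exact ⟨_, htO, htφ⟩

theorem dual_eq_of_eqOn_isOpen {φ ψ : Module.Dual ℝ E} {O : Set E} (hO : IsOpen O)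
    (hne : O.Nonempty) (h : Set.EqOn φ ψ O) : φ = ψ := by
  refine LinearMap.eqLocus_eq_top.1 (Submodule.eq_top_of_nonempty_interior' _ ?_)
  exact hne.mono (interior_maximal h hO)

end Generic

/-- A complete simplicial fan in `ℝ^d` with maximal cones `V` and rays `R`. The functional
`coord s r` is the coordinate along `r` in the basis of `ℝ^d` formed by the generators of `s`,
extended by zero to the rays outside `s`. That two cones meet along a common face is expressed by
saying that a common point has the same coordinates in both. -/
structure CompleteSimplicialFan (d : ℕ) (V R : Type*) [Fintype V] [Fintype R] where
  generator : R → Fin d → ℝ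
  rays : V → Finset R
  rays_injective : Function.Injective rays
  card_rays : ∀ s, (rays s).card = d
  coord : V → R → Module.Dual ℝ (Fin d → ℝ)
  coord_of_notMem : ∀ {s r}, r ∉ rays s → coord s r = 0
  coord_generator : ∀ {s r'}, r' ∈ rays s → ∀ r, coord s r (generator r') = if r = r' then 1 else 0
  sum_coord_smul : ∀ s y, ∑ r, coord s r y • generator r = y
  exists_mem_rays : ∀ r, ∃ s, r ∈ rays s
  exists_coord_nonneg : ∀ y, ∃ s, ∀ r, 0 ≤ coord s r y
  coord_eq_of_nonneg : ∀ {s s' y}, (∀ r, 0 ≤ coord s r y) → (∀ r, 0 ≤ coord s' r y) →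
    ∀ r, coord s r y = coord s' r y

namespace CompleteSimplicialFan

variable {d : ℕ} {V R : Type*} [Fintype V] [Fintype R] (F : CompleteSimplicialFan d V R)

section Cone

/-- The maximal cone `s`. -/
def cone (s : V) : Set (Fin d → ℝ) := {y | ∀ r, 0 ≤ F.coord s r y}

/-- The interior of the maximal cone `s`. -/
def openCone (s : V) : Set (Fin d → ℝ) := {y | ∀ r ∈ F.rays s, 0 < F.coord s r y}

variable {F} {s : V} {r : R}

theorem coord_ne_zero (hr : r ∈ F.rays s) : F.coord s r ≠ 0 := fun h => by
  simpa [h] using F.coord_generator hr r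

theorem dual_apply_eq_sum (φ : Module.Dual ℝ (Fin d → ℝ)) (s : V) (y : Fin d → ℝ) :
    φ y = ∑ r, φ (F.generator r) * F.coord s r y := by
  conv_lhs => rw [← F.sum_coord_smul s y, map_sum]
  exact Finset.sum_congr rfl fun r _ => by rw [map_smul, smul_eq_mul, mul_comm]

theorem coord_sum_smul_generator {T : Finset R} (hT : T ⊆ F.rays s) (a : R → ℝ) (r : R) :
    F.coord s r (∑ q ∈ T, a q • F.generator q) = if r ∈ T then a r else 0 := by
  have term : ∀ q ∈ T, F.coord s r (a q • F.generator q) = if r = q then a q else 0 := by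
    intro q hq
    rw [map_smul, F.coord_generator (hT hq)]
    simp
  rw [map_sum, Finset.sum_congr rfl term, Finset.sum_ite_eq]

theorem coord_sum_generator {T : Finset R} (hT : T ⊆ F.rays s) (r : R) :
    F.coord s r (∑ q ∈ T, F.generator q) = if r ∈ T then 1 else 0 := by
  simpa using coord_sum_smul_generator hT (fun _ => 1) r

theorem isClosed_cone (s : V) : IsClosed (F.cone s) := by
  have cone_eq : F.cone s = ⋂ r, {y | 0 ≤ F.coord s r y} := by ext y; simp [cone]
  rw [cone_eq]
  exact isClosed_iInter fun r =>
    isClosed_le continuous_const (LinearMap.continuous_of_finiteDimensional _)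

theorem isOpen_openCone (s : V) : IsOpen (F.openCone s) := by
  have openCone_eq : F.openCone s = ⋂ r : F.rays s, {y | 0 < F.coord s r y} := by
    ext y; simp [openCone]
  rw [openCone_eq]
  exact isOpen_iInter_of_finite fun r =>
    isOpen_lt continuous_const (LinearMap.continuous_of_finiteDimensional _)

theorem openCone_nonempty (s : V) : (F.openCone s).Nonempty :=
  ⟨∑ q ∈ F.rays s, F.generator q, fun r hr => by simp [coord_sum_generator subset_rfl, hr]⟩

theorem openCone_subset_cone : F.openCone s ⊆ F.cone s := fun y hy r => by
  by_cases hr : r ∈ F.rays s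
  · exact (hy r hr).le
  · simp [F.coord_of_notMem hr]

theorem generator_mem_cone (hr : r ∈ F.rays s) : F.generator r ∈ F.cone s := fun q => by
  rw [F.coord_generator hr]
  split_ifs <;> simp

theorem generator_notMem_cone (hr : r ∉ F.rays s) : F.generator r ∉ F.cone s := by
  intro h
  obtain ⟨s', hs'⟩ := F.exists_mem_rays r
  have coord_eq := F.coord_eq_of_nonneg h (generator_mem_cone hs') r
  simp [F.coord_of_notMem hr, F.coord_generator hs'] at coord_eq

theorem smul_mem_cone {y : Fin d → ℝ} (hy : y ∈ F.cone s) {t : ℝ} (ht : 0 ≤ t) :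
    t • y ∈ F.cone s := fun r => by
  rw [map_smul]
  exact mul_nonneg ht (hy r)

theorem sum_generator_mem_cone {T : Finset R} (hT : T ⊆ F.rays s) :
    ∑ q ∈ T, F.generator q ∈ F.cone s := fun r => by
  rw [coord_sum_generator hT]
  split_ifs <;> simp

theorem exists_inter_openCone_nonempty {O : Set (Fin d → ℝ)} (hO : IsOpen O)
    (hne : O.Nonempty) : ∃ s, (O ∩ F.openCone s).Nonempty := by
  obtain ⟨p, hpO, hp⟩ := exists_mem_forall_dual_ne_zero
    (fun i : (s : V) × F.rays s => F.coord i.1 i.2) (fun i => coord_ne_zero i.2.2) hO hne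
  obtain ⟨s, hs⟩ := F.exists_coord_nonneg p
  exact ⟨s, p, hpO, fun r hr => lt_of_le_of_ne (hs r) (hp ⟨s, r, hr⟩).symm⟩

end Cone

section Walls

/-- The maximal cones `s` and `s'` share a wall; `r` and `r'` are the rays opposite to it. -/
structure Adjacent (s : V) (r : R) (s' : V) (r' : R) : Prop where
  mem : r ∈ F.rays s
  notMem : r' ∉ F.rays s
  rays_eq : F.rays s' = insert r' ((F.rays s).erase r)

variable {F} {s s' s'' : V} {r r' r'' : R}

theorem exists_adjacent_of_erase_subset (hne : s ≠ s') (hr : r ∈ F.rays s)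
    (hsub : (F.rays s).erase r ⊆ F.rays s') : ∃ r', F.Adjacent s r s' r' := by
  obtain ⟨r', hr', hr'e⟩ : ∃ r' ∈ F.rays s', r' ∉ (F.rays s).erase r :=
    Finset.exists_mem_notMem_of_card_lt_card <|
      (Finset.card_erase_lt_of_mem hr).trans_eq ((F.card_rays s).trans (F.card_rays s').symm)
  have rays_eq : F.rays s' = insert r' ((F.rays s).erase r) := by
    refine (Finset.eq_of_subset_of_card_le (Finset.insert_subset hr' hsub) ?_).symm
    rw [Finset.card_insert_of_notMem hr'e, Finset.card_erase_add_one hr, F.card_rays, F.card_rays]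
  refine ⟨r', hr, fun hr's => hne (F.rays_injective ?_), rays_eq⟩
  have : r' = r := by simpa [hr's] using hr'e
  rw [rays_eq, this, Finset.insert_erase hr]

namespace Adjacent

theorem erase_rays_eq (h : F.Adjacent s r s' r') :
    (F.rays s').erase r' = (F.rays s).erase r := by
  rw [h.rays_eq, Finset.erase_insert fun hr' => h.notMem (Finset.mem_of_mem_erase hr')]

theorem erase_subset (h : F.Adjacent s r s' r') : (F.rays s).erase r ⊆ F.rays s' :=
  h.erase_rays_eq ▸ Finset.erase_subset _ _

theorem mem_right (h : F.Adjacent s r s' r') : r' ∈ F.rays s' :=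
  h.rays_eq ▸ Finset.mem_insert_self _ _

theorem notMem_right (h : F.Adjacent s r s' r') : r ∉ F.rays s' := by
  have : r ≠ r' := fun hrr' => h.notMem (hrr' ▸ h.mem)
  simp [h.rays_eq, this]

theorem ne (h : F.Adjacent s r s' r') : s ≠ s' := fun hs => h.notMem (hs ▸ h.mem_right)

theorem symm (h : F.Adjacent s r s' r') : F.Adjacent s' r' s r where
  mem := h.mem_right
  notMem := h.notMem_right
  rays_eq := by rw [h.erase_rays_eq, Finset.insert_erase h.mem]

theorem coord_eq_of_coord_eq_zero (h : F.Adjacent s r s' r') {y : Fin d → ℝ}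
    (hy : F.coord s r y = 0) (q : R) : F.coord s q y = F.coord s' q y := by
  have y_eq : ∑ p ∈ (F.rays s).erase r, F.coord s p y • F.generator p = y := by
    conv_rhs => rw [← F.sum_coord_smul s y]
    refine Finset.sum_subset (Finset.subset_univ _) fun p _ hp => ?_
    rcases eq_or_ne p r with rfl | hpr
    · rw [hy, zero_smul]
    · simp [F.coord_of_notMem fun hps => hp (Finset.mem_erase.2 ⟨hpr, hps⟩)]
  rw [← y_eq, coord_sum_smul_generator (Finset.erase_subset _ _),
    coord_sum_smul_generator h.erase_subset]

theorem coord_eq_mul (h : F.Adjacent s r s' r') (y : Fin d → ℝ) :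
    F.coord s r y = F.coord s r (F.generator r') * F.coord s' r' y := by
  rw [dual_apply_eq_sum (F := F) (F.coord s r) s' y]
  refine Finset.sum_eq_single r' (fun q _ hq => ?_) (by simp)
  by_cases hqs : q ∈ F.rays s'
  · obtain ⟨hqr, hqs⟩ : q ≠ r ∧ q ∈ F.rays s := by simpa [h.rays_eq, hq] using hqs
    rw [F.coord_generator hqs, if_neg hqr.symm, zero_mul]
  · rw [F.coord_of_notMem hqs, LinearMap.zero_apply, mul_zero]

theorem coord_generator_ne_zero (h : F.Adjacent s r s' r') :
    F.coord s r (F.generator r') ≠ 0 := fun h0 => by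
  simpa [h0, F.coord_generator h.mem] using h.coord_eq_mul (F.generator r)

-- If the generator of `r'` were on the side of `s`, then moving from an interior point of the wall
-- towards it would lead into the interiors of both cones.
theorem coord_generator_neg (h : F.Adjacent s r s' r') : F.coord s r (F.generator r') < 0 := by
  refine lt_of_le_of_ne (not_lt.1 fun hpos => ?_) h.coord_generator_ne_zero
  set z := ∑ q ∈ (F.rays s).erase r, F.generator q with hz
  have coord_z := coord_sum_generator (F := F) ((F.rays s).erase_subset r)
  have mem_cone : ∀ᶠ t in nhdsWithin (0 : ℝ) (Set.Ioi 0), z + t • F.generator r' ∈ F.cone s := by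
    refine Filter.eventually_all.2 fun q => ?_
    by_cases hq : q ∈ (F.rays s).erase r
    · refine ((eventually_add_smul_mem (isOpen_lt continuous_const (F.coord s
        q).continuous_of_finiteDimensional) ?_ _).mono fun t ht => le_of_lt ht).filter_mono
        nhdsWithin_le_nhds
      simp [hz, coord_z, hq]
    · filter_upwards [self_mem_nhdsWithin] with t (ht : 0 < t)
      rw [map_add, map_smul, hz, coord_z, if_neg hq, zero_add]
      rcases eq_or_ne q r with rfl | hqr
      · exact mul_nonneg ht.le hpos.le
      · simp [F.coord_of_notMem fun hqs => hq (Finset.mem_erase.2 ⟨hqr, hqs⟩)]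
  obtain ⟨t, ht_mem, ht : 0 < t⟩ := (mem_cone.and self_mem_nhdsWithin).exists
  have mem_cone' : z + t • F.generator r' ∈ F.cone s' := fun q => by
    rw [map_add]
    exact add_nonneg (sum_generator_mem_cone h.erase_subset q)
      (smul_mem_cone (generator_mem_cone h.mem_right) ht.le q)
  have coord_eq := F.coord_eq_of_nonneg ht_mem mem_cone' r
  rw [F.coord_of_notMem h.notMem_right, map_add, map_smul, hz, coord_z] at coord_eq
  simp [ht.ne', hpos.ne'] at coord_eq

theorem unique (h : F.Adjacent s r s' r') (h' : F.Adjacent s r s'' r'') : s' = s'' ∧ r' = r'' := by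
  suffices s' = s'' by
    refine ⟨this, ?_⟩
    have hr' : r' ∈ F.rays s'' := this ▸ h.mem_right
    simpa [h'.rays_eq, h.notMem] using hr'
  by_contra hne
  have h'' : F.Adjacent s' r' s'' r'' := by
    obtain ⟨p, hp⟩ := exists_adjacent_of_erase_subset hne h.mem_right
      (h.erase_rays_eq ▸ h'.erase_subset)
    have hr'' : r'' ∈ insert p ((F.rays s).erase r) := h.erase_rays_eq ▸ hp.rays_eq ▸ h'.mem_right
    rwa [show r'' = p by simpa [h'.notMem] using hr'']
  have := h.coord_eq_mul (F.generator r'')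
  nlinarith [h.coord_generator_neg, h'.coord_generator_neg, h''.coord_generator_neg]

end Adjacent

theorem exists_ne_erase_subset (hr : r ∈ F.rays s) :
    ∃ s', s ≠ s' ∧ (F.rays s).erase r ⊆ F.rays s' := by
  set z := ∑ q ∈ (F.rays s).erase r, F.generator q with hz
  have coord_z := coord_sum_generator (F := F) ((F.rays s).erase_subset r)
  set U : Set (Fin d → ℝ) := ⋃ s' : {s' // s' ≠ s}, F.cone s'
  have isClosed_U : IsClosed U := isClosed_iUnion_of_finite fun s' => isClosed_cone _
  suffices z ∈ U by
    obtain ⟨⟨s', hs'⟩, hzs'⟩ := Set.mem_iUnion.1 this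
    refine ⟨s', hs'.symm, fun q hq => ?_⟩
    have coord_eq := F.coord_eq_of_nonneg (sum_generator_mem_cone (Finset.erase_subset r _)) hzs' q
    by_contra hqs'
    rw [F.coord_of_notMem hqs', coord_z, if_pos hq] at coord_eq
    simp at coord_eq
  by_contra hzU
  have notMem_U : ∀ᶠ t in nhdsWithin (0 : ℝ) (Set.Ioi 0), z + t • -F.generator r ∈ Uᶜ :=
    (eventually_add_smul_mem isClosed_U.isOpen_compl hzU _).filter_mono nhdsWithin_le_nhds
  obtain ⟨t, htU, ht : 0 < t⟩ := (notMem_U.and self_mem_nhdsWithin).exists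
  obtain ⟨s', hs'⟩ := F.exists_coord_nonneg (z + t • -F.generator r)
  rcases eq_or_ne s' s with rfl | hne
  · have := hs' r
    rw [map_add, map_smul, map_neg, hz, coord_z, F.coord_generator hr] at this
    simp at this
    linarith
  · exact htU (Set.mem_iUnion.2 ⟨⟨s', hne⟩, hs'⟩)

theorem exists_adjacent (hr : r ∈ F.rays s) : ∃ s' r', F.Adjacent s r s' r' := by
  obtain ⟨s', hne, hsub⟩ := exists_ne_erase_subset hr
  exact ⟨s', exists_adjacent_of_erase_subset hne hr hsub⟩

end Walls

section Convexity

/-- The linear function that agrees with `ℓ` on the generators of the maximal cone `s`. -/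
noncomputable def linearPiece (ℓ : (Fin d → ℝ) → ℝ) (s : V) : Module.Dual ℝ (Fin d → ℝ) :=
  ∑ r, ℓ (F.generator r) • F.coord s r

/-- `ℓ` is convex, and linear on every cone of the fan. -/
structure IsConvexConewiseLinear (ℓ : (Fin d → ℝ) → ℝ) : Prop where
  convexOn : ConvexOn ℝ Set.univ ℓ
  eq_linearPiece : ∀ {s y}, y ∈ F.cone s → ℓ y = F.linearPiece ℓ s y

variable {F} {ℓ : (Fin d → ℝ) → ℝ} {s : V} {r : R}

theorem linearPiece_apply (ℓ : (Fin d → ℝ) → ℝ) (s : V) (y : Fin d → ℝ) :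
    F.linearPiece ℓ s y = ∑ r, ℓ (F.generator r) * F.coord s r y := by
  simp [linearPiece]

theorem linearPiece_generator (ℓ : (Fin d → ℝ) → ℝ) (hr : r ∈ F.rays s) :
    F.linearPiece ℓ s (F.generator r) = ℓ (F.generator r) := by
  simp [linearPiece_apply, F.coord_generator hr]

namespace IsConvexConewiseLinear

theorem map_smul_of_nonneg (hℓ : F.IsConvexConewiseLinear ℓ) {t : ℝ} (ht : 0 ≤ t)
    (y : Fin d → ℝ) : ℓ (t • y) = t * ℓ y := by
  obtain ⟨s, hs⟩ := F.exists_coord_nonneg y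
  rw [hℓ.eq_linearPiece hs, hℓ.eq_linearPiece (smul_mem_cone hs ht), map_smul, smul_eq_mul]

theorem map_add_le (hℓ : F.IsConvexConewiseLinear ℓ) (y z : Fin d → ℝ) :
    ℓ (y + z) ≤ ℓ y + ℓ z := by
  have midpoint := hℓ.convexOn.2 (Set.mem_univ y) (Set.mem_univ z)
    (by norm_num : (0 : ℝ) ≤ 1 / 2) (by norm_num : (0 : ℝ) ≤ 1 / 2) (by norm_num)
  rw [← smul_add, hℓ.map_smul_of_nonneg (by norm_num), smul_eq_mul, smul_eq_mul] at midpoint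
  linarith

theorem linearPiece_le (hℓ : F.IsConvexConewiseLinear ℓ) (s : V) (y : Fin d → ℝ) :
    F.linearPiece ℓ s y ≤ ℓ y := by
  obtain ⟨z, hz⟩ := F.openCone_nonempty s
  have mem_openCone : ∀ᶠ t in nhdsWithin (0 : ℝ) (Set.Ioi 0), z + t • y ∈ F.openCone s :=
    (eventually_add_smul_mem (isOpen_openCone s) hz y).filter_mono nhdsWithin_le_nhds
  obtain ⟨t, hty, ht : 0 < t⟩ := (mem_openCone.and self_mem_nhdsWithin).exists
  have subadd := hℓ.map_add_le z (t • y)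
  rw [hℓ.eq_linearPiece (openCone_subset_cone hty), hℓ.eq_linearPiece (openCone_subset_cone hz),
    hℓ.map_smul_of_nonneg ht.le, map_add, map_smul, add_le_add_iff_left] at subadd
  exact le_of_mul_le_mul_left subadd ht

-- If equality held, then `ℓ` would be given by the linear function of `s` on all of
-- `s + generator r`, hence also on some cone other than `s`.
theorem linearPiece_lt (hℓ : F.IsConvexConewiseLinear ℓ)
    (hinj : Function.Injective (F.linearPiece ℓ)) (hr : r ∉ F.rays s) :
    F.linearPiece ℓ s (F.generator r) < ℓ (F.generator r) := by
  refine lt_of_le_of_ne (hℓ.linearPiece_le s _) fun heq => ?_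
  set O := (fun y => y - F.generator r) ⁻¹' F.openCone s ∩ (F.cone s)ᶜ
  have isOpen_O : IsOpen O := ((isOpen_openCone s).preimage (by fun_prop)).inter
    (isClosed_cone s).isOpen_compl
  have O_nonempty : O.Nonempty := by
    obtain ⟨z, hz⟩ := F.openCone_nonempty s
    have notMem_cone : ∀ᶠ t in nhdsWithin (0 : ℝ) (Set.Ioi 0),
        F.generator r + t • z ∈ (F.cone s)ᶜ :=
      (eventually_add_smul_mem (isClosed_cone s).isOpen_compl (generator_notMem_cone hr)
        z).filter_mono nhdsWithin_le_nhds
    obtain ⟨t, htz, ht : 0 < t⟩ := (notMem_cone.and self_mem_nhdsWithin).exists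
    refine ⟨_, fun q hq => ?_, htz⟩
    simpa using mul_pos ht (hz q hq)
  have eq_on_O : ∀ y ∈ O, ℓ y = F.linearPiece ℓ s y := by
    refine fun y hy => le_antisymm ?_ (hℓ.linearPiece_le s y)
    calc ℓ y ≤ ℓ (y - F.generator r) + ℓ (F.generator r) := by
          simpa using hℓ.map_add_le (y - F.generator r) (F.generator r)
      _ = F.linearPiece ℓ s y := by
          rw [hℓ.eq_linearPiece (openCone_subset_cone hy.1), ← heq, map_sub, sub_add_cancel]
  obtain ⟨s', hs'⟩ := F.exists_inter_openCone_nonempty isOpen_O O_nonempty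
  have piece_eq : F.linearPiece ℓ s' = F.linearPiece ℓ s :=
    dual_eq_of_eqOn_isOpen (isOpen_O.inter (isOpen_openCone s')) hs' fun y hy => by
      rw [← eq_on_O y hy.1, hℓ.eq_linearPiece (openCone_subset_cone hy.2)]
  obtain ⟨y, hyO, hys'⟩ := hs'
  exact hyO.2 (hinj piece_eq ▸ openCone_subset_cone hys')

end IsConvexConewiseLinear

end Convexity

end CompleteSimplicialFan


section Interpolation

variable {R : Type*}

theorem eval_zero_basisDivisor_neg_div {a b a' b' : ℝ} (hb' : b' ≠ 0) :
    (Lagrange.basisDivisor (-(a / b)) (-(a' / b'))).eval 0 = a' / (a' - a / b * b') := by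
  have node_sub : -(a / b) - -(a' / b') = (a' - a / b * b') / b' := by field_simp; ring
  simp only [Lagrange.basisDivisor, node_sub, Polynomial.eval_mul, Polynomial.eval_C,
    Polynomial.eval_sub, Polynomial.eval_X]
  field_simp
  ring

-- Lagrange interpolation of `f` at the zeros of the linear factors `a r + b r * X`.
theorem eval_zero_div_prod_eq_sum (S : Finset R) {a b : R → ℝ} (ha : ∀ r ∈ S, a r ≠ 0)
    (hb : ∀ r ∈ S, b r ≠ 0)
    (hab : ∀ r ∈ S, ∀ r' ∈ S, r ≠ r' → a r' - a r / b r * b r' ≠ 0) {f : ℝ[X]}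
    (hf : f.degree < S.card) :
    f.eval 0 / ∏ r ∈ S, a r =
      ∑ r ∈ S, f.eval (-(a r / b r)) / (a r * ∏ r' ∈ S.erase r, (a r' - a r / b r * b r')) := by
  have nodes_injOn : Set.InjOn (fun r => -(a r / b r)) S := by
    intro r hr r' hr' h
    by_contra hne
    apply hab r hr r' hr' hne
    rw [neg_injective h, div_mul_cancel₀ _ (hb r' hr'), sub_self]
  have interpolation := congrArg (Polynomial.eval 0) (Lagrange.eq_interpolate nodes_injOn hf)
  rw [Lagrange.interpolate_apply, Polynomial.eval_finsetSum] at interpolation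
  rw [interpolation, Finset.sum_div]
  refine Finset.sum_congr rfl fun r hr => ?_
  have eval_basis : (Lagrange.basis S (fun r => -(a r / b r)) r).eval 0 =
      (∏ r' ∈ S.erase r, a r') / ∏ r' ∈ S.erase r, (a r' - a r / b r * b r') := by
    rw [Lagrange.basis, Polynomial.eval_prod, ← Finset.prod_div_distrib]
    refine Finset.prod_congr rfl fun r' hr' => ?_
    exact eval_zero_basisDivisor_neg_div (hb r' (Finset.mem_of_mem_erase hr'))
  have prod_ne_zero : ∏ r' ∈ S.erase r, a r' ≠ 0 :=
    Finset.prod_ne_zero_iff.2 fun q hq => ha q (Finset.mem_of_mem_erase hq)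
  have := ha r hr
  rw [Polynomial.eval_mul, Polynomial.eval_C, eval_basis, ← Finset.mul_prod_erase S a hr]
  field_simp

end Interpolation

namespace CompleteSimplicialFan

variable {d : ℕ} {V R : Type*} [Fintype V] [Fintype R] (F : CompleteSimplicialFan d V R)

section Volume

/-- The determinant of the generators of the rays `φ 0, …, φ (d - 1)`. -/
noncomputable def generatorDet (φ : Fin d → R) : ℝ :=
  (Matrix.of fun i => F.generator (φ i)).det

/-- An enumeration of the rays of the maximal cone `s`. -/
noncomputable def rayEquiv (s : V) : Fin d ≃ F.rays s :=
  ((F.rays s).equivFinOfCardEq (F.card_rays s)).symm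

/-- The volume of the parallelepiped spanned by the generators of the maximal cone `s`. -/
noncomputable def volume (s : V) : ℝ := |F.generatorDet fun i => F.rayEquiv s i|

variable {F} {s s' : V} {r r' : R}

theorem abs_generatorDet {φ : Fin d → R} (hinj : Function.Injective φ)
    (hφ : ∀ i, φ i ∈ F.rays s) : |F.generatorDet φ| = F.volume s := by
  set σ : Fin d → Fin d := fun i => (F.rayEquiv s).symm ⟨φ i, hφ i⟩
  have σ_bijective : Function.Bijective σ := Finite.injective_iff_bijective.1 fun i j hij =>
    hinj (by simpa [σ] using hij)
  have abs_det := Matrix.abs_det_submatrix_equiv_equiv (Equiv.ofBijective σ σ_bijective)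
    (Equiv.refl (Fin d)) (Matrix.of fun i => F.generator (F.rayEquiv s i))
  rw [volume, generatorDet, generatorDet, ← abs_det]
  congr 2
  ext i j
  simp [σ]

theorem volume_pos (s : V) : 0 < F.volume s := by
  have mul_eq_one : (Matrix.of fun i => F.generator (F.rayEquiv s i)) *
      (Matrix.of fun j i : Fin d => F.coord s (F.rayEquiv s i) (Pi.single j 1)) = 1 := by
    ext i i'
    have expand : F.coord s (F.rayEquiv s i') (F.generator (F.rayEquiv s i)) =
        ∑ j, F.generator (F.rayEquiv s i) j * F.coord s (F.rayEquiv s i') (Pi.single j 1) := by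
      conv_lhs => rw [pi_eq_sum_univ' (F.generator (F.rayEquiv s i)), map_sum]
      simp only [map_smul, smul_eq_mul]
    rw [Matrix.mul_apply, Matrix.one_apply]
    simp only [Matrix.of_apply]
    rw [← expand, F.coord_generator (F.rayEquiv s i).2]
    simp only [Subtype.coe_inj, (F.rayEquiv s).injective.eq_iff, eq_comm]
  have det_mul := congrArg Matrix.det mul_eq_one
  rw [Matrix.det_mul, Matrix.det_one] at det_mul
  exact abs_pos.2 (left_ne_zero_of_mul_eq_one det_mul)

theorem sum_coord_rayEquiv_smul (s : V) (y : Fin d → ℝ) :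
    ∑ i, F.coord s (F.rayEquiv s i) y • F.generator (F.rayEquiv s i) = y := by
  rw [Equiv.sum_comp (F.rayEquiv s) fun r => F.coord s r y • F.generator r,
    Finset.sum_coe_sort (F.rays s) fun r => F.coord s r y • F.generator r]
  conv_rhs => rw [← F.sum_coord_smul s y]
  exact Finset.sum_subset (Finset.subset_univ _) fun r _ hr => by simp [F.coord_of_notMem hr]

theorem generatorDet_update (s : V) (i : Fin d) (r' : R) :
    F.generatorDet (Function.update (fun k => (F.rayEquiv s k : R)) i r') =
      F.coord s (F.rayEquiv s i) (F.generator r') * F.generatorDet fun k => F.rayEquiv s k := by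
  have det_update := Matrix.det_updateRow_sum (Matrix.of fun k => F.generator (F.rayEquiv s k)) i
    fun k => F.coord s (F.rayEquiv s k) (F.generator r')
  rw [generatorDet, generatorDet, ← smul_eq_mul, ← det_update]
  congr 1
  ext k j
  rcases eq_or_ne k i with rfl | hk
  · simpa using (congrFun (sum_coord_rayEquiv_smul s (F.generator r')) j).symm
  · simp [Function.update_of_ne hk, Matrix.updateRow_ne hk]

theorem Adjacent.volume_eq (h : F.Adjacent s r s' r') :
    F.volume s' = -F.coord s r (F.generator r') * F.volume s := by
  obtain ⟨i, hi⟩ := (F.rayEquiv s).surjective ⟨r, h.mem⟩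
  have mem : ∀ k, Function.update (fun k => (F.rayEquiv s k : R)) i r' k ∈ F.rays s' := by
    intro k
    rcases eq_or_ne k i with rfl | hk
    · rw [Function.update_self]
      exact h.mem_right
    · rw [Function.update_of_ne hk]
      refine h.erase_subset (Finset.mem_erase.2 ⟨fun hkr => hk ?_, (F.rayEquiv s k).2⟩)
      exact (F.rayEquiv s).injective (hi ▸ Subtype.ext hkr)
  have injective : Function.Injective (Function.update (fun k => (F.rayEquiv s k : R)) i r') := by
    have ne_new : ∀ k, (F.rayEquiv s k : R) ≠ r' := fun k hk => h.notMem (hk ▸ (F.rayEquiv s k).2)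
    intro a b hab
    by_cases ha : a = i <;> by_cases hb : b = i <;>
      simp_all [Function.update_apply, eq_comm (a := r')]
  rw [← abs_generatorDet injective mem, generatorDet_update, hi, abs_mul,
    abs_of_neg h.coord_generator_neg, volume]

theorem Adjacent.volume_mul_coord (h : F.Adjacent s r s' r') (y : Fin d → ℝ) :
    F.volume s' * F.coord s' r' y = -(F.volume s * F.coord s r y) := by
  rw [h.volume_eq, h.coord_eq_mul y]
  ring

end Volume

section Localization

/-- `v` lies on no hyperplane spanned by a wall of the fan. -/
def IsGeneric (v : Fin d → ℝ) : Prop := ∀ s, ∀ r ∈ F.rays s, F.coord s r v ≠ 0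

/-- The contribution of the maximal cone `s` in Brion's formula for the integral of a conewise
polynomial function, evaluated at `v`. -/
noncomputable def brionWeight (v : Fin d → ℝ) (s : V) : ℝ :=
  (F.volume s * ∏ r ∈ F.rays s, F.coord s r v)⁻¹

/-- The point where the line through `v` in the direction `u` meets the hyperplane spanned by the
wall of `s` opposite to `r`. -/
noncomputable def wallPoint (v u : Fin d → ℝ) (s : V) (r : R) : Fin d → ℝ :=
  v - (F.coord s r v / F.coord s r u) • u

/-- The contribution of the wall of `s` opposite to `r` to the value at `v` of the monomial
`∏ i ∈ I, q i`, when `v` is moved along the line with direction `u`. -/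
noncomputable def wallResidue {ι : Type*} (I : Finset ι) (q : ι → R) (v u : Fin d → ℝ) (s : V)
    (r : R) : ℝ :=
  (∏ i ∈ I, F.coord s (q i) (F.wallPoint v u s r)) /
    (F.volume s * F.coord s r v * ∏ p ∈ (F.rays s).erase r, F.coord s p (F.wallPoint v u s r))

variable {F} {s s' : V} {r r' : R} {v u : Fin d → ℝ}

theorem coord_wallPoint (v u : Fin d → ℝ) (s : V) (r q : R) :
    F.coord s q (F.wallPoint v u s r) =
      F.coord s q v - F.coord s r v / F.coord s r u * F.coord s q u := by
  rw [wallPoint, map_sub, map_smul, smul_eq_mul]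

theorem exists_isGeneric_direction (hv : F.IsGeneric v) :
    ∃ u, F.IsGeneric u ∧ ∀ s, ∀ r ∈ F.rays s, ∀ r' ∈ F.rays s, r ≠ r' →
      F.coord s r' (F.wallPoint v u s r) ≠ 0 := by
  set φ : ((s : V) × F.rays s) ⊕ {i : (s : V) × (F.rays s × F.rays s) // i.2.1 ≠ i.2.2} →
      Module.Dual ℝ (Fin d → ℝ) := Sum.elim (fun i => F.coord i.1 i.2) fun i =>
    F.coord i.1.1 i.1.2.2 v • F.coord i.1.1 i.1.2.1 -
      F.coord i.1.1 i.1.2.1 v • F.coord i.1.1 i.1.2.2 with hφ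
  have φ_ne_zero : ∀ i, φ i ≠ 0 := by
    rintro (i | ⟨⟨s, r, r'⟩, hne⟩) h
    · exact coord_ne_zero i.2.2 h
    · have hne' : (r' : R) ≠ r := fun hh => hne (Subtype.ext hh.symm)
      have := LinearMap.congr_fun h (F.generator r)
      simp only [hφ, Sum.elim_inr, LinearMap.sub_apply, LinearMap.smul_apply,
        F.coord_generator r.2, LinearMap.zero_apply] at this
      exact hv s r' r'.2 (by simpa [hne'] using this)
  obtain ⟨u, -, hu⟩ := exists_mem_forall_dual_ne_zero φ φ_ne_zero isOpen_univ ⟨0, trivial⟩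
  have hu_generic : F.IsGeneric u := fun s r hr => hu (Sum.inl ⟨s, ⟨r, hr⟩⟩)
  refine ⟨u, hu_generic, fun s r hr r' hr' hne h => ?_⟩
  apply hu (Sum.inr ⟨⟨s, ⟨r, hr⟩, ⟨r', hr'⟩⟩, fun hh => hne (congrArg Subtype.val hh)⟩)
  have := hu_generic s r hr
  rw [coord_wallPoint] at h
  simp only [hφ, Sum.elim_inr, LinearMap.sub_apply, LinearMap.smul_apply, smul_eq_mul]
  field_simp at h
  linarith

theorem brionWeight_mul_prod_coord_eq_sum_wallResidue {ι : Type*} {I : Finset ι} (hI : I.card < d)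
    (q : ι → R) (hv : F.IsGeneric v) (hu : F.IsGeneric u) {s : V}
    (hvu : ∀ r ∈ F.rays s, ∀ r' ∈ F.rays s, r ≠ r' → F.coord s r' (F.wallPoint v u s r) ≠ 0) :
    F.brionWeight v s * ∏ i ∈ I, F.coord s (q i) v =
      ∑ r ∈ F.rays s, F.wallResidue I q v u s r := by
  set f : ℝ[X] := ∏ i ∈ I, (Polynomial.C (F.coord s (q i) u) * Polynomial.X +
    Polynomial.C (F.coord s (q i) v)) with hf
  have eval_f : ∀ t, f.eval t = ∏ i ∈ I, (F.coord s (q i) u * t + F.coord s (q i) v) := fun t => by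
    simp [hf, Polynomial.eval_prod]
  have degree_f : f.degree < (F.rays s).card := by
    calc f.degree ≤ ∑ i ∈ I, 1 := (Polynomial.degree_prod_le _ _).trans
          (Finset.sum_le_sum fun i _ => Polynomial.degree_linear_le)
      _ < (F.rays s).card := by
          rw [F.card_rays]
          simpa using hI
  simp only [coord_wallPoint] at hvu
  have interpolation := eval_zero_div_prod_eq_sum (F.rays s) (hv s) (hu s) hvu degree_f
  have prod_eq : ∏ i ∈ I, F.coord s (q i) v = f.eval 0 := by simp [eval_f]
  calc F.brionWeight v s * ∏ i ∈ I, F.coord s (q i) v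
      = (F.volume s)⁻¹ * (f.eval 0 / ∏ r ∈ F.rays s, F.coord s r v) := by
        rw [brionWeight, prod_eq, mul_inv]
        ring
    _ = ∑ r ∈ F.rays s, F.wallResidue I q v u s r := by
        rw [interpolation, Finset.mul_sum]
        refine Finset.sum_congr rfl fun r _ => ?_
        rw [wallResidue, eval_f, inv_mul_eq_div, div_div, mul_comm (_ * _) (F.volume s),
          ← mul_assoc]
        simp only [coord_wallPoint]
        congr 1
        exact Finset.prod_congr rfl fun i _ => by ring

theorem Adjacent.wallPoint_eq (h : F.Adjacent s r s' r') (v u : Fin d → ℝ) :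
    F.wallPoint v u s' r' = F.wallPoint v u s r := by
  rw [wallPoint, wallPoint, h.coord_eq_mul v, h.coord_eq_mul u,
    mul_div_mul_left _ _ h.coord_generator_ne_zero]

theorem Adjacent.wallResidue_add_wallResidue (h : F.Adjacent s r s' r') {ι : Type*} (I : Finset ι)
    (q : ι → R) (v : Fin d → ℝ) (hu : F.IsGeneric u) :
    F.wallResidue I q v u s r + F.wallResidue I q v u s' r' = 0 := by
  have coord_zero : F.coord s r (F.wallPoint v u s r) = 0 := by
    rw [coord_wallPoint, div_mul_cancel₀ _ (hu s r h.mem), sub_self]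
  have coord_eq := h.coord_eq_of_coord_eq_zero coord_zero
  simp only [wallResidue, h.wallPoint_eq, h.erase_rays_eq, h.volume_mul_coord, ← coord_eq, neg_mul,
    div_neg, add_neg_cancel]

theorem sum_brionWeight_mul_prod_coord {ι : Type*} {I : Finset ι} (hI : I.card < d) (q : ι → R)
    (hv : F.IsGeneric v) : ∑ s, F.brionWeight v s * ∏ i ∈ I, F.coord s (q i) v = 0 := by
  obtain ⟨u, hu, hvu⟩ := exists_isGeneric_direction hv
  simp only [brionWeight_mul_prod_coord_eq_sum_wallResidue hI q hv hu (hvu _)]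
  rw [Finset.sum_sigma']
  have exists_opposite : ∀ i : (_ : V) × R, i.2 ∈ F.rays i.1 →
      ∃ j : (_ : V) × R, F.Adjacent i.1 i.2 j.1 j.2 := fun i hi =>
    let ⟨s', r', h⟩ := exists_adjacent hi
    ⟨⟨s', r'⟩, h⟩
  choose! opposite adjacent using exists_opposite
  have mem : ∀ {i : (_ : V) × R}, i ∈ Finset.univ.sigma F.rays → i.2 ∈ F.rays i.1 := fun hi =>
    (Finset.mem_sigma.1 hi).2
  refine Finset.sum_involution (fun i _ => opposite i) (fun i hi => ?_) (fun i hi _ heq => ?_)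
    (fun i hi => ?_) fun i hi => ?_
  · exact (adjacent i (mem hi)).wallResidue_add_wallResidue I q v hu
  · exact (adjacent i (mem hi)).ne (congrArg Sigma.fst heq).symm
  · exact Finset.mem_sigma.2 ⟨Finset.mem_univ _, (adjacent i (mem hi)).mem_right⟩
  · have h := adjacent i (mem hi)
    obtain ⟨hs, hr⟩ := (adjacent _ h.mem_right).unique h.symm
    exact Sigma.ext hs (heq_of_eq hr)

end Localization

section ToLocalizedFan

/-- The coordinates of `v` as functions on the set of maximal cones. -/
def coordFun (v : Fin d → ℝ) (r : R) : V → ℝ := fun s => F.coord s r v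

variable {F} {v : Fin d → ℝ}

theorem sum_brionWeight_mul_of_mem_coordFiltration (hv : F.IsGeneric v) {j : ℕ} (hj : j < d)
    {f : V → ℝ} (hf : f ∈ coordFiltration (F.coordFun v) j) : ∑ s, F.brionWeight v s * f s = 0 := by
  rw [coordFiltration, Submodule.span_pow] at hf
  induction hf using Submodule.span_induction with
  | mem f hf =>
    obtain ⟨g, rfl⟩ := Set.mem_pow.1 hf
    choose q hq using fun i => (g i).2
    have prod_eq : ∀ s, (List.ofFn fun i => (g i : V → ℝ)).prod s = ∏ i, F.coord s (q i) v := by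
      intro s
      simp only [List.prod_ofFn, Finset.prod_apply, ← hq]
      rfl
    simp only [prod_eq]
    exact sum_brionWeight_mul_prod_coord (by simpa using hj) q hv
  | zero => simp
  | add f g _ _ hf hg => simp only [Pi.add_apply, mul_add, Finset.sum_add_distrib, hf, hg, add_zero]
  | smul a f _ hf =>
    simp only [Pi.smul_apply, smul_eq_mul, mul_left_comm _ a, ← Finset.mul_sum, hf, mul_zero]

theorem const_mem_span_coordFun (φ : Module.Dual ℝ (Fin d → ℝ)) (v : Fin d → ℝ) :
    (fun _ => φ v) ∈ Submodule.span ℝ (Set.range (F.coordFun v)) := by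
  have const_eq : (fun _ => φ v) = ∑ r, φ (F.generator r) • F.coordFun v r := by
    ext s
    simp [coordFun, ← dual_apply_eq_sum]
  rw [const_eq]
  exact sum_mem fun r _ => Submodule.smul_mem _ _ (Submodule.subset_span ⟨r, rfl⟩)

theorem one_mem_span_coordFun (hd : 1 ≤ d) (hv : F.IsGeneric v) :
    1 ∈ Submodule.span ℝ (Set.range (F.coordFun v)) := by
  obtain ⟨s, -⟩ := F.exists_coord_nonneg 0
  obtain ⟨r, hr⟩ : (F.rays s).Nonempty := Finset.card_pos.1 ((F.card_rays s).symm ▸ hd)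
  convert const_mem_span_coordFun ((F.coord s r v)⁻¹ • F.coord s r) v
  exact (inv_mul_cancel₀ (hv s r hr)).symm

theorem exists_coordFun_eq_sum (hv : F.IsGeneric v) {τ : Finset R} (hτ : τ.card < d)
    (r : R) : ∃ a : R → ℝ, (∀ r' ∈ τ, a r' = 0) ∧
      ∀ s, τ ⊆ F.rays s → F.coordFun v r s = ∑ r', a r' * F.coordFun v r' s := by
  by_cases h : ∃ s₀, τ ⊆ F.rays s₀
  · obtain ⟨s₀, hs₀⟩ := h
    obtain ⟨p, hp, hpτ⟩ := Finset.exists_mem_notMem_of_card_lt_card (hτ.trans_eq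
      (F.card_rays s₀).symm)
    set φ := F.coord s₀ r - (F.coord s₀ r v / F.coord s₀ p v) • F.coord s₀ p with hφ
    have φ_v : φ v = 0 := by
      simp [hφ, div_mul_cancel₀ _ (hv s₀ p hp)]
    refine ⟨fun q => (if r = q then 1 else 0) - φ (F.generator q), fun q hq => ?_, fun s _ => ?_⟩
    · have : p ≠ q := fun hpq => hpτ (hpq ▸ hq)
      simp [hφ, F.coord_generator (hs₀ hq), this]
    · simp [sub_mul, Finset.sum_sub_distrib, coordFun, ← dual_apply_eq_sum φ s v, φ_v]
  · exact ⟨0, by simp, fun s hs => absurd ⟨s, hs⟩ h⟩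

/-- A strictly convex conewise linear function on the fan, together with a generic vector at which
its linear pieces take distinct values. -/
structure GenericPolarization where
  function : (Fin d → ℝ) → ℝ
  isConvexConewiseLinear : F.IsConvexConewiseLinear function
  linearPiece_injective : Function.Injective (F.linearPiece function)
  point : Fin d → ℝ
  isGeneric : F.IsGeneric point
  linearPiece_point_injective : Function.Injective fun s => F.linearPiece function s point

/-- The evaluation of the fan and of a strictly convex conewise linear function at a generic vector,
with Brion's weights. -/
noncomputable def GenericPolarization.localizedFan [NeZero d] (P : F.GenericPolarization) :
    LocalizedFan V R where
  dim := d
  rays := F.rays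
  card_rays := F.card_rays
  coord := F.coordFun P.point
  coord_ne_zero_iff {r s} := ⟨fun h => by
    by_contra hr
    exact h (by simp [coordFun, F.coord_of_notMem hr]), P.isGeneric s r⟩
  weight := F.brionWeight P.point
  weight_mul_prod_pos s := by
    have : ∏ r ∈ F.rays s, F.coordFun P.point r s ≠ 0 := Finset.prod_ne_zero_iff.2 (P.isGeneric s)
    rw [brionWeight, mul_inv, mul_assoc]
    exact mul_pos (inv_pos.2 (volume_pos s)) ((inv_mul_cancel₀ this).symm ▸ one_pos)
  height s := F.linearPiece P.function s P.point
  height_injective := P.linearPiece_point_injective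
  slack r s := P.function (F.generator r) - F.linearPiece P.function s (F.generator r)
  slack_nonneg r s := sub_nonneg.2 (P.isConvexConewiseLinear.linearPiece_le s _)
  slack_eq_zero_iff {r s} := ⟨fun h => by
    by_contra hr
    exact (P.isConvexConewiseLinear.linearPiece_lt P.linearPiece_injective hr).ne'
      (sub_eq_zero.1 h), fun hr => by
    rw [linearPiece_generator P.function hr, sub_self]⟩
  height_sub s s' := by
    simp only [sub_mul, Finset.sum_sub_distrib, coordFun, ← dual_apply_eq_sum, ← linearPiece_apply]
  one_mem_span := one_mem_span_coordFun NeZero.one_le P.isGeneric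
  exists_coord_eq _ hτ r _ := exists_coordFun_eq_sum P.isGeneric hτ r
  exists_notMem_rays τ s r hτ hr hrτ := by
    obtain ⟨s', r', h⟩ := exists_adjacent hr
    exact ⟨s', fun q hq => h.erase_subset (Finset.mem_erase.2 ⟨fun hqr => hrτ (hqr ▸ hq), hτ hq⟩),
      h.notMem_right⟩
  sum_weight_mul hj _ hf := sum_brionWeight_mul_of_mem_coordFiltration P.isGeneric hj hf

end ToLocalizedFan

end CompleteSimplicialFan


section LinearForms

variable {ι : Type*}

open MvPolynomial in
theorem exists_isHomogeneous_eq_mul {p L : MvPolynomial ι ℝ} {k m : ℕ} (hp : p.IsHomogeneous k)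
    (hL : L.IsHomogeneous m) (h : L ∣ p) :
    p = 0 ∨ ∃ j, m + j = k ∧ ∃ q : MvPolynomial ι ℝ, q.IsHomogeneous j ∧ p = L * q := by
  let _ := gradedAlgebra (σ := ι) (R := ℝ)
  obtain ⟨q, rfl⟩ := h
  have component := DirectSum.decompose_of_mem_same (homogeneousSubmodule ι ℝ) hp
  by_cases hmk : m ≤ k
  · rw [DirectSum.coe_decompose_mul_of_left_mem_of_le _ hL hmk] at component
    exact Or.inr ⟨k - m, Nat.add_sub_cancel' hmk, _,
      (mem_homogeneousSubmodule _ _).1 (SetLike.coe_mem _), component.symm⟩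
  · rw [DirectSum.coe_decompose_mul_of_left_mem_of_not_le _ hL hmk] at component
    exact Or.inl component.symm

/-- The values at the point `v` of a family of polynomials. -/
noncomputable def evalAt {V : Type*} (v : ι → ℝ) : (V → MvPolynomial ι ℝ) →ₐ[ℝ] V → ℝ :=
  (MvPolynomial.aeval v).compLeft V

theorem evalAt_smul {V : Type*} (v : ι → ℝ) (q : MvPolynomial ι ℝ) (p : V → MvPolynomial ι ℝ) :
    evalAt v (q • p) = MvPolynomial.eval v q • evalAt v p := by
  ext s
  simp [evalAt]

theorem mvPolynomial_eq_of_eqOn_isOpen [Finite ι] {p q : MvPolynomial ι ℝ} {O : Set (ι → ℝ)}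
    (hO : IsOpen O) (hne : O.Nonempty)
    (h : ∀ y ∈ O, MvPolynomial.eval y p = MvPolynomial.eval y q) : p = q := by
  have := Fintype.ofFinite ι
  obtain ⟨y, hy⟩ := hne
  obtain ⟨ε, hε, hball⟩ := Metric.isOpen_iff.1 hO y hy
  refine MvPolynomial.funext_set (fun i => Metric.ball (y i) ε) (fun i => ?_) fun z hz => ?_
  · rw [Real.ball_eq_Ioo]
    exact Set.Ioo_infinite (by linarith)
  · rw [← ball_pi y hε] at hz
    exact h z (hball hz)

variable [Fintype ι]

/-- A linear functional on `ι → ℝ` as a polynomial. -/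
noncomputable def linearForm (φ : Module.Dual ℝ (ι → ℝ)) : MvPolynomial ι ℝ :=
  ∑ i, MvPolynomial.C (φ (Pi.single i 1)) * MvPolynomial.X i

theorem linearForm_isHomogeneous (φ : Module.Dual ℝ (ι → ℝ)) : (linearForm φ).IsHomogeneous 1 :=
  MvPolynomial.IsHomogeneous.sum _ _ _ fun i _ => by
    simpa using (MvPolynomial.isHomogeneous_C ι _).mul (MvPolynomial.isHomogeneous_X ℝ i)

@[simp]
theorem eval_linearForm (φ : Module.Dual ℝ (ι → ℝ)) (y : ι → ℝ) :
    MvPolynomial.eval y (linearForm φ) = φ y := by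
  conv_rhs => rw [pi_eq_sum_univ' y, map_sum]
  simp [linearForm, mul_comm]

theorem exists_eq_linearForm {p : MvPolynomial ι ℝ} (hp : p.IsHomogeneous 1) :
    ∃ φ, p = linearForm φ := by
  have mem_span : p ∈ Submodule.span ℝ (Set.range (MvPolynomial.X : ι → MvPolynomial ι ℝ)) := by
    rwa [← MvPolynomial.homogeneousSubmodule_one_eq_span_X]
  obtain ⟨a, rfl⟩ := (Submodule.mem_span_range_iff_exists_fun ℝ).1 mem_span
  refine ⟨∑ i, a i • LinearMap.proj i, MvPolynomial.funext fun y => ?_⟩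
  simp [MvPolynomial.smul_eval]

/-- Precomposition of polynomials with the projection `y ↦ y - φ y • e`, which maps onto the kernel
of `φ` when `φ e = 1`. -/
noncomputable def projectAlong (φ : Module.Dual ℝ (ι → ℝ)) (e : ι → ℝ) :
    MvPolynomial ι ℝ →ₐ[ℝ] MvPolynomial ι ℝ :=
  MvPolynomial.aeval fun i => MvPolynomial.X i - linearForm φ * MvPolynomial.C (e i)

theorem eval_projectAlong (φ : Module.Dual ℝ (ι → ℝ)) (e y : ι → ℝ) (p : MvPolynomial ι ℝ) :
    MvPolynomial.eval y (projectAlong φ e p) = MvPolynomial.eval (y - φ y • e) p := by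
  induction p using MvPolynomial.induction_on <;> simp_all [projectAlong]

theorem linearForm_dvd_sub_projectAlong (φ : Module.Dual ℝ (ι → ℝ)) (e : ι → ℝ)
    (p : MvPolynomial ι ℝ) : linearForm φ ∣ p - projectAlong φ e p := by
  rw [← Ideal.mem_span_singleton, ← Ideal.Quotient.mk_eq_mk_iff_sub_mem]
  have algHom_eq : Ideal.Quotient.mkₐ ℝ (Ideal.span {linearForm φ}) =
      (Ideal.Quotient.mkₐ ℝ (Ideal.span {linearForm φ})).comp (projectAlong φ e) := by
    refine MvPolynomial.algHom_ext fun i => ?_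
    refine (Ideal.Quotient.mk_eq_mk_iff_sub_mem _ _).2 (Ideal.mem_span_singleton.2 ?_)
    simp [projectAlong]
  exact DFunLike.congr_fun algHom_eq p

theorem prod_linearForm_dvd {κ : Type*} {φ : κ → Module.Dual ℝ (ι → ℝ)} {e : κ → ι → ℝ}
    {T : Finset κ} (hφ : ∀ r ∈ T, ∀ q ∈ T, φ q (e r) = if q = r then 1 else 0)
    {p : MvPolynomial ι ℝ} (hp : ∀ r ∈ T, ∀ y, φ r y = 0 → MvPolynomial.eval y p = 0) :
    ∏ r ∈ T, linearForm (φ r) ∣ p := by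
  induction T using Finset.induction_on with
  | empty => simp
  | insert r T hr ih =>
    obtain ⟨q, rfl⟩ := ih (fun r hr q hq => hφ r (Finset.mem_insert_of_mem hr) q
      (Finset.mem_insert_of_mem hq)) fun r hr => hp r (Finset.mem_insert_of_mem hr)
    have hφr : φ r (e r) = 1 := by simpa using hφ r (by simp) r (by simp)
    have project_prod : projectAlong (φ r) (e r) (∏ t ∈ T, linearForm (φ t)) =
        ∏ t ∈ T, linearForm (φ t) := by
      rw [map_prod]
      refine Finset.prod_congr rfl fun t ht => MvPolynomial.funext fun y => ?_
      have ne : t ≠ r := fun h => hr (h ▸ ht)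
      simp [eval_projectAlong, hφ r (by simp) t (by simp [ht]), ne]
    have prod_ne_zero : ∏ t ∈ T, linearForm (φ t) ≠ 0 := by
      refine Finset.prod_ne_zero_iff.2 fun t ht h => ?_
      have := congrArg (MvPolynomial.eval (e t)) h
      simp [hφ t (by simp [ht]) t (by simp [ht])] at this
    have project_zero : projectAlong (φ r) (e r) ((∏ t ∈ T, linearForm (φ t)) * q) = 0 :=
      MvPolynomial.funext fun y => by
        rw [eval_projectAlong, map_zero]
        exact hp r (by simp) _ (by simp [hφr])
    rw [map_mul, project_prod, mul_eq_zero, or_iff_right prod_ne_zero] at project_zero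
    rw [Finset.prod_insert hr, mul_comm]
    exact mul_dvd_mul_left _ (by simpa [project_zero] using
      linearForm_dvd_sub_projectAlong (φ r) (e r) q)

end LinearForms

namespace CompleteSimplicialFan

variable {d : ℕ} {V R : Type*} [Fintype V] [Fintype R] (F : CompleteSimplicialFan d V R)

/-- The homogeneous conewise polynomial functions of degree `k`, each given by its polynomials on
the maximal cones. A global polynomial `q` acts on them by `q • p`. -/
def piecewise (k : ℕ) : Submodule ℝ (V → MvPolynomial (Fin d) ℝ) where
  carrier := {p | (∀ s, (p s).IsHomogeneous k) ∧ ∀ {s s' y}, y ∈ F.cone s → y ∈ F.cone s' →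
    MvPolynomial.eval y (p s) = MvPolynomial.eval y (p s')}
  add_mem' hp hq := ⟨fun s => (hp.1 s).add (hq.1 s), fun hs hs' => by
    simp [hp.2 hs hs', hq.2 hs hs']⟩
  zero_mem' := ⟨fun _ => MvPolynomial.isHomogeneous_zero _ _ _, by simp⟩
  smul_mem' c p hp := ⟨fun s => (MvPolynomial.homogeneousSubmodule _ _ k).smul_mem c (hp.1 s),
    fun hs hs' => by simp [MvPolynomial.smul_eval, hp.2 hs hs']⟩

/-- The part of degree `k` of the submodule generated by the products of conewise polynomial
functions with global linear functions. -/
noncomputable def mPiecewise : ℕ → Submodule ℝ (V → MvPolynomial (Fin d) ℝ)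
  | 0 => ⊥
  | k + 1 => Submodule.span ℝ {h | ∃ φ : Module.Dual ℝ (Fin d → ℝ), ∃ p ∈ F.piecewise k,
      h = linearForm φ • p}

/-- Courant's conewise linear function, which is `1` on the generator of `r` and `0` on all the
other generators. -/
noncomputable def courant (r : R) : V → MvPolynomial (Fin d) ℝ := fun s => linearForm (F.coord s r)

/-- The square-free monomial in Courant's functions that belongs to the set of rays `τ`. -/
noncomputable def courantProd (τ : Finset R) : V → MvPolynomial (Fin d) ℝ := ∏ r ∈ τ, F.courant r

/-- The conewise linear function `ℓ` by its polynomials on the maximal cones. -/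
noncomputable def linearPieces (ℓ : (Fin d → ℝ) → ℝ) : V → MvPolynomial (Fin d) ℝ :=
  fun s => linearForm (F.linearPiece ℓ s)

variable {F} {k : ℕ} {s : V} {r : R} {p : V → MvPolynomial (Fin d) ℝ}

theorem one_mem_piecewise : (1 : V → MvPolynomial (Fin d) ℝ) ∈ F.piecewise 0 :=
  ⟨fun _ => MvPolynomial.isHomogeneous_one _ _, by simp⟩

theorem mul_mem_piecewise {i j : ℕ} {p q : V → MvPolynomial (Fin d) ℝ} (hp : p ∈ F.piecewise i)
    (hq : q ∈ F.piecewise j) : p * q ∈ F.piecewise (i + j) :=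
  ⟨fun s => (hp.1 s).mul (hq.1 s), fun hs hs' => by simp [hp.2 hs hs', hq.2 hs hs']⟩

theorem pow_mem_piecewise (hp : p ∈ F.piecewise 1) (m : ℕ) : p ^ m ∈ F.piecewise m := by
  induction m with
  | zero => simpa using one_mem_piecewise
  | succ m ih => exact pow_succ p m ▸ mul_mem_piecewise ih hp

theorem smul_mem_piecewise {i j : ℕ} {q : MvPolynomial (Fin d) ℝ} (hq : q.IsHomogeneous j)
    (hp : p ∈ F.piecewise i) : q • p ∈ F.piecewise (i + j) :=
  add_comm j i ▸ ⟨fun s => hq.mul (hp.1 s), fun hs hs' => by simp [hp.2 hs hs']⟩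

theorem smul_mem_mPiecewise {i j : ℕ} {q : MvPolynomial (Fin d) ℝ} (hq : q.IsHomogeneous (j + 1))
    (hp : p ∈ F.piecewise i) : q • p ∈ F.mPiecewise (i + j + 1) := by
  have hq_mem : q ∈ MvPolynomial.homogeneousSubmodule (Fin d) ℝ 1 *
      MvPolynomial.homogeneousSubmodule (Fin d) ℝ j := by
    rw [← MvPolynomial.homogeneousSubmodule_one_pow _ j, ← pow_succ',
      MvPolynomial.homogeneousSubmodule_one_pow]
    exact hq
  refine Submodule.mul_induction_on hq_mem (fun a ha b hb => ?_) fun a b ha hb => ?_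
  · obtain ⟨φ, rfl⟩ := exists_eq_linearForm ha
    exact Submodule.subset_span ⟨φ, b • p, smul_mem_piecewise hb hp, mul_smul _ _ _⟩
  · rw [add_smul]
    exact add_mem ha hb

theorem courant_mem_piecewise (r : R) : F.courant r ∈ F.piecewise 1 :=
  ⟨fun _ => linearForm_isHomogeneous _, fun hs hs' => by
    simpa [courant] using F.coord_eq_of_nonneg hs hs' r⟩

theorem courantProd_mem_piecewise (τ : Finset R) : F.courantProd τ ∈ F.piecewise τ.card := by
  induction τ using Finset.induction_on with
  | empty => exact one_mem_piecewise
  | insert r τ hr ih =>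
    rw [courantProd, Finset.prod_insert hr, Finset.card_insert_of_notMem hr, add_comm]
    exact mul_mem_piecewise (courant_mem_piecewise r) ih

theorem courantProd_apply (τ : Finset R) (s : V) :
    F.courantProd τ s = ∏ r ∈ τ, linearForm (F.coord s r) := Finset.prod_apply _ _ _

theorem IsConvexConewiseLinear.linearPieces_mem_piecewise {ℓ : (Fin d → ℝ) → ℝ}
    (hℓ : F.IsConvexConewiseLinear ℓ) : F.linearPieces ℓ ∈ F.piecewise 1 :=
  ⟨fun _ => linearForm_isHomogeneous _, fun hs hs' => by
    simp [linearPieces, ← hℓ.eq_linearPiece hs, ← hℓ.eq_linearPiece hs']⟩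

theorem IsConvexConewiseLinear.linearPieces_pow_mul_mem_piecewise {ℓ : (Fin d → ℝ) → ℝ}
    (hℓ : F.IsConvexConewiseLinear ℓ) (hk : 2 * k < d) (hp : p ∈ F.piecewise k) :
    F.linearPieces ℓ ^ (d - 2 * k) * p ∈ F.piecewise (d - k) := by
  rw [show d - k = d - 2 * k + k by omega]
  exact mul_mem_piecewise (pow_mem_piecewise hℓ.linearPieces_mem_piecewise _) hp

-- On the interior of `s`, the projection along the generator of `r` maps into the common wall.
theorem Adjacent.eval_eq_zero {s' : V} {r' : R} (h : F.Adjacent s r s' r')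
    (hp : p ∈ F.piecewise k) (hs' : p s' = 0) {y : Fin d → ℝ} (hy : F.coord s r y = 0) :
    MvPolynomial.eval y (p s) = 0 := by
  have project_eq_zero : projectAlong (F.coord s r) (F.generator r) (p s) = 0 := by
    refine mvPolynomial_eq_of_eqOn_isOpen (isOpen_openCone s) (F.openCone_nonempty s) fun z hz => ?_
    set w := z - F.coord s r z • F.generator r with hw
    have coord_w : ∀ q, F.coord s q w = if q = r then 0 else F.coord s q z := fun q => by
      rcases eq_or_ne q r with rfl | hq <;> simp_all [F.coord_generator h.mem]
    have mem_cone : w ∈ F.cone s := fun q => by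
      rw [coord_w]
      split_ifs
      · rfl
      · exact openCone_subset_cone hz q
    have mem_cone' : w ∈ F.cone s' := fun q => by
      rw [← h.coord_eq_of_coord_eq_zero (by simp [coord_w])]
      exact mem_cone q
    rw [eval_projectAlong, hp.2 mem_cone mem_cone', hs', map_zero, map_zero]
  have eval_project := eval_projectAlong (F.coord s r) (F.generator r) y (p s)
  rwa [project_eq_zero, map_zero, hy, zero_smul, sub_zero, eq_comm] at eval_project

theorem evalAt_courant (v : Fin d → ℝ) (r : R) : evalAt v (F.courant r) = F.coordFun v r := by
  ext s
  simp [evalAt, courant, coordFun]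

theorem evalAt_linearPieces (v : Fin d → ℝ) (ℓ : (Fin d → ℝ) → ℝ) :
    evalAt v (F.linearPieces ℓ) = fun s => F.linearPiece ℓ s v := by
  ext s
  simp [evalAt, linearPieces]

end CompleteSimplicialFan

theorem eq_zero_of_sum_mul_triangular {ι : Type*} {S : Finset ι} {h : ι → ℝ}
    (hinj : Function.Injective h) {M : ι → ι → ℝ} (hdiag : ∀ i, M i i ≠ 0)
    (htri : ∀ {i j}, h i < h j → M i j = 0) {c : ι → ℝ}
    (hc : ∀ j ∈ S, ∑ i ∈ S, c i * M i j = 0) : ∀ i ∈ S, c i = 0 := by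
  by_contra! hne
  obtain ⟨i, hi, hmax⟩ :=
    Finset.exists_max_image (S.filter (c · ≠ 0)) h (by simpa [Finset.Nonempty])
  obtain ⟨hiS, hci⟩ := Finset.mem_filter.1 hi
  have sum_eq := hc i hiS
  rw [Finset.sum_eq_single_of_mem i hiS fun i' hi'S hi' => ?_] at sum_eq
  · exact mul_ne_zero hci (hdiag i) sum_eq
  by_cases hci' : c i' = 0
  · rw [hci', zero_mul]
  · have := hmax i' (Finset.mem_filter.2 ⟨hi'S, hci'⟩)
    rw [htri (lt_of_le_of_ne this (hinj.ne hi')), mul_zero]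

namespace LocalizedFan

variable {V R : Type*} [Fintype V] [Fintype R] (D : LocalizedFan V R)

/-- The maximal cones with `k` negative coordinates. They index a basis of the part of degree `k` of
the conewise polynomial functions modulo the global linear ones. -/
noncomputable def conesOfIndex (k : ℕ) : Finset V := {s | (D.negRays ∅ s).card = k}

variable {D} {k : ℕ} {s s' : V} {c : V → ℝ}

theorem card_negRays_of_mem_conesOfIndex (hs : s ∈ D.conesOfIndex k) :
    (D.negRays ∅ s).card = k := by
  simpa [conesOfIndex] using hs

theorem card_posRays_of_mem_conesOfIndex (hs : s ∈ D.conesOfIndex k) :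
    (D.posRays ∅ s).card = D.dim - k := by
  have := card_negRays_add_card_posRays (D := D) (Finset.empty_subset (D.rays s))
  rw [card_negRays_of_mem_conesOfIndex hs, Finset.card_empty] at this
  omega

theorem weightedForm_coordProd_eq_zero (h : D.height s < D.height s') :
    weightedForm D.weight (D.coordProd (D.negRays ∅ s)) (D.coordProd (D.posRays ∅ s')) = 0 := by
  rw [weightedForm_apply]
  refine Finset.sum_eq_zero fun t _ => ?_
  rcases lt_or_ge (D.height s) (D.height t) with ht | ht
  · rw [coordProd_negRays_eq_zero (Finset.empty_subset _) ht, mul_zero, zero_mul]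
  · rw [coordProd_posRays_eq_zero (Finset.empty_subset _) (ht.trans_lt h), mul_zero]

theorem weightedForm_coordProd_ne_zero (s : V) :
    weightedForm D.weight (D.coordProd (D.negRays ∅ s)) (D.coordProd (D.posRays ∅ s)) ≠ 0 := by
  rw [weightedForm_apply, Finset.sum_eq_single_of_mem s (Finset.mem_univ s) fun t _ ht => ?_]
  · exact mul_ne_zero (weight_mul_coordProd_ne_zero negRays_subset_rays)
      (coordProd_ne_zero_iff.2 posRays_subset_rays)
  · rcases (D.height_injective.ne ht).lt_or_gt with hlt | hgt
    · rw [coordProd_posRays_eq_zero (Finset.empty_subset _) hlt, mul_zero]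
    · rw [coordProd_negRays_eq_zero (Finset.empty_subset _) hgt, mul_zero, zero_mul]

theorem eq_zero_of_forall_weightedForm_sum_negRays
    (h : ∀ g ∈ D.filtration (D.dim - k), weightedForm D.weight
      (∑ s ∈ D.conesOfIndex k, c s • D.coordProd (D.negRays ∅ s)) g = 0) :
    ∀ s ∈ D.conesOfIndex k, c s = 0 := by
  refine eq_zero_of_sum_mul_triangular D.height_injective weightedForm_coordProd_ne_zero
    weightedForm_coordProd_eq_zero fun s hs => ?_
  simpa using
    h _ (card_posRays_of_mem_conesOfIndex hs ▸ coordProd_mem_filtration (D.posRays ∅ s))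

theorem eq_zero_of_forall_weightedForm_sum_posRays
    (h : ∀ g ∈ D.filtration k, weightedForm D.weight
      (∑ s ∈ D.conesOfIndex k, c s • D.coordProd (D.posRays ∅ s)) g = 0) :
    ∀ s ∈ D.conesOfIndex k, c s = 0 := by
  refine eq_zero_of_sum_mul_triangular (h := fun s => - D.height s)
    (neg_injective.comp D.height_injective) weightedForm_coordProd_ne_zero
    (M := fun s s' => weightedForm D.weight (D.coordProd (D.negRays ∅ s'))
      (D.coordProd (D.posRays ∅ s)))
    (fun h => weightedForm_coordProd_eq_zero (neg_lt_neg_iff.1 h)) fun s hs => ?_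
  rw [← h _ (card_negRays_of_mem_conesOfIndex hs ▸ coordProd_mem_filtration (D.negRays ∅ s)),
    (weightedForm_isSymm _).eq]
  simp

theorem weightedForm_eq_zero_of_mem_filtration {i j : ℕ} (hij : i + j < D.dim) {f g : V → ℝ}
    (hf : f ∈ D.filtration i) (hg : g ∈ D.filtration j) : weightedForm D.weight f g = 0 := by
  simpa [weightedForm_apply, mul_assoc] using
    D.sum_weight_mul hij _ (mul_mem_filtration hf hg)

end LocalizedFan

theorem le_span_image_of_linearIndepOn {ι K M : Type*} [Field K] [AddCommGroup M] [Module K M]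
    {W : Submodule K M} {S : Finset ι} {x b : ι → M} (hx : W ≤ Submodule.span K (x '' S))
    (hb : ∀ i ∈ S, b i ∈ W) (hli : LinearIndepOn K b (S : Set ι)) :
    W ≤ Submodule.span K (b '' S) := by
  have finite_span : FiniteDimensional K (Submodule.span K (x '' S)) :=
    FiniteDimensional.span_of_finite K (S.finite_toSet.image x)
  have := Submodule.finiteDimensional_of_le hx
  refine (Submodule.eq_of_le_of_finrank_le (Submodule.span_le.2 (Set.image_subset_iff.2 hb)) ?_).ge
  calc Module.finrank K W ≤ Module.finrank K (Submodule.span K (x '' S)) :=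
        Submodule.finrank_mono hx
    _ ≤ S.card := by
        rw [Set.image_eq_range]
        exact (finrank_range_le_card fun i : S => x i).trans_eq (Fintype.card_coe S)
    _ = Module.finrank K (Submodule.span K (b '' S)) := by
        rw [Set.image_eq_range, finrank_span_eq_card hli]
        exact (Fintype.card_coe S).symm

namespace CompleteSimplicialFan

namespace GenericPolarization

variable {d : ℕ} [NeZero d] {V R : Type*} [Fintype V] [Fintype R] {F : CompleteSimplicialFan d V R}
  {P : F.GenericPolarization} {k : ℕ} {s : V} {p : V → MvPolynomial (Fin d) ℝ}

section Generation

theorem linearForm_prod_dvd (hp : p ∈ F.piecewise k)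
    (hvanish : ∀ t, P.localizedFan.height s < P.localizedFan.height t → p t = 0) :
    ∏ r ∈ P.localizedFan.negRays ∅ s, linearForm (F.coord s r) ∣ p s := by
  refine prod_linearForm_dvd (e := F.generator) (fun r hr q _ => F.coord_generator
    (LocalizedFan.negRays_subset_rays hr) q) fun r hr y hy => ?_
  obtain ⟨s', r', hadj⟩ := exists_adjacent (LocalizedFan.negRays_subset_rays hr)
  refine hadj.eval_eq_zero hp (hvanish s' ?_) hy
  refine LocalizedFan.lt_height_of_posRays_subset (τ := ∅) (Finset.empty_subset _)
    (fun q hq => hadj.erase_subset (Finset.mem_erase.2 ⟨?_, LocalizedFan.posRays_subset_rays hq⟩))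
    hadj.ne.symm
  rintro rfl
  exact (LocalizedFan.mem_negRays.1 hr).2.not_gt (LocalizedFan.mem_posRays.1 hq).2

theorem courantProd_negRays_eq_zero {t : V}
    (h : P.localizedFan.height s < P.localizedFan.height t) :
    F.courantProd (P.localizedFan.negRays ∅ s) t = 0 := by
  have not_subset : ¬ P.localizedFan.negRays ∅ s ⊆ F.rays t := fun hsub =>
    LocalizedFan.coordProd_ne_zero_iff.2 hsub
      (LocalizedFan.coordProd_negRays_eq_zero (Finset.empty_subset _) h)
  obtain ⟨r, hr, hrt⟩ := Finset.not_subset.1 not_subset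
  rw [courantProd_apply]
  exact Finset.prod_eq_zero hr (by simp [F.coord_of_notMem hrt, linearForm])

variable (P) in
/-- The conewise polynomial functions of degree `k` that are, up to multiples of global linear
functions, linear combinations of the monomials `courantProd (negRays s)`. -/
noncomputable def generated (k : ℕ) : Submodule ℝ (V → MvPolynomial (Fin d) ℝ) :=
  Submodule.span ℝ ((fun s => F.courantProd (P.localizedFan.negRays ∅ s)) ''
    P.localizedFan.conesOfIndex k) ⊔ F.mPiecewise k

theorem smul_courantProd_mem_generated {j : ℕ} {q : MvPolynomial (Fin d) ℝ}
    (hq : q.IsHomogeneous j) (hk : (P.localizedFan.negRays ∅ s).card + j = k) :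
    q • F.courantProd (P.localizedFan.negRays ∅ s) ∈ P.generated k := by
  subst hk
  cases j with
  | zero =>
    have hmem : F.courantProd (P.localizedFan.negRays ∅ s) ∈ P.generated
        ((P.localizedFan.negRays ∅ s).card + 0) :=
      Submodule.mem_sup_left (Submodule.subset_span
        ⟨s, by simp [LocalizedFan.conesOfIndex], rfl⟩)
    rw [← MvPolynomial.totalDegree_zero_iff_isHomogeneous,
      MvPolynomial.totalDegree_eq_zero_iff_eq_C] at hq
    rw [hq, ← MvPolynomial.algebraMap_eq, algebraMap_smul]
    exact Submodule.smul_mem _ _ hmem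
  | succ j =>
    exact Submodule.mem_sup_right (smul_mem_mPiecewise hq (courantProd_mem_piecewise _))

theorem exists_mem_generated_eq (hp : p ∈ F.piecewise k)
    (hvanish : ∀ t, P.localizedFan.height s < P.localizedFan.height t → p t = 0) :
    ∃ g ∈ P.generated k, g ∈ F.piecewise k ∧
      ∀ t, P.localizedFan.height s ≤ P.localizedFan.height t → g t = p t := by
  have prod_homogeneous : (∏ r ∈ P.localizedFan.negRays ∅ s, linearForm (F.coord s r)).IsHomogeneous
      (P.localizedFan.negRays ∅ s).card :=
    courantProd_apply (F := F) _ s ▸ (courantProd_mem_piecewise _).1 s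
  have eq_of_apply_eq : ∀ g : V → MvPolynomial (Fin d) ℝ, g s = p s →
      (∀ t, P.localizedFan.height s < P.localizedFan.height t → g t = 0) →
      ∀ t, P.localizedFan.height s ≤ P.localizedFan.height t → g t = p t := by
    intro g hgs hg t ht
    rcases ht.eq_or_lt with heq | hlt
    · rwa [← P.localizedFan.height_injective heq]
    · rw [hg t hlt, hvanish t hlt]
  rcases exists_isHomogeneous_eq_mul (hp.1 s) prod_homogeneous (linearForm_prod_dvd hp hvanish) with
    h0 | ⟨j, hj, q, hq, hpq⟩
  · exact ⟨0, zero_mem _, zero_mem _, eq_of_apply_eq 0 h0.symm fun _ _ => rfl⟩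
  · refine ⟨q • F.courantProd (P.localizedFan.negRays ∅ s), smul_courantProd_mem_generated hq hj,
      hj ▸ smul_mem_piecewise hq (courantProd_mem_piecewise _), eq_of_apply_eq _ ?_ fun t ht => ?_⟩
    · rw [Pi.smul_apply, courantProd_apply, hpq, smul_eq_mul, mul_comm]
    · rw [Pi.smul_apply, courantProd_negRays_eq_zero ht, smul_zero]

theorem exists_highest_ne_zero (P : F.GenericPolarization) (hp : p ≠ 0) :
    ∃ s, p s ≠ 0 ∧ ∀ t, P.localizedFan.height s < P.localizedFan.height t → p t = 0 := by
  obtain ⟨s₀, hs₀⟩ := Function.ne_iff.1 hp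
  obtain ⟨s, hs, hmax⟩ := Finset.exists_max_image (Finset.univ.filter (p · ≠ 0))
    P.localizedFan.height ⟨s₀, by simpa using hs₀⟩
  refine ⟨s, (Finset.mem_filter.1 hs).2, fun t ht => ?_⟩
  by_contra hpt
  exact ht.not_ge (hmax t (by simpa using hpt))

theorem mem_generated_of_vanish (s : V) : ∀ p ∈ F.piecewise k,
    (∀ t, P.localizedFan.height s < P.localizedFan.height t → p t = 0) → p ∈ P.generated k := by
  have : IsTrans V (InvImage (· < ·) P.localizedFan.height) := ⟨fun _ _ _ => lt_trans⟩
  have : Std.Irrefl (InvImage (· < ·) P.localizedFan.height) := ⟨fun _ => lt_irrefl _⟩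
  have wf := Finite.wellFounded_of_trans_of_irrefl (InvImage (· < ·) P.localizedFan.height)
  induction s using wf.induction with
  | _ s ih =>
    intro p hp hvanish
    obtain ⟨g, hg, hgk, hgp⟩ := exists_mem_generated_eq hp hvanish
    suffices p - g ∈ P.generated k by simpa using add_mem this hg
    rcases eq_or_ne (p - g) 0 with h0 | hne
    · exact h0 ▸ zero_mem _
    · obtain ⟨s', hs', hvanish'⟩ := exists_highest_ne_zero P hne
      refine ih s' (lt_of_not_ge fun hle => hs' ?_) _ (sub_mem hp hgk) hvanish'
      rw [Pi.sub_apply, hgp s' hle, sub_self]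

theorem piecewise_le_generated : F.piecewise k ≤ P.generated k := by
  intro p hp
  rcases eq_or_ne p 0 with rfl | hne
  · exact zero_mem _
  · obtain ⟨s, -, hvanish⟩ := exists_highest_ne_zero P hne
    exact mem_generated_of_vanish s p hp hvanish

end Generation

section Duality

theorem exists_sub_sum_mem_mPiecewise (P : F.GenericPolarization) (hp : p ∈ F.piecewise k) :
    ∃ c : V → ℝ, p - ∑ s ∈ P.localizedFan.conesOfIndex k,
      c s • F.courantProd (P.localizedFan.negRays ∅ s) ∈ F.mPiecewise k := by
  obtain ⟨_, hspan, h, hh, rfl⟩ := Submodule.mem_sup.1 (piecewise_le_generated (P := P) hp)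
  obtain ⟨c, rfl⟩ := Submodule.mem_span_image_finset_iff_exists_fun' .. |>.1 hspan
  exact ⟨c, by simpa using hh⟩

theorem map_mkQ_piecewise_le_span (P : F.GenericPolarization) (k : ℕ) :
    (F.piecewise k).map (F.mPiecewise k).mkQ ≤ Submodule.span ℝ
      ((fun s => (F.mPiecewise k).mkQ (F.courantProd (P.localizedFan.negRays ∅ s))) ''
        P.localizedFan.conesOfIndex k) := by
  rintro _ ⟨p, hp, rfl⟩
  obtain ⟨c, hc⟩ := exists_sub_sum_mem_mPiecewise P hp
  rw [Submodule.mem_span_image_finset_iff_exists_fun']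
  refine ⟨c, ?_⟩
  simp only [← map_smul, ← map_sum]
  exact ((Submodule.Quotient.eq _).2 hc).symm

variable (P) in
/-- Evaluation of conewise polynomial functions at the generic point. -/
noncomputable abbrev eval : (V → MvPolynomial (Fin d) ℝ) →ₐ[ℝ] V → ℝ := evalAt P.point

theorem eval_courantProd (τ : Finset R) :
    P.eval (F.courantProd τ) = P.localizedFan.coordProd τ := by
  rw [courantProd, map_prod]
  exact Finset.prod_congr rfl fun r _ => evalAt_courant P.point r

theorem eval_mem_filtration_of_mem_mPiecewise
    (h : ∀ p ∈ F.piecewise k, P.eval p ∈ P.localizedFan.filtration k) :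
    ∀ p ∈ F.mPiecewise (k + 1), P.eval p ∈ P.localizedFan.filtration k := by
  suffices F.mPiecewise (k + 1) ≤ (P.localizedFan.filtration k).comap P.eval.toLinearMap from this
  refine Submodule.span_le.2 ?_
  rintro _ ⟨φ, p, hp, rfl⟩
  change P.eval (linearForm φ • p) ∈ P.localizedFan.filtration k
  rw [evalAt_smul]
  exact Submodule.smul_mem _ _ (h p hp)

theorem eval_mem_filtration_of_le
    (h : ∀ q ∈ F.mPiecewise k, P.eval q ∈ P.localizedFan.filtration k) (hp : p ∈ F.piecewise k) :
    P.eval p ∈ P.localizedFan.filtration k := by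
  obtain ⟨c, hc⟩ := exists_sub_sum_mem_mPiecewise P hp
  have eval_sub_mem := h _ hc
  rw [map_sub, map_sum] at eval_sub_mem
  refine (Submodule.sub_mem_iff_left _ (sum_mem fun s hs => ?_)).1 eval_sub_mem
  rw [map_smul, eval_courantProd]
  exact Submodule.smul_mem _ _ (LocalizedFan.card_negRays_of_mem_conesOfIndex hs ▸
    LocalizedFan.coordProd_mem_filtration _)

theorem eval_mem_filtration (hp : p ∈ F.piecewise k) : P.eval p ∈ P.localizedFan.filtration k := by
  induction k generalizing p with
  | zero => exact eval_mem_filtration_of_le (fun q hq => by simp_all [mPiecewise]) hp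
  | succ k ih =>
    exact eval_mem_filtration_of_le (fun q hq => LocalizedFan.filtration_mono k.le_succ
      (eval_mem_filtration_of_mem_mPiecewise (fun q => ih) q hq)) hp

theorem weightedForm_eval_eq_zero (hk : k ≤ d) (hp : p ∈ F.mPiecewise k) {g : V → ℝ}
    (hg : g ∈ P.localizedFan.filtration (d - k)) :
    weightedForm P.localizedFan.weight (P.eval p) g = 0 := by
  cases k with
  | zero => rw [(Submodule.mem_bot ℝ).1 hp, map_zero, map_zero, LinearMap.zero_apply]
  | succ k =>
    refine LocalizedFan.weightedForm_eq_zero_of_mem_filtration (i := k) (j := d - (k + 1)) ?_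
      (eval_mem_filtration_of_mem_mPiecewise (fun q hq => eval_mem_filtration hq) p hp) hg
    change k + (d - (k + 1)) < d
    omega

theorem mem_mPiecewise_of_forall_weightedForm_eq_zero (hk : k ≤ d) (hp : p ∈ F.piecewise k)
    (h : ∀ g ∈ P.localizedFan.filtration (d - k),
      weightedForm P.localizedFan.weight (P.eval p) g = 0) : p ∈ F.mPiecewise k := by
  obtain ⟨c, hc⟩ := exists_sub_sum_mem_mPiecewise P hp
  have c_eq_zero : ∀ s ∈ P.localizedFan.conesOfIndex k, c s = 0 := by
    refine LocalizedFan.eq_zero_of_forall_weightedForm_sum_negRays fun g hg => ?_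
    have orthogonal := weightedForm_eval_eq_zero hk hc hg
    simpa only [map_sub, LinearMap.sub_apply, h g hg, zero_sub, neg_eq_zero, map_sum, map_smul,
      eval_courantProd] using orthogonal
  rwa [Finset.sum_eq_zero fun s hs => by rw [c_eq_zero s hs, zero_smul], sub_zero] at hc

end Duality

section HardLefschetz

theorem eval_linearPieces_pow_mul (m : ℕ) (p : V → MvPolynomial (Fin d) ℝ) :
    P.eval (F.linearPieces P.function ^ m * p) = P.localizedFan.height ^ m * P.eval p := by
  rw [map_mul, map_pow, evalAt_linearPieces]
  rfl

theorem weightedForm_eval_eq_zero_of_linearPieces_pow_mul_mem (hk : 2 * k < d)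
    (hp : p ∈ F.piecewise k)
    (h : F.linearPieces P.function ^ (d - 2 * k) * p ∈ F.mPiecewise (d - k)) :
    ∀ g ∈ P.localizedFan.filtration (d - k),
      weightedForm P.localizedFan.weight (P.eval p) g = 0 := by
  refine LocalizedFan.weightedForm_eq_zero_of_height_pow_mul (D := P.localizedFan) hk
    (eval_mem_filtration hp) fun g hg => ?_
  rw [← Nat.sub_sub_self (show k ≤ d by omega)] at hg
  rw [← weightedForm_eval_eq_zero (Nat.sub_le d k) h hg, eval_linearPieces_pow_mul]
  change weightedForm _ _ (P.localizedFan.height ^ (d - 2 * k) * g) = _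
  exact weightedForm_congr fun s => by simp only [Pi.mul_apply]; ring

theorem mem_mPiecewise_of_linearPieces_pow_mul_mem (hk : 2 * k < d) (hp : p ∈ F.piecewise k)
    (h : F.linearPieces P.function ^ (d - 2 * k) * p ∈ F.mPiecewise (d - k)) :
    p ∈ F.mPiecewise k :=
  mem_mPiecewise_of_forall_weightedForm_eq_zero (by omega) hp
    (weightedForm_eval_eq_zero_of_linearPieces_pow_mul_mem hk hp h)

theorem courantProd_posRays_mem_piecewise (hk : k ≤ d)
    (hs : s ∈ P.localizedFan.conesOfIndex (d - k)) :
    F.courantProd (P.localizedFan.posRays ∅ s) ∈ F.piecewise k := by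
  have card_eq : (P.localizedFan.posRays ∅ s).card = d - (d - k) :=
    LocalizedFan.card_posRays_of_mem_conesOfIndex hs
  rw [← Nat.sub_sub_self hk, ← card_eq]
  exact courantProd_mem_piecewise _

theorem linearIndepOn_linearPieces_pow_mul_courantProd (P : F.GenericPolarization)
    (hk : 2 * k < d) :
    LinearIndepOn ℝ (fun s => (F.mPiecewise (d - k)).mkQ
        (F.linearPieces P.function ^ (d - 2 * k) * F.courantProd (P.localizedFan.posRays ∅ s)))
      (P.localizedFan.conesOfIndex (d - k) : Set V) := by
  refine linearIndepOn_finset_iff.2 fun c hc => ?_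
  simp only [← map_smul, ← map_sum, ← mul_smul_comm, ← Finset.mul_sum] at hc
  rw [Submodule.mkQ_apply, Submodule.Quotient.mk_eq_zero] at hc
  have sum_mem : ∑ s ∈ P.localizedFan.conesOfIndex (d - k),
      c s • F.courantProd (P.localizedFan.posRays ∅ s) ∈ F.piecewise k :=
    Submodule.sum_mem _ fun s hs =>
      Submodule.smul_mem _ _ (courantProd_posRays_mem_piecewise (by omega) hs)
  refine LocalizedFan.eq_zero_of_forall_weightedForm_sum_posRays fun g hg => ?_
  have orthogonal := weightedForm_eval_eq_zero_of_linearPieces_pow_mul_mem hk sum_mem hc g hg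
  simpa only [map_sum, map_smul, eval_courantProd] using orthogonal

theorem exists_sub_linearPieces_pow_mul_mem (P : F.GenericPolarization) (hk : 2 * k < d)
    (hp : p ∈ F.piecewise (d - k)) : ∃ q ∈ F.piecewise k,
      p - F.linearPieces P.function ^ (d - 2 * k) * q ∈ F.mPiecewise (d - k) := by
  have mem_span := le_span_image_of_linearIndepOn
    (map_mkQ_piecewise_le_span P (d - k))
    (fun s hs => Submodule.mem_map_of_mem
      (P.isConvexConewiseLinear.linearPieces_pow_mul_mem_piecewise hk
        (courantProd_posRays_mem_piecewise (by omega) hs)))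
    (linearIndepOn_linearPieces_pow_mul_courantProd P hk) (Submodule.mem_map_of_mem hp)
  obtain ⟨c, hc⟩ := Submodule.mem_span_image_finset_iff_exists_fun' .. |>.1 mem_span
  refine ⟨∑ s ∈ P.localizedFan.conesOfIndex (d - k),
    c s • F.courantProd (P.localizedFan.posRays ∅ s), Submodule.sum_mem _ fun s hs =>
      Submodule.smul_mem _ _ (courantProd_posRays_mem_piecewise (by omega) hs), ?_⟩
  simp only [← map_smul, ← map_sum, ← mul_smul_comm, ← Finset.mul_sum] at hc
  rwa [← Submodule.Quotient.mk_eq_zero, Submodule.Quotient.mk_sub, sub_eq_zero, eq_comm]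

end HardLefschetz

end GenericPolarization

end CompleteSimplicialFan


section ConeHull

variable {E : Type*} [AddCommGroup E] [Module ℝ E] {S T : Finset E} {w : E}

theorem coneHull_eq_span (S : Finset E) : coneHull S = Submodule.span NNReal (S : Set E) := by
  ext x
  rw [SetLike.mem_coe, Submodule.mem_span_finset']
  constructor
  · rintro ⟨a, ha, rfl⟩
    exact ⟨fun w => ⟨a w, ha w⟩, Finset.sum_coe_sort S fun w => a w • w⟩
  · rintro ⟨a, rfl⟩
    refine ⟨fun w => if h : w ∈ S then a ⟨w, h⟩ else 0, fun w => ?_, ?_⟩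
    · dsimp only
      split_ifs <;> simp
    · rw [← Finset.sum_coe_sort S]
      exact Finset.sum_congr rfl fun w _ => by simp [NNReal.smul_def]

theorem subset_coneHull (S : Finset E) : (S : Set E) ⊆ coneHull S := by
  rw [coneHull_eq_span]
  exact Submodule.subset_span

theorem smul_mem_coneHull {x : E} (hx : x ∈ coneHull S) {t : ℝ} (ht : 0 ≤ t) :
    t • x ∈ coneHull S := by
  rw [coneHull_eq_span] at hx ⊢
  exact Submodule.smul_mem _ (⟨t, ht⟩ : NNReal) hx

theorem sum_mem_coneHull {ι : Type*} {I : Finset ι} {x : ι → E} (hx : ∀ i ∈ I, x i ∈ coneHull S) :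
    ∑ i ∈ I, x i ∈ coneHull S := by
  rw [coneHull_eq_span] at hx ⊢
  exact Submodule.sum_mem _ hx

theorem coneHull_subset_coneHull_iff : coneHull S ⊆ coneHull T ↔ (S : Set E) ⊆ coneHull T := by
  simp_rw [coneHull_eq_span]
  exact Submodule.span_le

theorem coneHull_mono (h : S ⊆ T) : coneHull S ⊆ coneHull T :=
  coneHull_subset_coneHull_iff.2 ((Finset.coe_subset.2 h).trans (subset_coneHull T))

theorem span_coneHull (S : Finset E) :
    Submodule.span ℝ (coneHull S) = Submodule.span ℝ (S : Set E) := by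
  rw [coneHull_eq_span]
  exact Submodule.span_span_of_tower NNReal ℝ _

theorem IsConeFace.exists_subset_eq_coneHull {τ : Set E} (h : IsConeFace (coneHull S) τ) :
    ∃ S' ⊆ S, τ = coneHull S' := by
  rcases h with rfl | ⟨φ, hφ, rfl⟩
  · exact ⟨S, subset_rfl, rfl⟩
  refine ⟨S.filter fun w => φ w = 0, S.filter_subset _, Set.Subset.antisymm ?_ fun x hx =>
    ⟨coneHull_mono (S.filter_subset _) hx, ?_⟩⟩
  · rintro _ ⟨⟨a, ha, rfl⟩, hφx⟩
    have terms_nonpos : ∀ w ∈ S, a w * φ w ≤ 0 := fun w hw =>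
      mul_nonpos_of_nonneg_of_nonpos (ha w) (hφ w (subset_coneHull S hw))
    have terms_eq_zero := (Finset.sum_eq_zero_iff_of_nonpos terms_nonpos).1 (by simpa using hφx)
    refine ⟨a, ha, (Finset.sum_subset (S.filter_subset _) fun w hw hw' => ?_).symm⟩
    have : φ w ≠ 0 := by simpa [hw] using hw'
    rw [(mul_eq_zero.1 (terms_eq_zero w hw)).resolve_right this, zero_smul]
  · obtain ⟨a, -, rfl⟩ := hx
    rw [map_sum]
    exact Finset.sum_eq_zero fun w hw => by rw [map_smul, (Finset.mem_filter.1 hw).2, smul_zero]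

theorem coeff_eq_of_sum_smul_eq (hS : LinearIndepOn ℝ id (S : Set E)) {a b : E → ℝ}
    (hab : ∑ u ∈ S, a u • u = ∑ u ∈ S, b u • u) (hw : w ∈ S) : a w = b w := by
  refine sub_eq_zero.1 (linearIndepOn_finset_iff.1 hS (fun u => a u - b u) ?_ w hw)
  simp only [id, sub_smul, Finset.sum_sub_distrib, hab, sub_self]

theorem eq_of_sum_mem_coneHull (hT : LinearIndepOn ℝ id (T : Set E)) (hST : S ⊆ T)
    (h : ∑ w ∈ T, w ∈ coneHull S) : S = T := by
  obtain ⟨a, -, ha⟩ := h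
  refine hST.antisymm fun w hw => by_contra fun hwS => ?_
  have sum_eq : ∑ u ∈ T, (1 : ℝ) • u = ∑ u ∈ T, (if u ∈ S then a u else 0) • u := by
    simp only [one_smul, ha, ite_smul, zero_smul, ← Finset.sum_filter,
      Finset.filter_mem_eq_inter, Finset.inter_eq_right.2 hST]
  simpa [hwS] using coeff_eq_of_sum_smul_eq hT sum_eq hw

theorem exists_eq_smul_of_add_eq (hS : LinearIndepOn ℝ id (S : Set E)) (hw : w ∈ S) {x y : E}
    (hx : x ∈ coneHull S) (hy : y ∈ coneHull S) (hxy : x + y = w) :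
    ∃ c : ℝ, 0 ≤ c ∧ x = c • w := by
  obtain ⟨a, ha, rfl⟩ := hx
  obtain ⟨b, hb, rfl⟩ := hy
  have sum_eq : ∑ u ∈ S, (a u + b u) • u = ∑ u ∈ S, (if u = w then 1 else 0 : ℝ) • u := by
    simp [add_smul, Finset.sum_add_distrib, hxy, hw]
  refine ⟨a w, ha w, Finset.sum_eq_single w (fun u hu huw => ?_) (absurd hw)⟩
  have coeff_eq : a u + b u = 0 := by simpa [huw] using coeff_eq_of_sum_smul_eq hS sum_eq hu
  rw [((add_eq_zero_iff_of_nonneg (ha u) (hb u)).1 coeff_eq).1, zero_smul]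

end ConeHull

section Coordinates

variable {E : Type*} [AddCommGroup E] [Module ℝ E] {S : Finset E}

/-- The basis of `E` formed by the elements of `S`. -/
noncomputable def generatorBasis (hS : LinearIndepOn ℝ id (S : Set E))
    (hspan : Submodule.span ℝ (S : Set E) = ⊤) : Module.Basis S ℝ E :=
  Module.Basis.mk hS.linearIndependent (by simp [hspan])

/-- The coordinate along `w` in the basis `S` of `E`, extended by zero to the vectors `w`
outside `S`. -/
noncomputable def generatorCoord (hS : LinearIndepOn ℝ id (S : Set E))
    (hspan : Submodule.span ℝ (S : Set E) = ⊤) (w : E) : Module.Dual ℝ E :=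
  if h : w ∈ S then (generatorBasis hS hspan).coord ⟨w, h⟩ else 0

variable (hS : LinearIndepOn ℝ id (S : Set E)) (hspan : Submodule.span ℝ (S : Set E) = ⊤)

theorem generatorBasis_apply (w : S) : generatorBasis hS hspan w = w :=
  Module.Basis.mk_apply _ _ _

theorem generatorCoord_of_notMem {w : E} (hw : w ∉ S) : generatorCoord hS hspan w = 0 :=
  dif_neg hw

theorem sum_generatorCoord_smul (y : E) : ∑ w ∈ S, generatorCoord hS hspan w y • w = y := by
  rw [← Finset.sum_coe_sort S]
  conv_rhs => rw [← (generatorBasis hS hspan).sum_repr y]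
  exact Finset.sum_congr rfl fun w _ => by simp [generatorCoord, generatorBasis_apply]

theorem generatorCoord_sum_smul {T : Finset E} (hT : T ⊆ S) (a : E → ℝ) (w : E) :
    generatorCoord hS hspan w (∑ u ∈ T, a u • u) = if w ∈ T then a w else 0 := by
  by_cases hw : w ∈ S
  · refine coeff_eq_of_sum_smul_eq hS (a := fun w => generatorCoord hS hspan w _)
      (b := fun w => if w ∈ T then a w else 0) ?_ hw
    simp only [sum_generatorCoord_smul, ite_smul, zero_smul, ← Finset.sum_filter,
      Finset.filter_mem_eq_inter, Finset.inter_eq_right.2 hT]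
  · rw [generatorCoord_of_notMem hS hspan hw, if_neg fun h => hw (hT h), LinearMap.zero_apply]

theorem generatorCoord_apply_mem [DecidableEq E] {u : E} (hu : u ∈ S) (w : E) :
    generatorCoord hS hspan w u = if w = u then 1 else 0 := by
  simpa using generatorCoord_sum_smul hS hspan (Finset.singleton_subset_iff.2 hu) (fun _ => 1) w

theorem mem_coneHull_iff_generatorCoord_nonneg {T : Finset E} (hT : S ⊆ T) {y : E} :
    y ∈ coneHull S ↔ ∀ w : T, 0 ≤ generatorCoord hS hspan w y := by
  constructor
  · rintro ⟨a, ha, rfl⟩ w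
    rw [generatorCoord_sum_smul hS hspan subset_rfl]
    split_ifs
    exacts [ha w, le_rfl]
  · refine fun h => ⟨fun w => generatorCoord hS hspan w y, fun w => ?_,
      (sum_generatorCoord_smul hS hspan y).symm⟩
    by_cases hw : w ∈ S
    · exact h ⟨w, hT hw⟩
    · simp [generatorCoord_of_notMem hS hspan hw]

end Coordinates

section OfGenerators

variable {d : ℕ} {V : Type*} [Fintype V]

theorem subset_biUnion_univ {α : Type*} [DecidableEq α] (g : V → Finset α) (s : V) :
    g s ⊆ Finset.univ.biUnion g :=
  Finset.subset_biUnion_of_mem g (Finset.mem_univ s)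

theorem map_subtype_biUnion_univ {α : Type*} [DecidableEq α] (g : V → Finset α) (s : V) :
    ((g s).subtype (· ∈ Finset.univ.biUnion g)).map (Function.Embedding.subtype _) = g s :=
  Finset.subtype_map_of_mem (subset_biUnion_univ g s)

/-- The fan with maximal cones `coneHull (g s)`; its rays are indexed by their generators. -/
noncomputable def CompleteSimplicialFan.ofGenerators (g : V → Finset (Fin d → ℝ))
    (hinj : Function.Injective g) (hli : ∀ s, LinearIndepOn ℝ id (g s : Set (Fin d → ℝ)))
    (hspan : ∀ s, Submodule.span ℝ (g s : Set (Fin d → ℝ)) = ⊤)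
    (hcover : ∀ y, ∃ s, y ∈ coneHull (g s))
    (hinter : ∀ s s', coneHull (g s) ∩ coneHull (g s') ⊆ coneHull (g s ∩ g s')) :
    CompleteSimplicialFan d V (Finset.univ.biUnion g) where
  generator r := r
  rays s := (g s).subtype _
  rays_injective s s' h := hinj <| by
    rw [← map_subtype_biUnion_univ g s, ← map_subtype_biUnion_univ g s']
    exact congrArg _ h
  card_rays s := by
    rw [← Finset.card_map (Function.Embedding.subtype _), map_subtype_biUnion_univ g s,
      ← finrank_span_finset_eq_card (hli s), hspan s, finrank_top, Module.finrank_fin_fun]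
  coord s r := generatorCoord (hli s) (hspan s) r
  coord_of_notMem hr := generatorCoord_of_notMem _ _ fun h => hr (Finset.mem_subtype.2 h)
  coord_generator hr' r := by
    rw [generatorCoord_apply_mem _ _ (Finset.mem_subtype.1 hr')]
    congr 1
    exact propext Subtype.ext_iff.symm
  sum_coord_smul s y := by
    conv_rhs => rw [← sum_generatorCoord_smul (hli s) (hspan s) y]
    rw [Finset.sum_coe_sort _ fun w => generatorCoord (hli s) (hspan s) w y • w]
    refine (Finset.sum_subset (subset_biUnion_univ g s) fun w _ hw => ?_).symm
    rw [generatorCoord_of_notMem _ _ hw, LinearMap.zero_apply, zero_smul]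
  exists_mem_rays r := by
    obtain ⟨s, -, hs⟩ := Finset.mem_biUnion.1 r.2
    exact ⟨s, Finset.mem_subtype.2 hs⟩
  exists_coord_nonneg y := by
    obtain ⟨s, hs⟩ := hcover y
    exact ⟨s, (mem_coneHull_iff_generatorCoord_nonneg _ _ (subset_biUnion_univ g s)).1 hs⟩
  coord_eq_of_nonneg {s s' y} hy hy' r := by
    rw [← mem_coneHull_iff_generatorCoord_nonneg _ _ (subset_biUnion_univ g _)] at hy hy'
    obtain ⟨a, -, rfl⟩ := hinter s s' ⟨hy, hy'⟩
    rw [generatorCoord_sum_smul _ _ Finset.inter_subset_left,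
      generatorCoord_sum_smul _ _ Finset.inter_subset_right]

theorem CompleteSimplicialFan.cone_ofGenerators (g : V → Finset (Fin d → ℝ))
    (hinj : Function.Injective g) (hli : ∀ s, LinearIndepOn ℝ id (g s : Set (Fin d → ℝ)))
    (hspan : ∀ s, Submodule.span ℝ (g s : Set (Fin d → ℝ)) = ⊤)
    (hcover : ∀ y, ∃ s, y ∈ coneHull (g s))
    (hinter : ∀ s s', coneHull (g s) ∩ coneHull (g s') ⊆ coneHull (g s ∩ g s')) (s : V) :
    (ofGenerators g hinj hli hspan hcover hinter).cone s = coneHull (g s) := by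
  ext y
  exact (mem_coneHull_iff_generatorCoord_nonneg (hli s) (hspan s) (subset_biUnion_univ g s)).symm

end OfGenerators

section UnitGenerators

variable {E : Type*} [NormedAddCommGroup E] [NormedSpace ℝ E] {σ τ : Set E} {S T : Finset E}

/-- `S` is the set of the unit generators of the rays of the simplicial cone `σ`. -/
structure IsUnitGeneratorsOf (S : Finset E) (σ : Set E) : Prop where
  linearIndepOn : LinearIndepOn ℝ id (S : Set E)
  norm_eq_one : ∀ w ∈ S, ‖w‖ = 1
  coneHull_eq : coneHull S = σ

theorem exists_isUnitGeneratorsOf_coneHull (hS : LinearIndepOn ℝ id (S : Set E)) :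
    ∃ T, IsUnitGeneratorsOf T (coneHull S) := by
  have norm_ne_zero (w : S) : ‖(w : E)‖ ≠ 0 := norm_ne_zero_iff.2 (hS.ne_zero w.2)
  set v : S → E := fun w => ‖(w : E)‖⁻¹ • (w : E) with hv
  have v_linearIndependent : LinearIndependent ℝ v :=
    LinearIndependent.units_smul (v := ((↑) : S → E)) hS
      fun w => (Units.mk0 _ (norm_ne_zero w))⁻¹
  refine ⟨Finset.univ.image v, ?_, ?_, Set.Subset.antisymm ?_ ?_⟩
  · simpa using v_linearIndependent.linearIndepOn_id
  · simp only [Finset.forall_mem_image, Finset.mem_univ, true_imp_iff]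
    exact fun w => by rw [hv, norm_smul, norm_inv, norm_norm, inv_mul_cancel₀ (norm_ne_zero w)]
  · rw [coneHull_subset_coneHull_iff, Finset.coe_image, Set.image_subset_iff]
    exact fun w _ => smul_mem_coneHull (subset_coneHull S w.2) (inv_nonneg.2 (norm_nonneg _))
  · refine coneHull_subset_coneHull_iff.2 fun w hw => ?_
    have w_eq : w = ‖w‖ • v ⟨w, hw⟩ := (smul_inv_smul₀ (norm_ne_zero ⟨w, hw⟩) w).symm
    rw [w_eq]
    exact smul_mem_coneHull (subset_coneHull _ (by simp)) (norm_nonneg _)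

namespace IsUnitGeneratorsOf

-- A generator spans an extreme ray, so one of the summands in its expression through `T` is a
-- multiple of it.
theorem subset (hS : IsUnitGeneratorsOf S σ) (hT : IsUnitGeneratorsOf T σ) : S ⊆ T := by
  intro w hw
  have T_subset : ∀ t ∈ T, t ∈ coneHull S := fun t ht => by
    rw [hS.coneHull_eq, ← hT.coneHull_eq]
    exact subset_coneHull T ht
  obtain ⟨b, hb, hwb⟩ : w ∈ coneHull T := by
    rw [hT.coneHull_eq, ← hS.coneHull_eq]
    exact subset_coneHull S hw
  have summand_mem : ∀ t ∈ T, b t • t ∈ coneHull S := fun t ht =>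
    smul_mem_coneHull (T_subset t ht) (hb t)
  obtain ⟨t, ht, hbt⟩ := Finset.exists_ne_zero_of_sum_ne_zero
    (hwb ▸ hS.linearIndepOn.ne_zero hw : ∑ t ∈ T, b t • t ≠ 0)
  obtain ⟨c, hc, hct⟩ := exists_eq_smul_of_add_eq hS.linearIndepOn hw (summand_mem t ht)
    (sum_mem_coneHull fun u hu => summand_mem u (Finset.mem_of_mem_erase hu))
    ((Finset.add_sum_erase T (fun u => b u • u) ht).trans hwb.symm)
  have b_eq : b t = c := by
    simpa [norm_smul, hS.norm_eq_one w hw, hT.norm_eq_one t ht, abs_of_nonneg, hb t, hc]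
      using congrArg norm hct
  have b_ne_zero : b t ≠ 0 := left_ne_zero_of_smul hbt
  have t_eq : t = w := smul_right_injective E b_ne_zero (hct.trans (by rw [b_eq]))
  exact t_eq ▸ ht

theorem eq (hS : IsUnitGeneratorsOf S σ) (hT : IsUnitGeneratorsOf T σ) : S = T :=
  (hS.subset hT).antisymm (hT.subset hS)

theorem exists_subset_of_isConeFace (hS : IsUnitGeneratorsOf S σ) (h : IsConeFace σ τ) :
    ∃ T ⊆ S, IsUnitGeneratorsOf T τ := by
  obtain ⟨T, hTS, rfl⟩ := (hS.coneHull_eq ▸ h).exists_subset_eq_coneHull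
  exact ⟨T, hTS, hS.linearIndepOn.mono hTS, fun w hw => hS.norm_eq_one w (hTS hw), rfl⟩

theorem sum_mem (hS : IsUnitGeneratorsOf S σ) : ∑ w ∈ S, w ∈ σ :=
  hS.coneHull_eq ▸ sum_mem_coneHull fun _ hw => subset_coneHull S hw

theorem span_eq (hS : IsUnitGeneratorsOf S σ) :
    Submodule.span ℝ (S : Set E) = Submodule.span ℝ σ := by
  rw [← span_coneHull, hS.coneHull_eq]

theorem isClosed [FiniteDimensional ℝ E] (hS : IsUnitGeneratorsOf S σ)
    (hspan : Submodule.span ℝ σ = ⊤) : IsClosed σ := by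
  have cone_eq : σ = ⋂ w : S, {y | 0 ≤ generatorCoord hS.linearIndepOn
      (hS.span_eq.trans hspan) w y} := by
    refine hS.coneHull_eq.symm.trans (Set.ext fun y => ?_)
    rw [mem_coneHull_iff_generatorCoord_nonneg _ _ subset_rfl, Set.mem_iInter]
    rfl
  rw [cone_eq]
  exact isClosed_iInter fun w =>
    isClosed_le continuous_const (LinearMap.continuous_of_finiteDimensional _)

end IsUnitGeneratorsOf

end UnitGenerators

section MaximalCones

/-- The full-dimensional cones of a fan. -/
noncomputable def maximalCones {E : Type*} [AddCommGroup E] [Module ℝ E] (Δ : Finset (Set E)) :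
    Finset (Set E) :=
  Δ.filter fun σ => Submodule.span ℝ σ = ⊤

variable {E : Type*} [NormedAddCommGroup E] [NormedSpace ℝ E] {Δ : Finset (Set E)} {σ τ : Set E}

theorem IsSimplicialFan.exists_isUnitGeneratorsOf (hΔ : IsSimplicialFan Δ) (hσ : σ ∈ Δ) :
    ∃ S, IsUnitGeneratorsOf S σ := by
  obtain ⟨S, hS, rfl⟩ := hΔ.2 σ hσ
  exact exists_isUnitGeneratorsOf_coneHull hS

theorem IsFan.inter_subset_coneHull_inter [DecidableEq E] (hΔ : IsFan Δ) (hσ : σ ∈ Δ) (hτ : τ ∈ Δ)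
    {S T : Finset E} (hS : IsUnitGeneratorsOf S σ) (hT : IsUnitGeneratorsOf T τ) :
    σ ∩ τ ⊆ coneHull (S ∩ T) := by
  obtain ⟨face_left, face_right⟩ := hΔ.2.2 σ hσ τ hτ
  obtain ⟨U, hUS, hU⟩ := hS.exists_subset_of_isConeFace face_left
  obtain ⟨U', hU'T, hU'⟩ := hT.exists_subset_of_isConeFace face_right
  obtain rfl := hU.eq hU'
  rw [← hU.coneHull_eq]
  exact coneHull_mono (Finset.subset_inter hUS hU'T)

-- The cones that are not full-dimensional lie in hyperplanes, so a point outside the closed union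
-- of the maximal cones could be moved to a point outside all cones.
theorem IsCompleteFan.exists_mem_maximalCones [FiniteDimensional ℝ E] (hΔ : IsCompleteFan Δ)
    (hsimp : IsSimplicialFan Δ) (y : E) : ∃ σ ∈ maximalCones Δ, y ∈ σ := by
  by_contra! hy
  have isOpen_compl : IsOpen (⋃ σ ∈ maximalCones Δ, σ)ᶜ := by
    refine (isClosed_biUnion_finset fun σ hσ => ?_).isOpen_compl
    obtain ⟨hσΔ, hσspan⟩ := Finset.mem_filter.1 hσ
    obtain ⟨S, hS⟩ := hsimp.exists_isUnitGeneratorsOf hσΔ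
    exact hS.isClosed hσspan
  have exists_dual (σ : {σ // σ ∈ Δ ∧ Submodule.span ℝ σ ≠ ⊤}) :
      ∃ φ : Module.Dual ℝ E, φ ≠ 0 ∧ Submodule.span ℝ σ.1 ≤ LinearMap.ker φ :=
    Submodule.exists_le_ker_of_lt_top _ (lt_top_iff_ne_top.2 σ.2.2)
  choose φ φ_ne_zero hφ using exists_dual
  have : Finite {σ // σ ∈ Δ ∧ Submodule.span ℝ σ ≠ ⊤} :=
    Finite.Set.subset (Δ : Set (Set E)) fun _ hσ => hσ.1
  obtain ⟨p, hp, hpφ⟩ :=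
    exists_mem_forall_dual_ne_zero φ φ_ne_zero isOpen_compl ⟨y, by simpa using hy⟩
  obtain ⟨σ, hσ, hpσ⟩ : ∃ σ ∈ Δ, p ∈ σ := by simpa using hΔ.2.ge (Set.mem_univ p)
  by_cases hspan : Submodule.span ℝ σ = ⊤
  · exact hp (Set.mem_biUnion (Finset.mem_filter.2 ⟨hσ, hspan⟩) hpσ)
  · exact hpφ ⟨σ, hσ, hspan⟩ (hφ ⟨σ, hσ, hspan⟩ (Submodule.subset_span hpσ))

theorem IsCompleteFan.exists_maximalCones_superset [FiniteDimensional ℝ E] (hΔ : IsCompleteFan Δ)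
    (hsimp : IsSimplicialFan Δ) (hσ : σ ∈ Δ) : ∃ τ ∈ maximalCones Δ, σ ⊆ τ := by
  obtain ⟨S, hS⟩ := hsimp.exists_isUnitGeneratorsOf hσ
  obtain ⟨τ, hτ, mem_τ⟩ := hΔ.exists_mem_maximalCones hsimp (∑ w ∈ S, w)
  refine ⟨τ, hτ, Set.inter_eq_left.1 ?_⟩
  obtain ⟨T, hTS, hT⟩ := hS.exists_subset_of_isConeFace
    (hΔ.1.2.2 σ hσ τ (Finset.mem_filter.1 hτ).1).1
  have T_eq : T = S := eq_of_sum_mem_coneHull hS.linearIndepOn hTS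
    (hT.coneHull_eq.ge ⟨hS.sum_mem, mem_τ⟩)
  rw [← hT.coneHull_eq, T_eq, hS.coneHull_eq]

/-- The maximal cones of `F` belong to the fan `Δ`, and every cone of `Δ` lies in one of them. -/
structure CompleteSimplicialFan.Realizes {d : ℕ} {V R : Type*} [Fintype V] [Fintype R]
    (F : CompleteSimplicialFan d V R) (Δ : Finset (Set (Fin d → ℝ))) : Prop where
  cone_mem : ∀ s, F.cone s ∈ Δ
  exists_subset_cone : ∀ σ ∈ Δ, ∃ s, σ ⊆ F.cone s

theorem IsCompleteFan.exists_realizes {d : ℕ} {Δ : Finset (Set (Fin d → ℝ))}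
    (hΔ : IsCompleteFan Δ) (hsimp : IsSimplicialFan Δ) :
    ∃ (V R : Type) (_ : Fintype V) (_ : Fintype R) (F : CompleteSimplicialFan d V R),
      F.Realizes Δ := by
  have mem_fan (s : maximalCones Δ) : s.1 ∈ Δ := (Finset.mem_filter.1 s.2).1
  choose g hg using fun s : maximalCones Δ => hsimp.exists_isUnitGeneratorsOf (mem_fan s)
  have g_injective : Function.Injective g := fun s s' h =>
    Subtype.ext <| by rw [← (hg s).coneHull_eq, h, (hg s').coneHull_eq]
  have g_span (s) : Submodule.span ℝ (g s : Set (Fin d → ℝ)) = ⊤ :=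
    (hg s).span_eq.trans (Finset.mem_filter.1 s.2).2
  have g_cover (y) : ∃ s, y ∈ coneHull (g s) := by
    obtain ⟨σ, hσ, hy⟩ := hΔ.exists_mem_maximalCones hsimp y
    exact ⟨⟨σ, hσ⟩, (hg ⟨σ, hσ⟩).coneHull_eq.ge hy⟩
  have g_inter (s s') : coneHull (g s) ∩ coneHull (g s') ⊆ coneHull (g s ∩ g s') := by
    rw [(hg s).coneHull_eq, (hg s').coneHull_eq]
    exact hΔ.1.inter_subset_coneHull_inter (mem_fan s) (mem_fan s') (hg s) (hg s')
  refine ⟨maximalCones Δ, _, inferInstance, inferInstance,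
    .ofGenerators g g_injective (fun s => (hg s).linearIndepOn) g_span g_cover g_inter,
    fun s => ?_, fun σ hσ => ?_⟩
  · rw [CompleteSimplicialFan.cone_ofGenerators, (hg s).coneHull_eq]
    exact mem_fan s
  · obtain ⟨τ, hτ, hστ⟩ := hΔ.exists_maximalCones_superset hsimp hσ
    refine ⟨⟨τ, hτ⟩, ?_⟩
    rwa [CompleteSimplicialFan.cone_ofGenerators, (hg ⟨τ, hτ⟩).coneHull_eq]

end MaximalCones

namespace CompleteSimplicialFan

variable {d : ℕ} {V R : Type*} [Fintype V] [Fintype R] (F : CompleteSimplicialFan d V R)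

section Glue

/-- A maximal cone that contains `y`. -/
noncomputable def coneAt (y : Fin d → ℝ) : V := (F.exists_coord_nonneg y).choose

/-- The function on `ℝ^d` with the given polynomials on the maximal cones. On points where the
polynomials of several cones disagree its value depends on the choice made in `coneAt`. -/
noncomputable def glue : (V → MvPolynomial (Fin d) ℝ) →ₐ[ℝ] (Fin d → ℝ) → ℝ :=
  AlgHom.pi fun y => (MvPolynomial.aeval y).comp (Pi.evalAlgHom ℝ _ (F.coneAt y))

variable {F} {k : ℕ} {s s' : V} {p : V → MvPolynomial (Fin d) ℝ} {y : Fin d → ℝ}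

theorem mem_cone_coneAt (y : Fin d → ℝ) : y ∈ F.cone (F.coneAt y) :=
  (F.exists_coord_nonneg y).choose_spec

theorem eq_of_mem_openCone_of_mem_cone (hs : y ∈ F.openCone s) (hs' : y ∈ F.cone s') : s = s' := by
  refine F.rays_injective (Finset.eq_of_subset_of_card_le (fun r hr => ?_) ?_)
  · by_contra hrs'
    have coord_eq := F.coord_eq_of_nonneg (openCone_subset_cone hs) hs' r
    exact (hs r hr).ne' (by rw [coord_eq, F.coord_of_notMem hrs', LinearMap.zero_apply])
  · rw [F.card_rays, F.card_rays]

theorem cone_injective : Function.Injective F.cone := fun s s' h => by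
  obtain ⟨y, hy⟩ := F.openCone_nonempty s
  exact eq_of_mem_openCone_of_mem_cone hy (h ▸ openCone_subset_cone hy)

theorem span_cone (s : V) : Submodule.span ℝ (F.cone s) = ⊤ :=
  Submodule.eq_top_of_nonempty_interior' _ <| (F.openCone_nonempty s).mono <|
    interior_maximal (openCone_subset_cone.trans Submodule.subset_span) (isOpen_openCone s)

theorem glue_apply (p : V → MvPolynomial (Fin d) ℝ) (y : Fin d → ℝ) :
    F.glue p y = MvPolynomial.eval y (p (F.coneAt y)) := by
  simp [glue]

theorem glue_apply_of_mem_cone (hp : p ∈ F.piecewise k) (hy : y ∈ F.cone s) :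
    F.glue p y = MvPolynomial.eval y (p s) := by
  rw [glue_apply, hp.2 (mem_cone_coneAt y) hy]

theorem glue_injective : Function.Injective F.glue := fun p q h => by
  ext1 s
  refine mvPolynomial_eq_of_eqOn_isOpen (isOpen_openCone s) (F.openCone_nonempty s) fun y hy => ?_
  rw [eq_of_mem_openCone_of_mem_cone hy (mem_cone_coneAt y), ← glue_apply, h, glue_apply]

theorem glue_linearForm_smul (φ : Module.Dual ℝ (Fin d → ℝ)) (p : V → MvPolynomial (Fin d) ℝ) :
    F.glue (linearForm φ • p) = fun x => φ x * F.glue p x := by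
  ext x
  simp [glue_apply]

theorem IsConvexConewiseLinear.glue_linearPieces_pow_mul {ℓ : (Fin d → ℝ) → ℝ}
    (hℓ : F.IsConvexConewiseLinear ℓ) (m : ℕ) (p : V → MvPolynomial (Fin d) ℝ) :
    F.glue (F.linearPieces ℓ ^ m * p) = fun x => ℓ x ^ m * F.glue p x := by
  ext x
  simp [glue_apply, linearPieces, ← hℓ.eq_linearPiece (mem_cone_coneAt x)]

end Glue

section Polarization

variable {F} {ℓ : (Fin d → ℝ) → ℝ} {s : V}

theorem linearPiece_eq_of_eqOn_cone {φ : Module.Dual ℝ (Fin d → ℝ)} (h : Set.EqOn ℓ φ (F.cone s)) :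
    F.linearPiece ℓ s = φ := by
  refine LinearMap.ext fun y => ?_
  rw [linearPiece_apply, dual_apply_eq_sum (F := F) φ s y]
  refine Finset.sum_congr rfl fun r _ => ?_
  by_cases hr : r ∈ F.rays s
  · rw [h (generator_mem_cone hr)]
  · rw [F.coord_of_notMem hr, LinearMap.zero_apply, mul_zero, mul_zero]

theorem IsConvexConewiseLinear.exists_genericPolarization (hℓ : F.IsConvexConewiseLinear ℓ)
    (hinj : Function.Injective (F.linearPiece ℓ)) :
    ∃ P : F.GenericPolarization, P.function = ℓ := by
  set φ : ((s : V) × F.rays s) ⊕ {q : V × V // q.1 ≠ q.2} → Module.Dual ℝ (Fin d → ℝ) :=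
    Sum.elim (fun i => F.coord i.1 i.2) fun q => F.linearPiece ℓ q.1.1 - F.linearPiece ℓ q.1.2
  have φ_ne_zero : ∀ i, φ i ≠ 0 := by
    rintro (i | q)
    · exact coord_ne_zero i.2.2
    · exact sub_ne_zero.2 (hinj.ne q.2)
  obtain ⟨v, -, hv⟩ := exists_mem_forall_dual_ne_zero φ φ_ne_zero isOpen_univ Set.univ_nonempty
  have linearPiece_injective : Function.Injective fun s => F.linearPiece ℓ s v := fun s s' h =>
    by_contra fun hne => hv (Sum.inr ⟨(s, s'), hne⟩) (sub_eq_zero.2 h)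
  exact ⟨⟨ℓ, hℓ, hinj, v, fun s r hr => hv (Sum.inl ⟨s, r, hr⟩), linearPiece_injective⟩, rfl⟩

end Polarization

namespace Realizes

variable {F} {Δ : Finset (Set (Fin d → ℝ))} {ℓ : (Fin d → ℝ) → ℝ}

theorem map_glue_piecewise (hF : F.Realizes Δ) (k : ℕ) :
    (F.piecewise k).map F.glue.toLinearMap = conewisePoly d Δ k := by
  refine le_antisymm (Submodule.map_le_iff_le_comap.2 fun p hp σ hσ => ?_) fun f hf => ?_
  · obtain ⟨s, hs⟩ := hF.exists_subset_cone σ hσ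
    exact ⟨p s, hp.1 s, fun x hx => glue_apply_of_mem_cone hp (hs hx)⟩
  · choose p p_homogeneous hp using fun s => hf (F.cone s) (hF.cone_mem s)
    refine ⟨p, ⟨p_homogeneous, fun hs hs' => by rw [← hp _ _ hs, ← hp _ _ hs']⟩, ?_⟩
    ext x
    exact (glue_apply p x).trans (hp _ x (mem_cone_coneAt x)).symm

theorem map_glue_mPiecewise (hF : F.Realizes Δ) (k : ℕ) :
    (F.mPiecewise k).map F.glue.toLinearMap = mConewisePoly d Δ k := by
  cases k with
  | zero => exact Submodule.map_bot _
  | succ k =>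
    rw [mPiecewise, mConewisePoly, Submodule.map_span]
    congr 1
    ext f
    constructor
    · rintro ⟨_, ⟨φ, p, hp, rfl⟩, rfl⟩
      exact ⟨φ, F.glue p, hF.map_glue_piecewise k ▸ Submodule.mem_map_of_mem hp,
        glue_linearForm_smul φ p⟩
    · rintro ⟨φ, f, hf, rfl⟩
      obtain ⟨p, hp, rfl⟩ := (hF.map_glue_piecewise k).ge hf
      exact ⟨_, ⟨φ, p, hp, rfl⟩, glue_linearForm_smul φ p⟩

theorem isConvexConewiseLinear (hF : F.Realizes Δ) (hconv : ConvexOn ℝ Set.univ ℓ)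
    (hℓ : ℓ ∈ conewisePoly d Δ 1) : F.IsConvexConewiseLinear ℓ := by
  refine ⟨hconv, fun {s y} hy => ?_⟩
  obtain ⟨p, hp, hpℓ⟩ := hℓ (F.cone s) (hF.cone_mem s)
  obtain ⟨φ, rfl⟩ := exists_eq_linearForm hp
  have ℓ_eq : Set.EqOn ℓ φ (F.cone s) := fun x hx => (hpℓ x hx).trans (eval_linearForm φ x)
  rw [linearPiece_eq_of_eqOn_cone ℓ_eq, ℓ_eq hy]

theorem linearPiece_injective (hF : F.Realizes Δ) (hℓ : F.IsConvexConewiseLinear ℓ)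
    (hstrict : ∀ σ ∈ Δ, ∀ τ ∈ Δ, Submodule.span ℝ σ = ⊤ → Submodule.span ℝ τ = ⊤ →
      σ ≠ τ → ¬ ∃ φ : (Fin d → ℝ) →ₗ[ℝ] ℝ, (∀ x ∈ σ, ℓ x = φ x) ∧ (∀ x ∈ τ, ℓ x = φ x)) :
    Function.Injective (F.linearPiece ℓ) := fun s s' h => by
  by_contra hne
  exact hstrict _ (hF.cone_mem s) _ (hF.cone_mem s') (span_cone s) (span_cone s')
    (cone_injective.ne hne) ⟨F.linearPiece ℓ s, fun x hx => hℓ.eq_linearPiece hx,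
      fun x hx => h ▸ hℓ.eq_linearPiece hx⟩

end Realizes

end CompleteSimplicialFan

/-- McMullen's hard Lefschetz theorem for complete simplicial fans: a strictly
convex conewise linear function `ℓ` is a Lefschetz element, i.e. for
`0 ≤ k < d/2`, multiplication by `ℓ^{d-2k}` induces an isomorphism
`Ā(Δ)_k → Ā(Δ)_{d-k}` (stated here as: the induced map is surjective and
injective modulo `m·A(Δ)`). -/
theorem mcmullen_hard_lefschetz (d : ℕ) (hd : 1 ≤ d)
    (Δ : Finset (Set (Fin d → ℝ))) (hΔ : IsCompleteFan Δ) (hsimp : IsSimplicialFan Δ)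
    (ℓ : (Fin d → ℝ) → ℝ) (hℓ : ℓ ∈ conewisePoly d Δ 1)
    (hconv : ConvexOn ℝ Set.univ ℓ)
    (hstrict : ∀ σ ∈ Δ, ∀ τ ∈ Δ, Submodule.span ℝ σ = ⊤ → Submodule.span ℝ τ = ⊤ →
      σ ≠ τ → ¬ ∃ l : (Fin d → ℝ) →ₗ[ℝ] ℝ,
        (∀ x ∈ σ, ℓ x = l x) ∧ (∀ x ∈ τ, ℓ x = l x))
    (k : ℕ) (hk : 2 * k < d) :
    (∀ g ∈ conewisePoly d Δ (d - k), ∃ f ∈ conewisePoly d Δ k,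
        (g - fun x => ℓ x ^ (d - 2 * k) * f x) ∈ mConewisePoly d Δ (d - k)) ∧
    (∀ f ∈ conewisePoly d Δ k,
        (fun x => ℓ x ^ (d - 2 * k) * f x) ∈ mConewisePoly d Δ (d - k) →
        f ∈ mConewisePoly d Δ k) := by
  have : NeZero d := ⟨by omega⟩
  obtain ⟨V, R, _, _, F, hF⟩ := hΔ.exists_realizes hsimp
  have hℓF := hF.isConvexConewiseLinear hconv hℓ
  obtain ⟨P, rfl⟩ := hℓF.exists_genericPolarization (hF.linearPiece_injective hℓF hstrict)
  simp only [← hF.map_glue_piecewise, ← hF.map_glue_mPiecewise]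
  constructor
  · rintro _ ⟨p, hp, rfl⟩
    obtain ⟨q, hq, hpq⟩ := P.exists_sub_linearPieces_pow_mul_mem hk hp
    refine ⟨F.glue q, Submodule.mem_map_of_mem hq, ?_⟩
    rw [← hℓF.glue_linearPieces_pow_mul]
    exact ⟨_, hpq, map_sub F.glue _ _⟩
  · rintro _ ⟨p, hp, rfl⟩ ⟨q, hq, hqp⟩
    obtain rfl := CompleteSimplicialFan.glue_injective
      (hqp.trans (hℓF.glue_linearPieces_pow_mul _ p).symm)
    exact Submodule.mem_map_of_mem (P.mem_mPiecewise_of_linearPieces_pow_mul_mem hk hp hq)
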